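/- Let φ : V(ℤ) → ℝ be a large and locally well approximated function. Then each Dirichlet series D^{±}(φ,s) = Σ_{a≥1} ν_{±a}(φ)/a^s converges absolutely for Re(s) > 1 and extends to a meromorphic function on the half-plane {s ∈ ℂ : Re(s) > 1/3} which is holomorphic there except for at most a simple pole at s = 1. In particular, the values D^{±}(φ, 1/2) are well defined. -/

import Mathlib

noncomputable section

namespace BQPaper

/-- A binary quartic form `a x⁴ + b x³y + c x²y² + d xy³ + e y⁴` over `R`,
recorded by its coefficients. -/
structure BQ (R : Type*) where
  a : R
  b : R
  c : R
  d : R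
  e : R

/-- A 2×2 matrix `!![p, q; r, s]`, recorded by its entries. -/
structure Mat2 (R : Type*) where
  p : R
  q : R
  r : R
  s : R

variable {R S : Type*} [CommRing R] [CommRing S]

def Mat2.det (m : Mat2 R) : R := m.p * m.s - m.q * m.r

/-- Matrix product. -/
def Mat2.mul (m n : Mat2 R) : Mat2 R :=
  ⟨m.p * n.p + m.q * n.r, m.p * n.q + m.q * n.s,
   m.r * n.p + m.s * n.r, m.r * n.q + m.s * n.s⟩

/-- Scalar multiple of a matrix. -/
def Mat2.smul (z : R) (m : Mat2 R) : Mat2 R := ⟨z * m.p, z * m.q, z * m.r, z * m.s⟩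

def Mat2.map (φ : R →+* S) (m : Mat2 R) : Mat2 S := ⟨φ m.p, φ m.q, φ m.r, φ m.s⟩

/-- Evaluation of a binary quartic form at `(x, y)`. -/
def BQ.eval (f : BQ R) (x y : R) : R :=
  f.a * x ^ 4 + f.b * x ^ 3 * y + f.c * x ^ 2 * y ^ 2 + f.d * x * y ^ 3 + f.e * y ^ 4

/-- The invariant `I(f) = 12ae − 3bd + c²`. -/
def BQ.invI (f : BQ R) : R := 12 * f.a * f.e - 3 * f.b * f.d + f.c ^ 2

/-- The invariant `J(f) = 72ace + 9bcd − 27ad² − 27eb² − 2c³`. -/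
def BQ.invJ (f : BQ R) : R :=
  72 * f.a * f.c * f.e + 9 * f.b * f.c * f.d - 27 * f.a * f.d ^ 2
    - 27 * f.e * f.b ^ 2 - 2 * f.c ^ 3

/-- The discriminant of a binary quartic form; one has `Δ = (4I³ − J²)/27`. -/
def BQ.disc (f : BQ R) : R :=
  256 * f.a ^ 3 * f.e ^ 3 - 192 * f.a ^ 2 * f.b * f.d * f.e ^ 2
    - 128 * f.a ^ 2 * f.c ^ 2 * f.e ^ 2 + 144 * f.a ^ 2 * f.c * f.d ^ 2 * f.e
    - 27 * f.a ^ 2 * f.d ^ 4 + 144 * f.a * f.b ^ 2 * f.c * f.e ^ 2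
    - 6 * f.a * f.b ^ 2 * f.d ^ 2 * f.e - 80 * f.a * f.b * f.c ^ 2 * f.d * f.e
    + 18 * f.a * f.b * f.c * f.d ^ 3 + 16 * f.a * f.c ^ 4 * f.e
    - 4 * f.a * f.c ^ 3 * f.d ^ 2 - 27 * f.b ^ 4 * f.e ^ 2
    + 18 * f.b ^ 3 * f.c * f.d * f.e - 4 * f.b ^ 3 * f.d ^ 3
    - 4 * f.b ^ 2 * f.c ^ 3 * f.e + f.b ^ 2 * f.c ^ 2 * f.d ^ 2

/-- Multiplication of all coefficients of a form by a scalar. -/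
def BQ.rsmul (t : R) (f : BQ R) : BQ R := ⟨t * f.a, t * f.b, t * f.c, t * f.d, t * f.e⟩

/-- Substitution action of a 2×2 matrix on binary quartic forms:
`(m • f)(x,y) = f((x,y)·m) = f(px + ry, qx + sy)` for `m = !![p, q; r, s]`. -/
def BQ.subst (m : Mat2 R) (f : BQ R) : BQ R where
  a := f.a * m.p ^ 4 + f.b * m.p ^ 3 * m.q + f.c * m.p ^ 2 * m.q ^ 2
      + f.d * m.p * m.q ^ 3 + f.e * m.q ^ 4
  b := 4 * f.a * m.p ^ 3 * m.r + f.b * m.p ^ 3 * m.s + 3 * f.b * m.p ^ 2 * m.q * m.r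
      + 2 * f.c * m.p ^ 2 * m.q * m.s + 2 * f.c * m.p * m.q ^ 2 * m.r
      + 3 * f.d * m.p * m.q ^ 2 * m.s + f.d * m.q ^ 3 * m.r + 4 * f.e * m.q ^ 3 * m.s
  c := 6 * f.a * m.p ^ 2 * m.r ^ 2 + 3 * f.b * m.p ^ 2 * m.r * m.s
      + 3 * f.b * m.p * m.q * m.r ^ 2 + f.c * m.p ^ 2 * m.s ^ 2
      + 4 * f.c * m.p * m.q * m.r * m.s + f.c * m.q ^ 2 * m.r ^ 2
      + 3 * f.d * m.p * m.q * m.s ^ 2 + 3 * f.d * m.q ^ 2 * m.r * m.s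
      + 6 * f.e * m.q ^ 2 * m.s ^ 2
  d := 4 * f.a * m.p * m.r ^ 3 + 3 * f.b * m.p * m.r ^ 2 * m.s + f.b * m.q * m.r ^ 3
      + 2 * f.c * m.p * m.r * m.s ^ 2 + 2 * f.c * m.q * m.r ^ 2 * m.s
      + f.d * m.p * m.s ^ 3 + 3 * f.d * m.q * m.r * m.s ^ 2 + 4 * f.e * m.q * m.s ^ 3
  e := f.a * m.r ^ 4 + f.b * m.r ^ 3 * m.s + f.c * m.r ^ 2 * m.s ^ 2
      + f.d * m.r * m.s ^ 3 + f.e * m.s ^ 4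

/-- The twisted action `(γ·f)(x,y) = f((x,y)·γ)/det(γ)²`, which descends to `PGL₂`.
(`Ring.inverse` is the genuine inverse when `det` is a unit.) -/
def BQ.twist (m : Mat2 R) (f : BQ R) : BQ R :=
  BQ.rsmul (Ring.inverse m.det ^ 2) (f.subst m)

/-- Coefficientwise map of forms along a ring homomorphism. -/
def BQ.map (φ : R →+* S) (f : BQ R) : BQ S := ⟨φ f.a, φ f.b, φ f.c, φ f.d, φ f.e⟩

end BQPaper

namespace BQPaper

open MeasureTheory

instance (p : Nat.Primes) : Fact (p : ℕ).Prime := ⟨p.2⟩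

noncomputable instance (p : ℕ) [Fact p.Prime] : MeasurableSpace ℤ_[p] := borel _
instance (p : ℕ) [Fact p.Prime] : BorelSpace ℤ_[p] := ⟨rfl⟩

/-- Coefficientwise congruence `f ≡ g (mod p^j V(ℤ_p))`. -/
def CongMod (p : ℕ) [Fact p.Prime] (j : ℕ) (f g : BQ ℤ_[p]) : Prop :=
  (p : ℤ_[p]) ^ j ∣ (f.a - g.a) ∧ (p : ℤ_[p]) ^ j ∣ (f.b - g.b) ∧
  (p : ℤ_[p]) ^ j ∣ (f.c - g.c) ∧ (p : ℤ_[p]) ^ j ∣ (f.d - g.d) ∧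
  (p : ℤ_[p]) ^ j ∣ (f.e - g.e)

/-- `ψ k` is an approximating series for `φ_p`: `ψ 0 ≡ 1`, each `|ψ k| ≤ 1`, each `ψ k`
is periodic modulo `p^{2k}`, and `Σ_k ψ k f = φ_p f` with absolute convergence whenever
`Δ(f) ≠ 0`. -/
def ApproxSeries (p : ℕ) [Fact p.Prime] (φp : BQ ℤ_[p] → ℝ) (ψ : ℕ → BQ ℤ_[p] → ℝ) :
    Prop :=
  (∀ f, ψ 0 f = 1) ∧
  (∀ k f, |ψ k f| ≤ 1) ∧
  (∀ f : BQ ℤ_[p], f.disc ≠ 0 →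
    Summable (fun k => |ψ k f|) ∧ HasSum (fun k => ψ k f) (φp f)) ∧
  (∀ (k : ℕ) (f g : BQ ℤ_[p]), CongMod p (2 * k) f g → ψ k f = ψ k g)

/-- The support condition: `ψ k` is supported on forms with `p^{2k−c} ∣ Δ(f)`.
With `c = 0` this is the support condition of "well approximated"; with some `c = O(1)`
it is that of "almost well approximated". -/
def SupportBound (p : ℕ) [Fact p.Prime] (ψ : ℕ → BQ ℤ_[p] → ℝ) (c : ℕ) : Prop :=
  ∀ (k : ℕ) (f : BQ ℤ_[p]), ψ k f ≠ 0 → (p : ℤ_[p]) ^ (2 * k) ∣ (p : ℤ_[p]) ^ c * f.disc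

/-- Strong invariance of the approximating functions: invariance under the twisted
action of `PGL₂(ℤ_p)` and under multiplication by squares of units. -/
def StronglyInvariantFamily (p : ℕ) [Fact p.Prime] (ψ : ℕ → BQ ℤ_[p] → ℝ) : Prop :=
  ∀ k : ℕ,
    (∀ m : Mat2 ℤ_[p], IsUnit m.det → ∀ f, ψ k (f.twist m) = ψ k f) ∧
    (∀ t : ℤ_[p], IsUnit t → ∀ f, ψ k (f.rsmul (t ^ 2)) = ψ k f)

/-- `ν_a(φ) = ∏_p ∫_{V_a(ℤ_p)} φ_p`, the product over all primes of the average of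
`φ_p` over forms with leading coefficient `a` (with respect to the given Haar
probability measures on `V_a(ℤ_p) ≅ ℤ_p⁴`). -/
def nuA (φp : (p : Nat.Primes) → BQ ℤ_[(p : ℕ)] → ℝ)
    (μ : (p : Nat.Primes) → Measure (Fin 4 → ℤ_[(p : ℕ)])) (a : ℤ) : ℝ :=
  ∏' p : Nat.Primes,
    ∫ v, φp p ⟨(a : ℤ_[(p : ℕ)]), v 0, v 1, v 2, v 3⟩ ∂(μ p)

/-- The Dirichlet series `D^{±}(φ,s) = Σ_{a ≥ 1} ν_{±a}(φ)/a^s` (the sign chosen by the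
boolean). -/
def Dseries (φp : (p : Nat.Primes) → BQ ℤ_[(p : ℕ)] → ℝ)
    (μ : (p : Nat.Primes) → Measure (Fin 4 → ℤ_[(p : ℕ)])) (sgn : Bool) (s : ℂ) : ℂ :=
  ∑' n : ℕ,
    (nuA φp μ (if sgn then ((n : ℤ) + 1) else -((n : ℤ) + 1)) : ℂ) / ((n : ℂ) + 1) ^ s


lemma cpow_diff_bound (s : ℂ) (hs : 0 < s.re) (N : ℕ) :
    ‖((N : ℂ) + 1) ^ (-s) - ((N : ℂ) + 2) ^ (-s)‖ ≤ ‖s‖ * ((N : ℝ) + 1) ^ (-s.re - 1) := by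
  have hN : (0 : ℝ) < (N : ℝ) + 1 := by positivity
  have key := (convex_Icc ((N : ℝ) + 1) ((N : ℝ) + 2)).norm_image_sub_le_of_norm_hasDerivWithin_le
    (f := fun x : ℝ => (x : ℂ) ^ (-s)) (f' := fun x : ℝ => (-s) * (x : ℂ) ^ (-s - 1))
    (C := ‖s‖ * ((N : ℝ) + 1) ^ (-s.re - 1)) (x := (N : ℝ) + 2) (y := (N : ℝ) + 1) ?_ ?_ ?_ ?_
  · have e : ‖((N : ℝ) + 1) - ((N : ℝ) + 2)‖ = 1 := by
      rw [show ((N : ℝ) + 1) - ((N : ℝ) + 2) = -1 by ring]; simp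
    rw [e, mul_one] at key
    simpa using key
  · intro x hx
    have hx0 : 0 < x := lt_of_lt_of_le hN hx.1
    by_cases h0 : s = 0
    · simp [h0] at hs
    · exact (hasDerivAt_ofReal_cpow_const hx0.ne' (r := -s) (by simpa using h0)).hasDerivWithinAt
  · intro x hx
    have hx0 : 0 < x := lt_of_lt_of_le hN hx.1
    rw [norm_mul, norm_neg, Complex.norm_cpow_eq_rpow_re_of_pos hx0]
    gcongr
    have : (-s - 1).re = -s.re - 1 := by simp
    rw [this]
    exact Real.rpow_le_rpow_of_nonpos hN hx.1 (by linarith)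
  · constructor <;> linarith
  · constructor <;> linarith

/-- partial sums -/
def pS (g : ℕ → ℝ) (m : ℝ) (N : ℕ) : ℝ := ∑ n ∈ Finset.range N, (g n - m)

def pM (g : ℕ → ℝ) (Q : ℕ) : ℝ := (∑ n ∈ Finset.range Q, g n) / Q

def pH (g : ℕ → ℝ) (Q : ℕ) (s : ℂ) : ℂ :=
  ∑' N : ℕ, (pS g (pM g Q) (N + 1) : ℂ) * (((N : ℂ) + 1) ^ (-s) - ((N : ℂ) + 2) ^ (-s))

section per
variable (g : ℕ → ℝ) (Q : ℕ) (B : ℝ) (hQ : 1 ≤ Q) (hg : ∀ u, g (u + Q) = g u)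
  (hB : ∀ u, |g u| ≤ B)
include hQ hB

lemma pM_le : |pM g Q| ≤ B := by
  unfold pM
  have hQ' : (0 : ℝ) < Q := by exact_mod_cast hQ
  rw [abs_div, abs_of_pos hQ', div_le_iff₀ hQ']
  refine (Finset.abs_sum_le_sum_abs _ _).trans ?_
  refine (Finset.sum_le_sum fun i _ => hB i).trans ?_
  simp [mul_comm]

lemma pS_le1 (N : ℕ) : |pS g (pM g Q) N| ≤ 2 * B * N := by
  unfold pS
  refine (Finset.abs_sum_le_sum_abs _ _).trans ?_
  refine (Finset.sum_le_sum (g := fun _ => 2 * B) fun i _ => ?_).trans ?_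
  · have := pM_le g Q B hQ hB
    have h2 := hB i
    rw [abs_le] at *
    constructor <;> linarith
  · simp [mul_comm]

include hg

omit hB in
lemma pS_per (N : ℕ) : pS g (pM g Q) (N + Q) = pS g (pM g Q) N := by
  have hQ' : (0 : ℝ) < Q := by exact_mod_cast hQ
  induction N with
  | zero =>
    simp only [pS, zero_add, Finset.sum_sub_distrib]
    simp [pM]
    field_simp
    simp
  | succ n ih =>
    rw [show n + 1 + Q = (n + Q) + 1 by ring]
    unfold pS at *
    rw [Finset.sum_range_succ, ih, Finset.sum_range_succ, hg]

lemma pS_le2 (N : ℕ) : |pS g (pM g Q) N| ≤ 2 * B * Q := by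
  have hB0 : 0 ≤ B := (abs_nonneg _).trans (hB 0)
  induction N using Nat.strong_induction_on with
  | _ N ih =>
    by_cases h : N < Q
    · refine (pS_le1 g Q B hQ hB N).trans ?_
      have : (N : ℝ) ≤ Q := by exact_mod_cast h.le
      gcongr
    · have := ih (N - Q) (by omega)
      rw [← pS_per g Q hQ hg (N - Q)] at this
      rwa [Nat.sub_add_cancel (by omega)] at this

lemma pS_le3 (σ : ℝ) (h0 : 0 < σ) (h1 : σ < 1) (N : ℕ) :
    |pS g (pM g Q) (N + 1)| ≤ 2 * B * (Q : ℝ) ^ (1 - σ) * ((N : ℝ) + 1) ^ σ := by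
  have hB0 : 0 ≤ B := (abs_nonneg _).trans (hB 0)
  have hQ' : (0 : ℝ) < Q := by exact_mod_cast hQ
  have hN : (0 : ℝ) < (N : ℝ) + 1 := by positivity
  have key : |pS g (pM g Q) (N + 1)| ≤ 2 * B * min ((Q : ℝ)) ((N : ℝ) + 1) := by
    rcases min_cases ((Q : ℝ)) ((N : ℝ) + 1) with h | h
    · rw [h.1]; exact pS_le2 g Q B hQ hg hB _
    · rw [h.1]; have := pS_le1 g Q B hQ hB (N + 1); push_cast at this; exact this
  refine key.trans ?_
  rw [mul_assoc (2 * B)]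
  refine mul_le_mul_of_nonneg_left ?_ (by positivity)
  set M := min ((Q : ℝ)) ((N : ℝ) + 1)
  have hM : 0 < M := lt_min hQ' hN
  calc M = M ^ (1 - σ) * M ^ σ := by rw [← Real.rpow_add hM]; simp
    _ ≤ _ := by
      have q1 : M ≤ (Q : ℝ) := min_le_left _ _
      have q2 : M ≤ (N : ℝ) + 1 := min_le_right _ _
      have q3 : 0 ≤ 1 - σ := by linarith
      exact mul_le_mul (Real.rpow_le_rpow hM.le q1 q3) (Real.rpow_le_rpow hM.le q2 h0.le)
        (by positivity) (by positivity)

lemma pH_term_le (σ σ0 : ℝ) (h0 : 0 < σ) (h1 : σ < 1) (hσ : σ < σ0) (s : ℂ) (hs : σ0 ≤ s.re)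
    (N : ℕ) :
    ‖(pS g (pM g Q) (N + 1) : ℂ) * (((N : ℂ) + 1) ^ (-s) - ((N : ℂ) + 2) ^ (-s))‖ ≤
      ‖s‖ * (2 * B * (Q : ℝ) ^ (1 - σ)) * (1 / ((N : ℝ) + 1) ^ (1 + σ0 - σ)) := by
  have hB0 : 0 ≤ B := (abs_nonneg _).trans (hB 0)
  have hN : (0 : ℝ) < (N : ℝ) + 1 := by positivity
  rw [norm_mul, Complex.norm_real, Real.norm_eq_abs]
  refine (mul_le_mul (pS_le3 g Q B hQ hg hB σ h0 h1 N) (cpow_diff_bound s (by linarith) N)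
    (norm_nonneg _) (by positivity)).trans ?_
  rw [one_div, ← Real.rpow_neg hN.le]
  have : ((N : ℝ) + 1) ^ σ * ((N : ℝ) + 1) ^ (-s.re - 1) ≤ ((N : ℝ) + 1) ^ (-(1 + σ0 - σ)) := by
    rw [← Real.rpow_add hN]
    apply Real.rpow_le_rpow_of_exponent_le
    · linarith [(Nat.cast_nonneg N : (0 : ℝ) ≤ N)]
    · linarith
  calc _ = ‖s‖ * (2 * B * (Q : ℝ) ^ (1 - σ)) * (((N : ℝ) + 1) ^ σ * ((N : ℝ) + 1) ^ (-s.re - 1)) := by ring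
    _ ≤ _ := by gcongr

omit hQ hB hg in
lemma summ_aux (σ σ0 : ℝ) (hσ : σ < σ0) :
    Summable (fun N : ℕ => (1 / ((N : ℝ) + 1) ^ (1 + σ0 - σ))) := by
  have := (summable_nat_add_iff 1).2
    (Real.summable_one_div_nat_rpow (p := 1 + σ0 - σ) |>.2 (by linarith))
  simpa using this

lemma pH_le (σ σ0 : ℝ) (h0 : 0 < σ) (h1 : σ < 1) (hσ : σ < σ0) (s : ℂ) (hs : σ0 ≤ s.re) :
    ‖pH g Q s‖ ≤ ‖s‖ * (2 * B * (Q : ℝ) ^ (1 - σ)) * ∑' N : ℕ, (1 / ((N : ℝ) + 1) ^ (1 + σ0 - σ)) := by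
  unfold pH
  rw [← tsum_mul_left]
  exact tsum_of_norm_bounded ((summ_aux σ σ0 hσ).mul_left _).hasSum
    (pH_term_le g Q B hQ hg hB σ σ0 h0 h1 hσ s hs)

lemma pH_diff (s : ℂ) (hs : 0 < s.re) : DifferentiableAt ℂ (pH g Q) s := by
  have hB0 : 0 ≤ B := (abs_nonneg _).trans (hB 0)
  obtain ⟨σ0, hσ0, hσ0'⟩ := exists_between (lt_min hs (zero_lt_one (α := ℝ)))
  have ha := hσ0'.trans_le (min_le_left _ _)
  have hb := hσ0'.trans_le (min_le_right _ _)
  let U : Set ℂ := {z | σ0 < z.re} ∩ Metric.ball 0 (‖s‖ + 1)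
  have hU : IsOpen U := (isOpen_lt continuous_const Complex.continuous_re).inter Metric.isOpen_ball
  have hsU : s ∈ U := ⟨ha, by simp⟩
  have := Complex.differentiableOn_tsum_of_summable_norm
    (u := fun N : ℕ => (‖s‖ + 1) * (2 * B * (Q : ℝ) ^ (1 - σ0 / 2)) * (1 / ((N : ℝ) + 1) ^ (1 + σ0 - σ0 / 2)))
    (F := fun (N : ℕ) (s : ℂ) => (pS g (pM g Q) (N + 1) : ℂ) * (((N : ℂ) + 1) ^ (-s) - ((N : ℂ) + 2) ^ (-s)))
    ((summ_aux _ _ (by linarith)).mul_left _) (fun N => ?_) hU (fun N w hw => ?_)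
  · exact (this.differentiableAt (hU.mem_nhds hsU))
  · have e1 : ((N : ℂ) + 1) ≠ 0 := by exact_mod_cast Nat.succ_ne_zero N
    have e2 : ((N : ℂ) + 2) ≠ 0 := by exact_mod_cast Nat.succ_ne_zero (N + 1)
    apply Differentiable.differentiableOn
    apply Differentiable.const_mul
    apply Differentiable.sub
    · exact fun z => (differentiableAt_id.neg).const_cpow (Or.inl e1)
    · exact fun z => (differentiableAt_id.neg).const_cpow (Or.inl e2)
  · refine (pH_term_le g Q B hQ hg hB (σ0 / 2) σ0 (by linarith) (by linarith) (by linarith) w hw.1.le N).trans ?_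
    have : ‖w‖ ≤ ‖s‖ + 1 := by have := hw.2; simp at this; exact this.le
    gcongr

lemma p_eq (s : ℂ) (hs : 1 < s.re) :
    HasSum (fun n : ℕ => (g n : ℂ) * ((n : ℂ) + 1) ^ (-s)) (pM g Q * riemannZeta s + pH g Q s) := by
  have hB0 : 0 ≤ B := (abs_nonneg _).trans (hB 0)
  have hnorm : ∀ n : ℕ, ‖((n : ℂ) + 1) ^ (-s)‖ = 1 / ((n : ℝ) + 1) ^ (1 + s.re - 1) := by
    intro n
    have : (0 : ℝ) < (n : ℝ) + 1 := by positivity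
    have h := Complex.norm_cpow_eq_rpow_re_of_pos this (-s)
    push_cast at h
    rw [h, one_div, ← Real.rpow_neg this.le]; congr 1; simp
  have hsz : Summable (fun n : ℕ => ((n : ℂ) + 1) ^ (-s)) :=
    Summable.of_norm (by simp_rw [hnorm]; exact summ_aux 1 s.re hs)
  have hz : HasSum (fun n : ℕ => (pM g Q : ℂ) * ((n : ℂ) + 1) ^ (-s)) (pM g Q * riemannZeta s) := by
    rw [zeta_eq_tsum_one_div_nat_add_one_cpow hs]
    have := (hsz.mul_left (pM g Q : ℂ)).hasSum
    rw [tsum_mul_left] at this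
    have e : (∑' n : ℕ, 1 / ((n : ℂ) + 1) ^ s) = ∑' n : ℕ, ((n : ℂ) + 1) ^ (-s) := by
      congr 1; ext n; rw [Complex.cpow_neg, one_div]
    rw [e]; exact this
  have hsd : Summable (fun n : ℕ => ((g n - pM g Q : ℝ) : ℂ) * ((n : ℂ) + 1) ^ (-s)) := by
    apply Summable.of_norm_bounded ((summ_aux 1 s.re hs).mul_left (2 * B))
    intro n
    rw [norm_mul, hnorm, Complex.norm_real, Real.norm_eq_abs]
    gcongr
    have := pM_le g Q B hQ hB
    have h2 := hB n
    rw [abs_le] at *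
    constructor <;> linarith
  have hH : Summable (fun N : ℕ => (pS g (pM g Q) (N + 1) : ℂ) * (((N : ℂ) + 1) ^ (-s) - ((N : ℂ) + 2) ^ (-s))) :=
    Summable.of_norm_bounded ((summ_aux (1/2) 1 (by norm_num)).mul_left _)
      (pH_term_le g Q B hQ hg hB (1/2) 1 (by norm_num) (by norm_num) (by norm_num) s hs.le)
  have hab : ∀ M : ℕ, ∑ n ∈ Finset.range M, ((g n - pM g Q : ℝ) : ℂ) * ((n : ℂ) + 1) ^ (-s)
      = (pS g (pM g Q) M : ℂ) * ((M : ℂ) + 1) ^ (-s) + ∑ N ∈ Finset.range M,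
        (pS g (pM g Q) (N + 1) : ℂ) * (((N : ℂ) + 1) ^ (-s) - ((N : ℂ) + 2) ^ (-s)) := by
    intro M
    induction M with
    | zero => simp [pS]
    | succ M ih =>
      rw [Finset.sum_range_succ, ih, Finset.sum_range_succ]
      have : pS g (pM g Q) (M + 1) = pS g (pM g Q) M + (g M - pM g Q) := by
        simp only [pS, Finset.sum_range_succ]
      rw [this]
      push_cast
      rw [show (M : ℂ) + 1 + 1 = M + 2 by ring]
      ring
  have hlim0 : Filter.Tendsto (fun M : ℕ => (pS g (pM g Q) M : ℂ) * ((M : ℂ) + 1) ^ (-s))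
      Filter.atTop (nhds 0) := by
    have h1 := ((summ_aux 1 s.re hs).mul_left (2 * B * Q)).tendsto_atTop_zero
    apply squeeze_zero_norm _ h1
    intro M
    rw [norm_mul, hnorm, Complex.norm_real, Real.norm_eq_abs]
    gcongr
    exact pS_le2 g Q B hQ hg hB M
  have hd : HasSum (fun n : ℕ => ((g n - pM g Q : ℝ) : ℂ) * ((n : ℂ) + 1) ^ (-s)) (pH g Q s) := by
    have t1 := hsd.hasSum.tendsto_sum_nat
    have t2 := hlim0.add hH.hasSum.tendsto_sum_nat
    rw [zero_add] at t2
    have : (∑' n : ℕ, ((g n - pM g Q : ℝ) : ℂ) * ((n : ℂ) + 1) ^ (-s)) = pH g Q s := by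
      refine tendsto_nhds_unique t1 ?_
      simp_rw [hab]
      exact t2
    rw [← this]; exact hsd.hasSum
  convert hz.add hd using 2 with n
  push_cast; ring

end per


lemma norm_cpow_nat_le (n : ℕ) (hn : 1 ≤ n) (s : ℂ) (σ : ℝ) (h : σ ≤ s.re) :
    ‖(n : ℂ) ^ (-s)‖ ≤ (n : ℝ) ^ (-σ) := by
  have : (0 : ℝ) < n := by exact_mod_cast hn
  have h' := Complex.norm_cpow_eq_rpow_re_of_pos this (-s)
  push_cast at h'
  rw [h']
  apply Real.rpow_le_rpow_of_exponent_le
  · exact_mod_cast hn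
  · simpa using h

lemma zeta_reg : ∃ Z : ℂ → ℂ, Differentiable ℂ Z ∧ ∀ s, s ≠ 1 → riemannZeta s = Z s + 1 / (s - 1) := by
  refine ⟨Function.update (fun s => riemannZeta s - 1 / (s - 1)) 1 Real.eulerMascheroniConstant, ?_, ?_⟩
  · have hd : DifferentiableOn ℂ (fun s => riemannZeta s - 1 / (s - 1)) (Set.univ \ {(1 : ℂ)}) := by
      intro z hz
      have hz1 : z ≠ 1 := by simpa using hz
      refine ((differentiableAt_riemannZeta hz1).sub ?_).differentiableWithinAt
      exact (differentiableAt_const _).div (by fun_prop) (sub_ne_zero.2 hz1)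
    have h := Complex.differentiableOn_update_limUnder_of_isLittleO (f := fun s => riemannZeta s - 1 / (s - 1))
      (s := Set.univ) (c := 1) Filter.univ_mem hd ?_
    · rw [tendsto_riemannZeta_sub_one_div.limUnder_eq] at h
      exact fun z => (h z (Set.mem_univ _)).differentiableAt Filter.univ_mem
    · have t := tendsto_riemannZeta_sub_one_div
      have t2 : Filter.Tendsto (fun z : ℂ => (riemannZeta z - 1 / (z - 1)) - (riemannZeta 1 - 1 / (1 - 1)))
        (nhdsWithin 1 {1}ᶜ) (nhds (Real.eulerMascheroniConstant - (riemannZeta 1 - 1 / (1 - 1)))) :=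
        t.sub tendsto_const_nhds
      refine (t2.isBigO_one ℝ).trans_isLittleO ?_
      rw [Asymptotics.isLittleO_one_left_iff]
      have : Filter.Tendsto (fun z : ℂ => ‖z - 1‖) (nhdsWithin 1 {1}ᶜ) (nhdsWithin 0 (Set.Ioi 0)) := by
        exact tendsto_norm_sub_self_nhdsNE 1
      have h := Filter.Tendsto.comp tendsto_inv_nhdsGT_zero this
      refine h.congr fun z => ?_
      simp
  · intro s hs
    rw [Function.update_of_ne hs]; ring

section glob
variable {ι : Type} (X : ι → ℕ → ℝ) (n Q : ι → ℕ) (Bd : ι → ℝ)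
  (hn : ∀ i, 1 ≤ n i) (hQ : ∀ i, 1 ≤ Q i)
  (hX0 : ∀ i a, X i a ≠ 0 → n i ∣ a)
  (hXp : ∀ i u, X i (n i * (u + Q i)) = X i (n i * u))
  (hXB : ∀ i a, |X i a| ≤ Bd i)
  (hw : ∀ σ : ℝ, 1 / 3 < σ → σ < 1 / 2 →
    Summable (fun i => Bd i * (n i : ℝ) ^ (-σ) * (Q i : ℝ) ^ (1 - σ)))

def gg (i : ι) (u : ℕ) : ℝ := X i (n i * (u + 1))

include hn hQ hX0 hXp hXB hw

omit hQ hXp hXB hw in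
lemma hasSum_reindex {M : Type} [NormedAddCommGroup M] (f : ℕ → M) (i : ι)
    (hf : ∀ a, X i (a + 1) = 0 → f a = 0) (S : M) :
    HasSum f S ↔ HasSum (fun u => f (n i * (u + 1) - 1)) S := by
  have hinj : Function.Injective (fun u : ℕ => n i * (u + 1) - 1) := by
    intro u v h
    have h1 : 1 ≤ n i * (u + 1) := Nat.mul_pos (hn i) (Nat.succ_pos _)
    have h2 : 1 ≤ n i * (v + 1) := Nat.mul_pos (hn i) (Nat.succ_pos _)
    simp only at h
    have h3 : n i * (u + 1) = n i * (v + 1) := by omega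
    have := Nat.eq_of_mul_eq_mul_left (hn i) h3
    omega
  refine (hinj.hasSum_iff ?_).symm
  intro a ha
  apply hf
  by_contra hne
  obtain ⟨k, hk⟩ := hX0 i (a + 1) hne
  apply ha
  refine ⟨k - 1, ?_⟩
  have hk0 : k ≠ 0 := by rintro rfl; simp at hk
  simp only
  rw [Nat.sub_add_cancel (Nat.pos_of_ne_zero hk0), ← hk]; simp

omit hQ hX0 hXp hXB hw in
lemma cast_reindex (i : ι) (u : ℕ) : ((n i * (u + 1) - 1 : ℕ) : ℂ) + 1 = n i * (u + 1) := by
  have h1 : 1 ≤ n i * (u + 1) := Nat.mul_pos (hn i) (Nat.succ_pos _)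
  have : ((n i * (u + 1) - 1 : ℕ) : ℂ) + 1 = ((n i * (u + 1) - 1 + 1 : ℕ) : ℂ) := by push_cast; ring
  rw [this, Nat.sub_add_cancel h1]; push_cast; ring

omit hw hQ hX0 hXp hXB in
lemma term_reindex (i : ι) (u : ℕ) (s : ℂ) :
    (X i (n i * (u + 1) - 1 + 1) : ℂ) * (((n i * (u + 1) - 1 : ℕ) : ℂ) + 1) ^ (-s)
      = (n i : ℂ) ^ (-s) * ((gg X n i u : ℂ) * ((u : ℂ) + 1) ^ (-s)) := by
  have h1 : 1 ≤ n i * (u + 1) := Nat.mul_pos (hn i) (Nat.succ_pos _)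
  rw [cast_reindex n hn, Nat.sub_add_cancel h1, gg]
  have := Complex.mul_cpow_ofReal_nonneg (a := (n i : ℝ)) (b := (u : ℝ) + 1) (by positivity) (by positivity) (-s)
  push_cast at this
  rw [this]; ring

omit hw in
lemma inner_sum (i : ι) (s : ℂ) (hs : 1 < s.re) :
    HasSum (fun a : ℕ => (X i (a + 1) : ℂ) * ((a : ℂ) + 1) ^ (-s))
      ((n i : ℂ) ^ (-s) * (pM (gg X n i) (Q i) * riemannZeta s + pH (gg X n i) (Q i) s)) := by
  rw [hasSum_reindex X n hn hX0 _ i]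
  · simp_rw [term_reindex X n hn]
    apply HasSum.mul_left
    apply p_eq (gg X n i) (Q i) (Bd i) (hQ i) _ _ s hs
    · intro u
      unfold gg
      rw [show u + Q i + 1 = (u + 1) + Q i by ring, hXp]
    · intro u; exact hXB i _
  · intro a ha; simp [ha]

omit hw hQ hXp in
lemma inner_norm (i : ι) (s : ℂ) (hs : 1 < s.re) :
    Summable (fun a : ℕ => ‖(X i (a + 1) : ℂ) * ((a : ℂ) + 1) ^ (-s)‖) ∧
    ∑' a : ℕ, ‖(X i (a + 1) : ℂ) * ((a : ℂ) + 1) ^ (-s)‖ ≤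
      Bd i * (n i : ℝ) ^ (-s.re) * ∑' N : ℕ, 1 / ((N : ℝ) + 1) ^ (1 + s.re - 1) := by
  have hB0 : 0 ≤ Bd i := (abs_nonneg _).trans (hXB i 0)
  have hbd : ∀ u : ℕ, ‖(X i (n i * (u + 1) - 1 + 1) : ℂ) * (((n i * (u + 1) - 1 : ℕ) : ℂ) + 1) ^ (-s)‖
      ≤ Bd i * (n i : ℝ) ^ (-s.re) * (1 / ((u : ℝ) + 1) ^ (1 + s.re - 1)) := by
    intro u
    rw [term_reindex X n hn, norm_mul, norm_mul, Complex.norm_real, Real.norm_eq_abs]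
    have h1 := norm_cpow_nat_le (n i) (hn i) s s.re le_rfl
    have h2 := norm_cpow_nat_le (u + 1) (by omega) s s.re le_rfl
    push_cast at h2
    rw [Real.rpow_neg (by positivity)] at h2
    have h3 : |gg X n i u| ≤ Bd i := hXB i _
    rw [show 1 + s.re - 1 = s.re by ring, one_div]
    calc _ ≤ (n i : ℝ) ^ (-s.re) * (Bd i * (((u : ℝ) + 1) ^ s.re)⁻¹) := by gcongr
      _ = _ := by ring
  have hsm := (summ_aux 1 s.re hs).mul_left (Bd i * (n i : ℝ) ^ (-s.re))
  have hs1 : Summable (fun u : ℕ => ‖(X i (n i * (u + 1) - 1 + 1) : ℂ) * (((n i * (u + 1) - 1 : ℕ) : ℂ) + 1) ^ (-s)‖) :=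
    Summable.of_nonneg_of_le (fun _ => norm_nonneg _) hbd hsm
  have := (hasSum_reindex X n hn hX0 (fun a : ℕ => ‖(X i (a + 1) : ℂ) * ((a : ℂ) + 1) ^ (-s)‖) i
    (by intro a ha; simp [ha]) _).2 hs1.hasSum
  refine ⟨this.summable, ?_⟩
  rw [this.tsum_eq, ← tsum_mul_left]
  exact hs1.tsum_le_tsum hbd hsm

omit hX0 hXp hw in
lemma w_le (σ τ : ℝ) (h1 : 1 / 3 < σ) (h2 : σ < 1 / 2) (h : σ ≤ τ) (i : ι) :
    Bd i * (n i : ℝ) ^ (-τ) ≤ Bd i * (n i : ℝ) ^ (-σ) * (Q i : ℝ) ^ (1 - σ) := by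
  have hB0 : 0 ≤ Bd i := (abs_nonneg _).trans (hXB i 0)
  have hn1 : (1 : ℝ) ≤ n i := by exact_mod_cast hn i
  have hQ1 : (1 : ℝ) ≤ Q i := by exact_mod_cast hQ i
  have a1 : (n i : ℝ) ^ (-τ) ≤ (n i : ℝ) ^ (-σ) :=
    Real.rpow_le_rpow_of_exponent_le hn1 (by linarith)
  have a2 : 1 ≤ (Q i : ℝ) ^ (1 - σ) := Real.one_le_rpow hQ1 (by linarith)
  calc _ ≤ Bd i * (n i : ℝ) ^ (-σ) * 1 := by rw [mul_one]; gcongr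
    _ ≤ _ := by gcongr

omit hXp in
lemma double_summable (s : ℂ) (hs : 1 < s.re) :
    Summable (fun x : ι × ℕ => (X x.1 (x.2 + 1) : ℂ) * ((x.2 : ℂ) + 1) ^ (-s)) := by
  apply Summable.of_norm
  rw [summable_prod_of_nonneg (fun _ => norm_nonneg _)]
  refine ⟨fun i => (inner_norm X n Bd hn hX0 hXB i s hs).1, ?_⟩
  refine Summable.of_nonneg_of_le (fun i => tsum_nonneg fun _ => norm_nonneg _)
    (fun i => ((inner_norm X n Bd hn hX0 hXB i s hs).2.trans ?_))
    ((hw (2/5) (by norm_num) (by norm_num)).mul_right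
      (∑' N : ℕ, 1 / ((N : ℝ) + 1) ^ (1 + s.re - 1)))
  have := w_le X n Q Bd hn hQ hXB (2/5) s.re (by norm_num) (by norm_num) (by linarith) i
  have h0 : 0 ≤ ∑' N : ℕ, 1 / ((N : ℝ) + 1) ^ (1 + s.re - 1) := tsum_nonneg fun _ => by positivity
  gcongr

def gA (s : ℂ) : ℂ := ∑' i, (n i : ℂ) ^ (-s) * pM (gg X n i) (Q i)
def gH (s : ℂ) : ℂ := ∑' i, (n i : ℂ) ^ (-s) * pH (gg X n i) (Q i) s

omit hQ hX0 hXB hw hn in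
lemma gg_per (i : ι) (u : ℕ) : gg X n i (u + Q i) = gg X n i u := by
  unfold gg
  rw [show u + Q i + 1 = (u + 1) + Q i by ring, hXp]

omit hX0 in
lemma glob_data (s : ℂ) (hs : 1 / 3 < s.re) :
    DifferentiableAt ℂ (gA X n Q) s ∧ DifferentiableAt ℂ (gH X n Q) s ∧
    Summable (fun i => (n i : ℂ) ^ (-s) * pM (gg X n i) (Q i)) ∧
    Summable (fun i => (n i : ℂ) ^ (-s) * pH (gg X n i) (Q i) s) := by
  obtain ⟨σ0, hσ0, hσ0'⟩ := exists_between (lt_min hs (by norm_num : (1 / 3 : ℝ) < 1 / 2))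
  have ha := hσ0'.trans_le (min_le_left _ _)
  have hb := hσ0'.trans_le (min_le_right _ _)
  obtain ⟨σ, hσ, hσ'⟩ := exists_between hσ0
  let U : Set ℂ := {z | σ0 < z.re} ∩ Metric.ball 0 (‖s‖ + 1)
  have hU : IsOpen U := (isOpen_lt continuous_const Complex.continuous_re).inter Metric.isOpen_ball
  have hsU : s ∈ U := ⟨ha, by simp⟩
  have hB0 : ∀ i, 0 ≤ Bd i := fun i => (abs_nonneg _).trans (hXB i 0)
  have hpow : ∀ i, Differentiable ℂ (fun z : ℂ => (n i : ℂ) ^ (-z)) := by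
    intro i z
    have : (n i : ℂ) ≠ 0 := by have := hn i; exact_mod_cast (by omega : n i ≠ 0)
    exact (differentiableAt_id.neg).const_cpow (Or.inl this)
  have bA : ∀ i, ∀ w ∈ U, ‖(n i : ℂ) ^ (-w) * (pM (gg X n i) (Q i) : ℂ)‖ ≤
      Bd i * (n i : ℝ) ^ (-σ) * (Q i : ℝ) ^ (1 - σ) := by
    intro i w hw'
    refine le_trans ?_ (w_le X n Q Bd hn hQ hXB σ σ hσ (by linarith) le_rfl i)
    rw [norm_mul, Complex.norm_real, Real.norm_eq_abs, mul_comm]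
    have h1 := norm_cpow_nat_le (n i) (hn i) w σ (hσ'.trans hw'.1).le
    have h2 := pM_le (gg X n i) (Q i) (Bd i) (hQ i) (fun u => hXB i _)
    have := hB0 i
    gcongr
  set K := ∑' N : ℕ, (1 / ((N : ℝ) + 1) ^ (1 + σ0 - σ)) with hK
  have hK0 : 0 ≤ K := tsum_nonneg fun _ => by positivity
  have bH : ∀ i, ∀ w ∈ U, ‖(n i : ℂ) ^ (-w) * pH (gg X n i) (Q i) w‖ ≤
      (2 * (‖s‖ + 1) * K) * (Bd i * (n i : ℝ) ^ (-σ) * (Q i : ℝ) ^ (1 - σ)) := by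
    intro i w hw'
    rw [norm_mul]
    have h1 := norm_cpow_nat_le (n i) (hn i) w σ (hσ'.trans hw'.1).le
    have h2 := pH_le (gg X n i) (Q i) (Bd i) (hQ i) (gg_per X n Q hXp i) (fun u => hXB i _)
      σ σ0 (by linarith) (by linarith) hσ' w hw'.1.le
    have h3 : ‖w‖ ≤ ‖s‖ + 1 := by have := hw'.2; simp at this; exact this.le
    have := hB0 i
    calc _ ≤ (n i : ℝ) ^ (-σ) * ((‖s‖ + 1) * (2 * Bd i * (Q i : ℝ) ^ (1 - σ)) * K) := by
          gcongr
          refine h2.trans ?_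
          gcongr
      _ = _ := by ring
  have hS := hw σ hσ (by linarith)
  refine ⟨?_, ?_, ?_, ?_⟩
  · refine (Complex.differentiableOn_tsum_of_summable_norm hS (fun i => ?_) hU bA).differentiableAt (hU.mem_nhds hsU)
    exact ((hpow i).mul_const _).differentiableOn
  · refine (Complex.differentiableOn_tsum_of_summable_norm (hS.mul_left _) (fun i => ?_) hU bH).differentiableAt (hU.mem_nhds hsU)
    intro z hz
    refine ((hpow i z).mul ?_).differentiableWithinAt
    exact pH_diff (gg X n i) (Q i) (Bd i) (hQ i) (gg_per X n Q hXp i) (fun u => hXB i _) z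
      (by have h1 : σ0 < z.re := hz.1
          linarith)
  · exact Summable.of_norm_bounded hS (fun i => bA i s hsU)
  · exact Summable.of_norm_bounded (hS.mul_left _) (fun i => bH i s hsU)

theorem A_glob (ν : ℕ → ℝ) (hν : ∀ a, 1 ≤ a → HasSum (fun i => X i a) (ν a)) :
    (∀ s : ℂ, 1 < s.re → Summable (fun a : ℕ => ‖(ν (a + 1) : ℂ) / ((a : ℂ) + 1) ^ s‖)) ∧
    ∃ (G : ℂ → ℂ) (r : ℂ), DifferentiableOn ℂ G {s : ℂ | 1 / 3 < s.re} ∧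
      ∀ s : ℂ, 1 < s.re → ∑' a : ℕ, (ν (a + 1) : ℂ) / ((a : ℂ) + 1) ^ s = G s + r / (s - 1) := by
  have hinner : ∀ (s : ℂ) (a : ℕ), HasSum (fun i => (X i (a + 1) : ℂ) * ((a : ℂ) + 1) ^ (-s))
      ((ν (a + 1) : ℂ) / ((a : ℂ) + 1) ^ s) := by
    intro s a
    rw [div_eq_mul_inv, ← Complex.cpow_neg]
    apply HasSum.mul_right
    exact Complex.hasSum_ofReal.2 (hν (a + 1) (by omega))
  refine ⟨fun s hs => ?_, ?_⟩
  · have hd := double_summable X n Q Bd hn hQ hX0 hXB hw s hs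
    have hd' := hd.norm.prod_symm
    have h1 := hd'.prod
    refine Summable.of_nonneg_of_le (fun _ => norm_nonneg _) (fun a => ?_) h1
    rw [← (hinner s a).tsum_eq]
    exact norm_tsum_le_tsum_norm (hd'.prod_factor a)
  · obtain ⟨Z, hZ, hZeq⟩ := zeta_reg
    let U : Set ℂ := {s : ℂ | 1 / 3 < s.re}
    have hU : IsOpen U := isOpen_lt continuous_const Complex.continuous_re
    have hAd : DifferentiableOn ℂ (gA X n Q) U := fun s hs =>
      (glob_data X n Q Bd hn hQ hXp hXB hw s hs).1.differentiableWithinAt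
    have hHd : DifferentiableOn ℂ (gH X n Q) U := fun s hs =>
      (glob_data X n Q Bd hn hQ hXp hXB hw s hs).2.1.differentiableWithinAt
    refine ⟨fun s => gA X n Q s * Z s + dslope (gA X n Q) 1 s + gH X n Q s, gA X n Q 1, ?_, ?_⟩
    · refine DifferentiableOn.add (DifferentiableOn.add (hAd.mul hZ.differentiableOn) ?_) hHd
      rw [Complex.differentiableOn_dslope]
      · exact hAd
      · exact hU.mem_nhds (by simp [U]; norm_num)
    · intro s hs
      have hs1 : s ≠ 1 := by rintro rfl; simp at hs
      have hs0 : s - 1 ≠ 0 := sub_ne_zero.2 hs1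
      have hd := double_summable X n Q Bd hn hQ hX0 hXB hw s hs
      obtain ⟨-, -, sA, sH⟩ := glob_data X n Q Bd hn hQ hXp hXB hw s (by linarith)
      have e1 : ∑' a : ℕ, (ν (a + 1) : ℂ) / ((a : ℂ) + 1) ^ s
          = ∑' a : ℕ, ∑' i, (X i (a + 1) : ℂ) * ((a : ℂ) + 1) ^ (-s) :=
        tsum_congr fun a => (hinner s a).tsum_eq.symm
      rw [e1, Summable.tsum_comm (f := fun i (a : ℕ) => (X i (a + 1) : ℂ) * ((a : ℂ) + 1) ^ (-s)) hd]
      have e2 : ∀ i, ∑' a : ℕ, (X i (a + 1) : ℂ) * ((a : ℂ) + 1) ^ (-s) =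
          ((n i : ℂ) ^ (-s) * pM (gg X n i) (Q i)) * riemannZeta s + (n i : ℂ) ^ (-s) * pH (gg X n i) (Q i) s := by
        intro i
        rw [(inner_sum X n Q Bd hn hQ hX0 hXp hXB i s hs).tsum_eq]; ring
      simp_rw [e2]
      rw [(sA.mul_right _).tsum_add sH, tsum_mul_right, hZeq s hs1, dslope_of_ne _ hs1, slope_def_field]
      change gA X n Q s * _ + gH X n Q s = _
      field_simp
      ring

end glob


section prodexp
variable (E : Nat.Primes → ℕ → ℝ) (Q : Nat.Primes → ℕ) (b : Nat.Primes → ℕ → ℝ)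

open Classical in
def xx (i : Nat.Primes × ℕ) (a : ℕ) : ℝ :=
  if (i.1 : ℕ) ^ i.2 ∣ a ∧ ¬ (i.1 : ℕ) ^ (i.2 + 1) ∣ a then E i.1 a - 1 else 0

def XX (T : Finset (Nat.Primes × ℕ)) (a : ℕ) : ℝ := ∏ i ∈ T, xx E i a

def nT (T : Finset (Nat.Primes × ℕ)) : ℕ := ∏ i ∈ T, (i.1 : ℕ) ^ i.2

lemma xx_ne {i : Nat.Primes × ℕ} {a : ℕ} (h : xx E i a ≠ 0) :
    (i.1 : ℕ) ^ i.2 ∣ a ∧ ¬ (i.1 : ℕ) ^ (i.2 + 1) ∣ a := by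
  by_contra hc
  exact h (by simp [xx, hc])

lemma exact_unique {p j k a : ℕ} (h1 : p ^ j ∣ a) (h2 : ¬ p ^ (j + 1) ∣ a)
    (h3 : p ^ k ∣ a) (h4 : ¬ p ^ (k + 1) ∣ a) : j = k := by
  rcases lt_trichotomy j k with h | h | h
  · exact absurd ((pow_dvd_pow p h).trans h3) h2
  · exact h
  · exact absurd ((pow_dvd_pow p h).trans h1) h4

lemma XX_inj {T : Finset (Nat.Primes × ℕ)} {a : ℕ} (h : XX E T a ≠ 0) :
    Set.InjOn Prod.fst (T : Set (Nat.Primes × ℕ)) := by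
  have h' : ∀ i ∈ T, xx E i a ≠ 0 := Finset.prod_ne_zero_iff.1 h
  rintro ⟨p, j⟩ hi ⟨q, k⟩ hk hpq
  simp only at hpq
  subst hpq
  have h1 := xx_ne E (h' _ hi)
  have h2 := xx_ne E (h' _ hk)
  exact Prod.ext rfl (exact_unique h1.1 h1.2 h2.1 h2.2)

lemma T_coprime {T : Finset (Nat.Primes × ℕ)} (h : Set.InjOn Prod.fst (T : Set (Nat.Primes × ℕ)))
    {i k : Nat.Primes × ℕ} (hi : i ∈ T) (hk : k ∈ T) (hne : i ≠ k) :
    Nat.Coprime ((i.1 : ℕ)) (k.1 : ℕ) := by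
  rw [Nat.coprime_primes i.1.2 k.1.2]
  intro he
  exact hne (h hi hk (Subtype.ext he))

lemma XX_dvd {T : Finset (Nat.Primes × ℕ)} {a : ℕ} (h : XX E T a ≠ 0) : nT T ∣ a := by
  have hin := XX_inj E h
  have h' : ∀ i ∈ T, xx E i a ≠ 0 := Finset.prod_ne_zero_iff.1 h
  apply Finset.prod_dvd_of_isRelPrime
  · intro i hi k hk hne
    exact Nat.coprime_iff_isRelPrime.1 ((T_coprime hin hi hk hne).pow _ _)
  · intro i hi; exact (xx_ne E (h' i hi)).1

variable (hQ : ∀ p, 1 ≤ Q p) (hpQ : ∀ p : Nat.Primes, (p : ℕ) ∣ Q p) (hb0 : ∀ p j, 0 ≤ b p j)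
  (hE : ∀ (p : Nat.Primes) (j u : ℕ), ¬ (p : ℕ) ∣ u → |E p ((p : ℕ) ^ j * u) - 1| ≤ b p j)
  (hper : ∀ (p : Nat.Primes) (j u u' : ℕ), ¬ (p : ℕ) ∣ u → u ≡ u' [MOD Q p] →
    E p ((p : ℕ) ^ j * u) = E p ((p : ℕ) ^ j * u'))
  (hw : ∀ σ : ℝ, 1 / 3 < σ → σ < 1 / 2 → Summable (fun i : Nat.Primes × ℕ =>
    b i.1 i.2 * (((i.1 : ℕ) ^ i.2 : ℕ) : ℝ) ^ (-σ) * (Q i.1 : ℝ) ^ (1 - σ)))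

include hpQ hper in
lemma XX_per (T : Finset (Nat.Primes × ℕ)) (u : ℕ) :
    XX E T (nT T * (u + ∏ i ∈ T, Q i.1)) = XX E T (nT T * u) := by
  by_cases hin : Set.InjOn Prod.fst (T : Set (Nat.Primes × ℕ))
  · apply Finset.prod_congr rfl
    intro i hi
    obtain ⟨p, j⟩ := i
    have e : nT T = (p : ℕ) ^ j * ∏ k ∈ T.erase (p, j), (k.1 : ℕ) ^ k.2 :=
      (Finset.mul_prod_erase T (fun k => (k.1 : ℕ) ^ k.2) hi).symm
    set n' := ∏ k ∈ T.erase (p, j), (k.1 : ℕ) ^ k.2 with hn'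
    have hcop : Nat.Coprime p n' := by
      apply Nat.Coprime.prod_right
      intro k hk
      exact (T_coprime hin hi (Finset.mem_of_mem_erase hk) (Finset.ne_of_mem_erase hk).symm).pow_right _
    have hQd : Q p ∣ ∏ i ∈ T, Q i.1 := Finset.dvd_prod_of_mem (fun k : Nat.Primes × ℕ => Q k.1) hi
    set QT := ∏ i ∈ T, Q i.1
    have key : ∀ v, (p : ℕ) ^ (j + 1) ∣ nT T * v ↔ (p : ℕ) ∣ v := by
      intro v
      rw [e, pow_succ, mul_assoc, Nat.mul_dvd_mul_iff_left (pow_pos p.2.pos _)]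
      exact hcop.dvd_mul_left
    have key2 : ∀ v, (p : ℕ) ^ j ∣ nT T * v := by
      intro v; rw [e, mul_assoc]; exact Dvd.intro _ rfl
    have key3 : (p : ℕ) ∣ u + QT ↔ (p : ℕ) ∣ u :=
      (Nat.dvd_add_left ((hpQ p).trans hQd))
    unfold xx
    simp only [key, key2, key3]
    by_cases hpu : (p : ℕ) ∣ u
    · simp [hpu]
    · simp only [hpu]
      simp only [not_false_eq_true, and_self, if_true]
      congr 1
      rw [e, mul_assoc, mul_assoc]
      symm
      apply hper
      · rw [hcop.dvd_mul_left]; exact hpu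
      · apply Nat.ModEq.mul_left
        have : QT ≡ 0 [MOD Q p] := (Nat.modEq_zero_iff_dvd).2 hQd
        simpa using (Nat.ModEq.add_left u this).symm
  · have z : ∀ a, XX E T a = 0 := by
      intro a; by_contra h; exact hin (XX_inj E h)
    rw [z, z]

include hE hb0 in
lemma xx_le (i : Nat.Primes × ℕ) (a : ℕ) : |xx E i a| ≤ b i.1 i.2 := by
  by_cases h : xx E i a = 0
  · rw [h]; simpa using hb0 _ _
  · obtain ⟨⟨u, hu⟩, h2⟩ := xx_ne E h
    have hx : xx E i a = E i.1 a - 1 := by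
      unfold xx at h ⊢
      rw [if_pos]; by_contra hc; simp [hc] at h
    rw [hx, hu]
    apply hE
    intro hd
    apply h2
    rw [hu, pow_succ]
    exact mul_dvd_mul_left _ hd

include hQ hpQ hb0 hE hper hw in
theorem partA :
    (∀ s : ℂ, 1 < s.re → Summable (fun a : ℕ => ‖((∏' p, E p (a + 1) : ℝ) : ℂ) / ((a : ℂ) + 1) ^ s‖)) ∧
    ∃ (G : ℂ → ℂ) (r : ℂ), DifferentiableOn ℂ G {s : ℂ | 1 / 3 < s.re} ∧
      ∀ s : ℂ, 1 < s.re → ∑' a : ℕ, ((∏' p, E p (a + 1) : ℝ) : ℂ) / ((a : ℂ) + 1) ^ s = G s + r / (s - 1) := by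
  refine A_glob (XX E) nT (fun T => ∏ i ∈ T, Q i.1) (fun T => ∏ i ∈ T, b i.1 i.2)
    (fun T => ?_) (fun T => ?_) (fun T a h => XX_dvd E h) (XX_per E Q hpQ hper) (fun T a => ?_)
    (fun σ h1 h2 => ?_) (fun a => ∏' p, E p a) (fun a ha => ?_)
  · exact Nat.one_le_iff_ne_zero.2 (Finset.prod_ne_zero_iff.2 fun i _ => (pow_pos i.1.2.pos _).ne')
  · exact Nat.one_le_iff_ne_zero.2 (Finset.prod_ne_zero_iff.2 fun i _ => Nat.one_le_iff_ne_zero.1 (hQ _))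
  · unfold XX
    rw [Finset.abs_prod]
    exact Finset.prod_le_prod (fun _ _ => abs_nonneg _) fun i _ => xx_le E b hb0 hE i a
  · have := summable_finsetProd_of_summable_nonneg (fun i => ?_) (hw σ h1 h2)
    · refine this.congr fun T => ?_
      rw [Finset.prod_mul_distrib, Finset.prod_mul_distrib]
      congr 1
      · congr 1
        rw [nT, Nat.cast_prod, Real.finsetProd_rpow]
        intro i _; positivity
      · rw [Nat.cast_prod, Real.finsetProd_rpow]
        intro i _; positivity
    · have := hb0 i.1 i.2
      change (0:ℝ) ≤ b i.1 i.2 * (((i.1 : ℕ) ^ i.2 : ℕ) : ℝ) ^ (-σ) * (Q i.1 : ℝ) ^ (1 - σ)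
      positivity
  · have hs1 : Summable (fun i => ‖xx E i a‖) := by
      refine Summable.of_nonneg_of_le (fun _ => norm_nonneg _) (fun i => ?_)
        ((hw (2/5) (by norm_num) (by norm_num)).mul_left ((a : ℝ) ^ (2/5 : ℝ)))
      by_cases h : xx E i a = 0
      · rw [h, norm_zero]; have := hb0 i.1 i.2; positivity
      · have h1 := xx_le E b hb0 hE i a
        have h2 := (xx_ne E h).1
        have hle := Nat.le_of_dvd ha h2
        have hq : (0 : ℝ) < (((i.1 : ℕ) ^ i.2 : ℕ) : ℝ) := by
          exact_mod_cast pow_pos i.1.2.pos _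
        have h3 : 1 ≤ (a : ℝ) ^ (2/5 : ℝ) * (((i.1 : ℕ) ^ i.2 : ℕ) : ℝ) ^ (-(2/5) : ℝ) := by
          rw [Real.rpow_neg hq.le, ← div_eq_mul_inv, one_le_div (by positivity)]
          apply Real.rpow_le_rpow hq.le (by exact_mod_cast hle) (by norm_num)
        have h4 : 1 ≤ (Q i.1 : ℝ) ^ (1 - 2/5 : ℝ) :=
          Real.one_le_rpow (by exact_mod_cast hQ i.1) (by norm_num)
        have h0 := hb0 i.1 i.2
        calc ‖xx E i a‖ ≤ b i.1 i.2 * 1 * 1 := by simpa using h1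
          _ ≤ b i.1 i.2 * ((a : ℝ) ^ (2/5 : ℝ) * (((i.1 : ℕ) ^ i.2 : ℕ) : ℝ) ^ (-(2/5) : ℝ)) * (Q i.1 : ℝ) ^ (1 - 2/5 : ℝ) := by gcongr
          _ = _ := by ring
    have hs2 := summable_finsetProd_of_summable_norm hs1
    have e1 := tprod_one_add hs2
    have e2 : ∏' p, E p a = ∏' i, (1 + xx E i a) := by
      have hfin : ∀ p : Nat.Primes, (p : ℕ) ^ (padicValNat p a) ∣ a ∧ ¬ (p : ℕ) ^ (padicValNat p a + 1) ∣ a := by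
        intro p
        exact ⟨pow_padicValNat_dvd, pow_succ_padicValNat_not_dvd (by omega)⟩
      have hinj : Function.Injective (fun p : Nat.Primes => ((p, padicValNat p a) : Nat.Primes × ℕ)) :=
        fun p q h => (Prod.ext_iff.1 h).1
      rw [← hinj.tprod_eq]
      · congr 1; ext p
        simp only [xx, hfin p]; simp
      · rintro ⟨p, j⟩ hi
        have hx : xx E (p, j) a ≠ 0 := by
          intro h0; simp [h0] at hi
        have := xx_ne E hx
        refine ⟨p, ?_⟩
        simp only [Prod.mk.injEq, true_and]
        exact exact_unique (hfin p).1 (hfin p).2 this.1 this.2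
    rw [e2, e1]
    exact hs2.hasSum
end prodexp


def QQ (p : Nat.Primes) : ℕ := if (p : ℕ) = 2 then 32 else p

open Classical in
def bb (P0 : ℕ) (Bp : Nat.Primes → ℝ) (C : ℝ) (p : Nat.Primes) (j : ℕ) : ℝ :=
  if (p : ℕ) ≤ P0 then Bp p + 1 else if j ≤ 1 then C / (p : ℝ) ^ 2 else C / (p : ℝ)

lemma QQ_pos (p : Nat.Primes) : 1 ≤ QQ p := by
  unfold QQ; split_ifs
  · norm_num
  · exact p.2.one_le

lemma QQ_dvd (p : Nat.Primes) : (p : ℕ) ∣ QQ p := by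
  unfold QQ; split_ifs with h
  · rw [h]; norm_num
  · exact dvd_rfl

lemma finite_primes_le (P0 : ℕ) : {p : Nat.Primes | (p : ℕ) ≤ P0}.Finite := by
  apply Set.Finite.of_injOn (f := fun p : Nat.Primes => (p : ℕ)) (t := Set.Iic P0)
  · intro p hp; exact hp
  · intro p _ q _ h; exact Subtype.ext h
  · exact Set.finite_Iic P0

lemma bb_summable (P0 : ℕ) (hP0 : 2 ≤ P0) (Bp : Nat.Primes → ℝ) (hBp : ∀ p, 0 ≤ Bp p) (C : ℝ) (hC : 0 ≤ C)
    (σ : ℝ) (h1 : 1 / 3 < σ) (h2 : σ < 1 / 2) :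
    Summable (fun i : Nat.Primes × ℕ =>
      bb P0 Bp C i.1 i.2 * (((i.1 : ℕ) ^ i.2 : ℕ) : ℝ) ^ (-σ) * (QQ i.1 : ℝ) ^ (1 - σ)) := by
  classical
  set ρ : ℝ := (2 : ℝ) ^ (-σ) with hρ
  have hρ0 : 0 < ρ := by positivity
  have hρ1 : ρ < 1 := Real.rpow_lt_one_of_one_lt_of_neg (by norm_num) (by linarith)
  let M1 : Nat.Primes → ℝ := fun p => if (p : ℕ) ≤ P0 then (Bp p + 1) * (QQ p : ℝ) ^ (1 - σ) else 0
  let M2 : Nat.Primes → ℝ := fun p => C * (ρ ^ 2)⁻¹ * (1 / (p : ℝ) ^ (3 * σ))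
  have hM1 : Summable M1 := by
    apply summable_of_hasFiniteSupport
    apply (finite_primes_le P0).subset
    intro p hp
    by_contra hc
    exact hp (if_neg hc)
  have hM2 : Summable M2 := by
    apply Summable.mul_left
    have := (Real.summable_one_div_nat_rpow (p := 3 * σ)).2 (by linarith)
    exact this.comp_injective (i := fun p : Nat.Primes => (p : ℕ)) (fun p q h => Subtype.ext h)
  have hM1n : 0 ≤ M1 := by
    intro p; simp only [M1]; have := hBp p
    split_ifs
    · have : 0 ≤ Bp p + 1 := by linarith
      change 0 ≤ _; positivity
    · exact le_rfl
  have hM2n : 0 ≤ M2 := by intro p; simp only [M2]; change 0 ≤ _; positivity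
  have hg : Summable (fun j : ℕ => ρ ^ j) := summable_geometric_of_lt_one hρ0.le hρ1
  have hS := (hM1.add hM2).mul_of_nonneg hg (by intro p; exact add_nonneg (hM1n p) (hM2n p))
    (fun j => pow_nonneg hρ0.le j)
  refine Summable.of_nonneg_of_le (fun i => ?_) (fun i => ?_) hS
  · have : 0 ≤ bb P0 Bp C i.1 i.2 := by
      have := hBp i.1
      unfold bb; split_ifs
      · linarith
      · positivity
      · positivity
    positivity
  · obtain ⟨p, j⟩ := i
    simp only
    have hp2 : (2 : ℝ) ≤ (p : ℝ) := by exact_mod_cast p.2.two_le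
    have hp0 : (0 : ℝ) < (p : ℝ) := by linarith
    have epow : (((p : ℕ) ^ j : ℕ) : ℝ) ^ (-σ) = ((p : ℝ) ^ (-σ)) ^ j := by
      push_cast
      rw [← Real.rpow_natCast, ← Real.rpow_natCast, ← Real.rpow_mul hp0.le, ← Real.rpow_mul hp0.le, mul_comm]
    have hpρ : (p : ℝ) ^ (-σ) ≤ ρ := Real.rpow_le_rpow_of_nonpos (by norm_num) hp2 (by linarith)
    have hpσ0 : 0 < (p : ℝ) ^ (-σ) := by positivity
    rw [epow]
    by_cases hle : (p : ℕ) ≤ P0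
    · have hb : bb P0 Bp C p j = Bp p + 1 := by simp [bb, hle]
      have hm : M1 p = (Bp p + 1) * (QQ p : ℝ) ^ (1 - σ) := by simp [M1, hle]
      have h0 : 0 ≤ Bp p + 1 := by have := hBp p; linarith
      calc _ = (Bp p + 1) * (QQ p : ℝ) ^ (1 - σ) * ((p : ℝ) ^ (-σ)) ^ j := by rw [hb]; ring
        _ ≤ (Bp p + 1) * (QQ p : ℝ) ^ (1 - σ) * ρ ^ j := by gcongr
        _ = M1 p * ρ ^ j := by rw [hm]
        _ ≤ _ := by have := hM2n p; simp only [Pi.zero_apply] at this; gcongr; linarith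
    · have hQ : QQ p = p := by unfold QQ; rw [if_neg]; omega
      have key : bb P0 Bp C p j * ((p : ℝ) ^ (-σ)) ^ j * (QQ p : ℝ) ^ (1 - σ) ≤ M2 p * ρ ^ j := by
        rw [hQ]
        simp only [M2]
        rw [one_div, ← Real.rpow_neg hp0.le]
        by_cases hj : j ≤ 1
        · have hb : bb P0 Bp C p j = C / (p : ℝ) ^ 2 := by simp [bb, hle, hj]
          rw [hb]
          have e1 : C / (p : ℝ) ^ 2 * (p : ℝ) ^ (1 - σ) = C * (p : ℝ) ^ (-1 - σ) := by
            rw [div_eq_mul_inv, ← Real.rpow_natCast, ← Real.rpow_neg hp0.le, mul_assoc, ← Real.rpow_add hp0]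
            congr 2; push_cast; ring
          have e2 : (p : ℝ) ^ (-1 - σ) ≤ (p : ℝ) ^ (-(3 * σ)) :=
            Real.rpow_le_rpow_of_exponent_le (by linarith) (by linarith)
          have e3 : 1 ≤ (ρ ^ 2)⁻¹ := by
            rw [one_le_inv₀ (by positivity)]; exact pow_le_one₀ hρ0.le hρ1.le
          calc _ = C / (p : ℝ) ^ 2 * (p : ℝ) ^ (1 - σ) * ((p : ℝ) ^ (-σ)) ^ j := by ring
            _ = C * 1 * (p : ℝ) ^ (-1 - σ) * ((p : ℝ) ^ (-σ)) ^ j := by rw [e1]; ring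
            _ ≤ C * (ρ ^ 2)⁻¹ * (p : ℝ) ^ (-(3 * σ)) * ρ ^ j := by gcongr
        · have hb : bb P0 Bp C p j = C / (p : ℝ) := by simp [bb, hle, hj]
          rw [hb]
          obtain ⟨k, rfl⟩ : ∃ k, j = k + 2 := ⟨j - 2, by omega⟩
          have e1 : C / (p : ℝ) * ((p : ℝ) ^ (-σ)) ^ 2 * (p : ℝ) ^ (1 - σ) = C * (p : ℝ) ^ (-(3 * σ)) := by
            rw [div_eq_mul_inv, ← Real.rpow_natCast ((p : ℝ) ^ (-σ)), ← Real.rpow_mul hp0.le, ← Real.rpow_neg_one,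
              mul_assoc, mul_assoc, ← Real.rpow_add hp0, ← Real.rpow_add hp0]
            congr 2; push_cast; ring
          calc _ = C / (p : ℝ) * ((p : ℝ) ^ (-σ)) ^ 2 * (p : ℝ) ^ (1 - σ) * ((p : ℝ) ^ (-σ)) ^ k := by ring
            _ = C * (p : ℝ) ^ (-(3 * σ)) * ((p : ℝ) ^ (-σ)) ^ k := by rw [e1]
            _ ≤ C * (p : ℝ) ^ (-(3 * σ)) * ρ ^ k := by gcongr
            _ = _ := by rw [pow_add]; field_simp
      refine key.trans ?_
      have := hM1n p
      simp only [Pi.zero_apply] at this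
      gcongr; linarith

/-- Packaged version of Part A. -/
theorem partA' (E : Nat.Primes → ℕ → ℝ) (P0 : ℕ) (hP0 : 2 ≤ P0) (Bp : Nat.Primes → ℝ) (C : ℝ) (hC : 0 ≤ C)
    (hB : ∀ p n, |E p n| ≤ Bp p)
    (hE1 : ∀ (p : Nat.Primes) (n : ℕ), n ≠ 0 → P0 < (p : ℕ) → |E p n - 1| ≤ C / p)
    (hE2 : ∀ (p : Nat.Primes) (n : ℕ), n ≠ 0 → P0 < (p : ℕ) → ¬ (p : ℕ) ^ 2 ∣ n → |E p n - 1| ≤ C / (p : ℝ) ^ 2)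
    (hper : ∀ (p : Nat.Primes) (j u u' : ℕ), ¬ (p : ℕ) ∣ u → u ≡ u' [MOD QQ p] →
      E p ((p : ℕ) ^ j * u) = E p ((p : ℕ) ^ j * u')) :
    (∀ s : ℂ, 1 < s.re → Summable (fun a : ℕ => ‖((∏' p, E p (a + 1) : ℝ) : ℂ) / ((a : ℂ) + 1) ^ s‖)) ∧
    ∃ (G : ℂ → ℂ) (r : ℂ), DifferentiableOn ℂ G {s : ℂ | 1 / 3 < s.re} ∧
      ∀ s : ℂ, 1 < s.re → ∑' a : ℕ, ((∏' p, E p (a + 1) : ℝ) : ℂ) / ((a : ℂ) + 1) ^ s = G s + r / (s - 1) := by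
  have hBp : ∀ p, 0 ≤ Bp p := fun p => (abs_nonneg _).trans (hB p 0)
  refine partA E QQ (bb P0 Bp C) QQ_pos QQ_dvd ?_ ?_ hper (bb_summable P0 hP0 Bp hBp C hC)
  · intro p j
    have := hBp p
    unfold bb; split_ifs
    · linarith
    · positivity
    · positivity
  · intro p j u hu
    have hu0 : u ≠ 0 := by rintro rfl; simp at hu
    have hn : (p : ℕ) ^ j * u ≠ 0 := mul_ne_zero (pow_ne_zero _ p.2.ne_zero) hu0
    unfold bb
    split_ifs with h1 h2
    · have := hB p ((p : ℕ) ^ j * u)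
      rw [abs_le] at *
      constructor <;> linarith
    · apply hE2 p _ hn (by omega)
      intro hd
      have : (p : ℕ) ^ (j + 1) ∣ (p : ℕ) ^ j * u := (pow_dvd_pow _ (by omega)).trans hd
      rw [pow_succ, Nat.mul_dvd_mul_iff_left (pow_pos p.2.pos _)] at this
      exact hu this
    · exact hE1 p _ hn (by omega)



lemma dvdE {R : Type*} [CommRing R] {a b c : R} (h : a ∣ b) (e : c = b) : a ∣ c := e ▸ h

lemma R_bounds (r2 r1 r0 l : ℤ) (hr2 : 1 ≤ r2) (hl : 1 ≤ l) (h : |r1| + |r0| < l) :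
    0 < r2 * l ^ 2 + r1 * l + r0 ∧ r2 * l ^ 2 + r1 * l + r0 ≤ (r2 + |r1| + |r0|) * l ^ 2 := by
  have n1 : -|r1| ≤ r1 := neg_abs_le r1
  have n2 : -|r0| ≤ r0 := neg_abs_le r0
  have n3 := le_abs_self r1
  have n4 := le_abs_self r0
  have n5 := abs_nonneg r1
  have n6 := abs_nonneg r0
  have hll : l ≤ l ^ 2 := by nlinarith
  have c1 : -|r1| * l ≤ r1 * l := mul_le_mul_of_nonneg_right n1 (by linarith)
  have c2 : r1 * l ≤ |r1| * l := mul_le_mul_of_nonneg_right n3 (by linarith)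
  have c3 : |r0| * 1 ≤ |r0| * l := mul_le_mul_of_nonneg_left hl n6
  have c4 : |r1| * l ≤ |r1| * l ^ 2 := mul_le_mul_of_nonneg_left hll n5
  have c5 : |r0| * l ≤ |r0| * l ^ 2 := mul_le_mul_of_nonneg_left hll n6
  have b1 : 1 * l ^ 2 ≤ r2 * l ^ 2 := mul_le_mul_of_nonneg_right hr2 (by positivity)
  have b2 : (|r1| + |r0|) * l < l * l := mul_lt_mul_of_pos_right h (by linarith)
  constructor
  · nlinarith
  · rw [add_mul, add_mul]; linarith

lemma pi_small (C : ℕ) (hC : 1 ≤ C) : ∃ X : ℕ, 1 ≤ X ∧ 5 * Nat.primeCounting (C * X) ≤ X := by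
  have hCr : (1 : ℝ) ≤ C := by exact_mod_cast hC
  have h1 := Chebyshev.eventually_primeCounting_le (ε := 1) one_pos
  have h2 := Real.tendsto_log_atTop.eventually_ge_atTop (5 * C * (Real.log 4 + 1))
  have h3 := (h1.and (h2.and (Filter.eventually_ge_atTop (2 : ℝ))))
  have ht : Filter.Tendsto (fun X : ℕ => ((C * X : ℕ) : ℝ)) Filter.atTop Filter.atTop :=
    tendsto_natCast_atTop_atTop.comp (Filter.tendsto_atTop_mono (fun n => Nat.le_mul_of_pos_left n hC) Filter.tendsto_id)
  obtain ⟨X, ⟨hX1, hX2, hX3⟩, hX4⟩ := ((ht.eventually h3).and (Filter.eventually_ge_atTop 1)).exists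
  refine ⟨X, hX4, ?_⟩
  rw [Nat.floor_natCast] at hX1
  have hl4 : 0 < Real.log 4 := Real.log_pos (by norm_num)
  set L := Real.log ((C * X : ℕ) : ℝ)
  have hL : 0 < L := lt_of_lt_of_le (by positivity) hX2
  have : (Nat.primeCounting (C * X) : ℝ) * 5 ≤ X := by
    rw [le_div_iff₀ hL] at hX1
    push_cast at hX1
    have hX0 : (0 : ℝ) ≤ X := by positivity
    have hp0 : (0 : ℝ) ≤ (Nat.primeCounting (C * X) : ℝ) := by positivity
    have k1 : (Nat.primeCounting (C * X) : ℝ) * (5 * C * (Real.log 4 + 1)) ≤ (Real.log 4 + 1) * (C * X) :=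
      (mul_le_mul_of_nonneg_left hX2 hp0).trans hX1
    have hpos : 0 < (Real.log 4 + 1) * C := by positivity
    have k2 : ((Nat.primeCounting (C * X) : ℝ) * 5) * ((Real.log 4 + 1) * C) ≤ X * ((Real.log 4 + 1) * C) := by
      linarith
    exact le_of_mul_le_mul_right k2 hpos
  have h' : (5 : ℝ) * (Nat.primeCounting (C * X) : ℝ) ≤ X := by linarith
  exact_mod_cast h'

lemma fiber_bound (X q2 : ℕ) (_hq : 0 < q2) (s : Finset ℕ) (hs : ∀ k ∈ s, k < X) (n : ℕ)
    (h : ∀ t : Finset ℕ, t ⊆ s → (∀ x ∈ t, ∀ y ∈ t, x % q2 = y % q2 → x = y) → t.card ≤ n) :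
    s.card ≤ n * (X / q2 + 1) := by
  classical
  have := Finset.card_le_mul_card_image_of_maps_to (s := s) (t := Finset.range (X / q2 + 1))
    (f := fun k => k / q2) ?_ n ?_
  · simpa using this
  · intro k hk
    simp only [Finset.mem_range]
    exact Nat.lt_succ_of_le (Nat.div_le_div_right (hs k hk).le)
  · intro b _
    apply h
    · exact Finset.filter_subset _ _
    · intro x hx y hy hxy
      simp only [Finset.mem_filter] at hx hy
      rw [← Nat.div_add_mod x q2, ← Nat.div_add_mod y q2, hx.2, hy.2, hxy]

lemma mod_of_dvd {q : ℕ} {β : ℤ} (hq : q.Prime) (hβ : ¬ (q : ℤ) ∣ β) {x y : ℕ}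
    (h : (q : ℤ) ^ 2 ∣ β * ((x : ℤ) - y)) : x % (q ^ 2) = y % (q ^ 2) := by
  have hc : IsCoprime ((q : ℤ) ^ 2) β :=
    (((Nat.prime_iff_prime_int.1 hq).irreducible.coprime_iff_not_dvd).2 hβ).pow_left
  have := hc.dvd_of_dvd_mul_left h
  have h2 : ((y : ℤ) ≡ x [ZMOD ((q ^ 2 : ℕ) : ℤ)]) := by
    rw [Int.modEq_iff_dvd]; push_cast; exact this
  exact ((Int.natCast_modEq_iff).1 h2).symm

lemma K1_card (X q : ℕ) (hq : q.Prime) (α β : ℤ) (hβ : ¬ (q : ℤ) ∣ β) :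
    ((Finset.range X).filter fun k : ℕ => (q : ℤ) ^ 2 ∣ α + β * k).card ≤ 1 * (X / q ^ 2 + 1) := by
  apply fiber_bound X _ (pow_pos hq.pos 2)
  · intro k hk; simp at hk; exact hk.1
  · intro t ht hinj
    rw [Finset.card_le_one]
    intro x hx y hy
    apply hinj x hx y hy
    have h1 := (Finset.mem_filter.1 (ht hx)).2
    have h2 := (Finset.mem_filter.1 (ht hy)).2
    apply mod_of_dvd hq hβ
    have := dvd_sub h1 h2
    exact dvdE this (by ring)

lemma K2_card (X q : ℕ) (hq : q.Prime) (α β r2 r1 r0 : ℤ) (hβ : ¬ (q : ℤ) ∣ β)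
    (hr2 : ¬ (q : ℤ) ∣ r2) (hD : ¬ (q : ℤ) ∣ r1 ^ 2 - 4 * r2 * r0) :
    ((Finset.range X).filter fun k : ℕ => (q : ℤ) ^ 2 ∣ r2 * (α + β * k) ^ 2 + r1 * (α + β * k) + r0).card
      ≤ 2 * (X / q ^ 2 + 1) := by
  have hqp := Nat.prime_iff_prime_int.1 hq
  apply fiber_bound X _ (pow_pos hq.pos 2)
  · intro k hk; simp at hk; exact hk.1
  · intro t ht hinj
    by_contra hcard
    push Not at hcard
    obtain ⟨x, y, z, hx, hy, hz, hxy, hxz, hyz⟩ := Finset.two_lt_card_iff.1 hcard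
    have h1 := (Finset.mem_filter.1 (ht hx)).2
    have h2 := (Finset.mem_filter.1 (ht hy)).2
    have h3 := (Finset.mem_filter.1 (ht hz)).2
    have key : ∀ u v : ℕ, u ∈ t → v ∈ t → u ≠ v → (q : ℤ) ^ 2 ∣ r2 * (α + β * u) ^ 2 + r1 * (α + β * u) + r0 →
        (q : ℤ) ^ 2 ∣ r2 * (α + β * v) ^ 2 + r1 * (α + β * v) + r0 →
        (q : ℤ) ^ 2 ∣ r2 * ((α + β * u) + (α + β * v)) + r1 := by
      intro u v hu hv huv h1 h2
      have hsub := dvd_sub h1 h2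
      have e : (r2 * (α + β * u) ^ 2 + r1 * (α + β * u) + r0) - (r2 * (α + β * v) ^ 2 + r1 * (α + β * v) + r0)
        = (β * ((u : ℤ) - v)) * (r2 * ((α + β * u) + (α + β * v)) + r1) := by ring
      rw [e] at hsub
      by_cases hd : (q : ℤ) ∣ (β * ((u : ℤ) - v))
      · exfalso
        have hnd : ¬ (q : ℤ) ∣ r2 * ((α + β * u) + (α + β * v)) + r1 := by
          intro hd2
          apply hD
          have a1 : (q : ℤ) ∣ 2 * r2 * (α + β * u) + r1 := by
            have := dvd_add hd2 (hd.mul_left r2)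
            exact dvdE this (by ring)
          have a2 : (q : ℤ) ∣ r2 * (α + β * u) ^ 2 + r1 * (α + β * u) + r0 := (dvd_pow_self _ two_ne_zero).trans h1
          have := dvd_sub (a1.mul_left (2 * r2 * (α + β * u) + r1)) (a2.mul_left (4 * r2))
          exact dvdE this (by ring)
        have hc : IsCoprime ((q : ℤ) ^ 2) (r2 * ((α + β * u) + (α + β * v)) + r1) :=
          ((hqp.irreducible.coprime_iff_not_dvd).2 hnd).pow_left
        have := hc.dvd_of_dvd_mul_right hsub
        exact huv (hinj u hu v hv (mod_of_dvd hq hβ this))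
      · have hc : IsCoprime ((q : ℤ) ^ 2) (β * ((u : ℤ) - v)) :=
          ((hqp.irreducible.coprime_iff_not_dvd).2 hd).pow_left
        exact hc.dvd_of_dvd_mul_left hsub
    have k1 := key x y hx hy hxy h1 h2
    have k2 := key x z hx hz hxz h1 h3
    have k3 := dvd_sub k1 k2
    have hc : IsCoprime ((q : ℤ) ^ 2) r2 := ((hqp.irreducible.coprime_iff_not_dvd).2 hr2).pow_left
    have k4 : (q : ℤ) ^ 2 ∣ r2 * (β * ((y : ℤ) - z)) := dvdE k3 (by ring)
    exact hyz (hinj y hy z hz (mod_of_dvd hq hβ (hc.dvd_of_dvd_mul_left k4)))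

lemma sum_bound (X Y : ℕ) : (10 : ℝ) * ∑ q ∈ (Finset.Ioc 10 Y).filter Nat.Prime, ((X / q ^ 2 : ℕ) : ℝ) ≤ X := by
  by_cases hY : 10 ≤ Y
  · have h1 : ∑ q ∈ (Finset.Ioc 10 Y).filter Nat.Prime, ((X / q ^ 2 : ℕ) : ℝ)
        ≤ ∑ q ∈ Finset.Ioc 10 Y, (X : ℝ) * ((q : ℝ) ^ 2)⁻¹ := by
      refine (Finset.sum_le_sum_of_subset_of_nonneg (Finset.filter_subset _ _) (fun _ _ _ => by positivity)).trans ?_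
      apply Finset.sum_le_sum
      intro q _
      have := Nat.cast_div_le (m := X) (n := q ^ 2) (α := ℝ)
      rw [← div_eq_mul_inv]
      exact_mod_cast this
    rw [← Finset.mul_sum] at h1
    have h2 := sum_Ioc_inv_sq_le_sub (α := ℝ) (k := 10) (n := Y) (by norm_num) hY
    have h3 : (0 : ℝ) ≤ (Y : ℝ)⁻¹ := by positivity
    have h4 : ∑ i ∈ Finset.Ioc 10 Y, ((i : ℝ) ^ 2)⁻¹ ≤ 1 / 10 := by
      push_cast at h2; linarith
    have hX : (0 : ℝ) ≤ X := by positivity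
    have := mul_le_mul_of_nonneg_left h4 hX
    linarith
  · rw [Finset.Ioc_eq_empty (by omega)]; simp

lemma sieve_core (r2 r1 r0 α β : ℤ) (hr2 : 0 < r2) (hα : |r1| + |r0| < α) (hβ : 0 < β) :
    ∃ k : ℕ, ∀ q : ℕ, q.Prime → 10 < q → ¬ (q : ℤ) ∣ β → ¬ (q : ℤ) ∣ r2 → ¬ (q : ℤ) ∣ r0 →
      ¬ (q : ℤ) ∣ r1 ^ 2 - 4 * r2 * r0 →
      ¬ (q : ℤ) ^ 2 ∣ (α + β * k) * (r2 * (α + β * k) ^ 2 + r1 * (α + β * k) + r0) := by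
  classical
  set A := r2 + |r1| + |r0| with hA
  have hα0 : 0 < α := lt_of_le_of_lt (by positivity) hα
  have hA0 : 0 < A := by positivity
  have hCpos : 0 < A * (α + β) := by positivity
  obtain ⟨X, hX1, hX⟩ := pi_small (A * (α + β)).toNat (by omega)
  set Y := (A * (α + β)).toNat * X with hY
  by_contra hcon
  push Not at hcon
  let bad : ℕ → Finset ℕ := fun q =>
    if (q : ℤ) ∣ β ∨ (q : ℤ) ∣ r2 ∨ (q : ℤ) ∣ r1 ^ 2 - 4 * r2 * r0 then ∅ else
    ((Finset.range X).filter fun k : ℕ => (q : ℤ) ^ 2 ∣ α + β * k) ∪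
    ((Finset.range X).filter fun k : ℕ => (q : ℤ) ^ 2 ∣ r2 * (α + β * k) ^ 2 + r1 * (α + β * k) + r0)
  have hbad : ∀ q ∈ (Finset.Ioc 10 Y).filter Nat.Prime, (bad q).card ≤ 3 * (X / q ^ 2 + 1) := by
    intro q hq
    have hqp := (Finset.mem_filter.1 hq).2
    simp only [bad]
    split_ifs with h
    · simp
    · push Not at h
      refine (Finset.card_union_le _ _).trans ?_
      have := K1_card X q hqp α β h.1
      have := K2_card X q hqp α β r2 r1 r0 h.1 h.2.1 h.2.2
      omega
  have hcover : Finset.range X ⊆ ((Finset.Ioc 10 Y).filter Nat.Prime).biUnion bad := by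
    intro k hk
    have hkX : k < X := Finset.mem_range.1 hk
    obtain ⟨q, hqp, hq10, hqβ, hqr2, hqr0, hqD, hdvd⟩ := hcon k
    have hqi := Nat.prime_iff_prime_int.1 hqp
    set l := α + β * k with hl
    have hlα : α ≤ l := by have : 0 ≤ β * (k : ℤ) := by positivity
                           linarith
    have hl0 : 0 < l := by linarith
    have hor : (q : ℤ) ^ 2 ∣ l ∨ (q : ℤ) ^ 2 ∣ r2 * l ^ 2 + r1 * l + r0 := by
      by_cases hql : (q : ℤ) ∣ l
      · left
        have hnd : ¬ (q : ℤ) ∣ r2 * l ^ 2 + r1 * l + r0 := by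
          intro h
          apply hqr0
          have := dvd_sub h (hql.mul_left (r2 * l + r1))
          exact dvdE this (by ring)
        exact (((hqi.irreducible.coprime_iff_not_dvd).2 hnd).pow_left (m := 2)).dvd_of_dvd_mul_right hdvd
      · right
        exact (((hqi.irreducible.coprime_iff_not_dvd).2 hql).pow_left (m := 2)).dvd_of_dvd_mul_left hdvd
    have hlX : l ≤ (α + β) * X := by
      have h1 : (k : ℤ) ≤ X := by exact_mod_cast hkX.le
      have h2 : (1 : ℤ) ≤ X := by exact_mod_cast hX1
      have h3 : β * k ≤ β * X := mul_le_mul_of_nonneg_left h1 hβ.le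
      have h4 : α * 1 ≤ α * X := mul_le_mul_of_nonneg_left h2 hα0.le
      rw [add_mul]; linarith
    have hl1 : 1 ≤ l := hl0
    obtain ⟨hRpos, hRle⟩ := R_bounds r2 r1 r0 l hr2 hl1 (by linarith)
    have hlle : l ≤ A * l ^ 2 := by
      have : l ≤ l ^ 2 := by nlinarith
      have h1A : 1 ≤ A := hA0
      have : 1 * l ^ 2 ≤ A * l ^ 2 := mul_le_mul_of_nonneg_right h1A (by positivity)
      linarith
    have hq2 : (q : ℤ) ^ 2 ≤ A * l ^ 2 := by
      rcases hor with h | h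
      · exact (Int.le_of_dvd hl0 h).trans hlle
      · exact (Int.le_of_dvd hRpos h).trans hRle
    have hqY : q ≤ Y := by
      have hYc : (Y : ℤ) = A * (α + β) * X := by
        rw [hY]; push_cast; rw [Int.toNat_of_nonneg hCpos.le]
      have h1 : (q : ℤ) ^ 2 ≤ (A * l) ^ 2 := by
        have : 1 ≤ A := hA0
        have h2 : A * l ^ 2 ≤ A * (A * l ^ 2) := by
          have : 0 ≤ A * l ^ 2 := by positivity
          have h3 : 1 * (A * l ^ 2) ≤ A * (A * l ^ 2) := mul_le_mul_of_nonneg_right hA0 this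
          linarith
        calc _ ≤ A * l ^ 2 := hq2
          _ ≤ _ := by rw [mul_pow, sq A, mul_assoc]; exact h2
      have h2 : (q : ℤ) ≤ A * l := by
        exact le_of_sq_le_sq h1 (by positivity)
      have h3 : (q : ℤ) ≤ Y := by
        rw [hYc, mul_assoc]
        exact h2.trans (mul_le_mul_of_nonneg_left hlX hA0.le)
      exact_mod_cast h3
    rw [Finset.mem_biUnion]
    refine ⟨q, Finset.mem_filter.2 ⟨Finset.mem_Ioc.2 ⟨hq10, hqY⟩, hqp⟩, ?_⟩
    simp only [bad]
    rw [if_neg (by push Not; exact ⟨hqβ, hqr2, hqD⟩)]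
    rw [Finset.mem_union, Finset.mem_filter, Finset.mem_filter]
    rcases hor with h | h
    · left; exact ⟨hk, h⟩
    · right; exact ⟨hk, h⟩
  have hc1 := Finset.card_le_card hcover
  rw [Finset.card_range] at hc1
  have hc2 := hc1.trans (Finset.card_biUnion_le.trans (Finset.sum_le_sum hbad))
  have hc3 : ((Finset.Ioc 10 Y).filter Nat.Prime).card ≤ Nat.primeCounting Y := by
    rw [Nat.primeCounting, Nat.primeCounting', Nat.count_eq_card_filter_range]
    apply Finset.card_le_card
    intro q hq
    simp only [Finset.mem_filter, Finset.mem_Ioc, Finset.mem_range] at hq ⊢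
    exact ⟨Nat.lt_succ_of_le hq.1.2, hq.2⟩
  have hc4 := sum_bound X Y
  rw [← Finset.mul_sum, Finset.sum_add_distrib] at hc2
  simp only [Finset.sum_const, smul_eq_mul, mul_one] at hc2
  have hc2' : (X : ℝ) ≤ 3 * (∑ q ∈ (Finset.Ioc 10 Y).filter Nat.Prime, ((X / q ^ 2 : ℕ) : ℝ)
      + (((Finset.Ioc 10 Y).filter Nat.Prime).card : ℝ)) := by exact_mod_cast hc2
  have hc3' : (((Finset.Ioc 10 Y).filter Nat.Prime).card : ℝ) ≤ (Nat.primeCounting Y : ℝ) := by exact_mod_cast hc3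
  have hX' : 5 * (Nat.primeCounting Y : ℝ) ≤ X := by exact_mod_cast hX
  have hX1' : (1 : ℝ) ≤ X := by exact_mod_cast hX1
  linarith



lemma disc_map {R S : Type*} [CommRing R] [CommRing S] (φ : R →+* S) (f : BQ R) :
    (f.map φ).disc = φ f.disc := by
  have h256 : φ 256 = 256 := map_ofNat φ 256
  have h192 : φ 192 = 192 := map_ofNat φ 192
  have h128 : φ 128 = 128 := map_ofNat φ 128
  have h144 : φ 144 = 144 := map_ofNat φ 144
  have h27 : φ 27 = 27 := map_ofNat φ 27
  have h18 : φ 18 = 18 := map_ofNat φ 18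
  have h80 : φ 80 = 80 := map_ofNat φ 80
  have h16 : φ 16 = 16 := map_ofNat φ 16
  have h6 : φ 6 = 6 := map_ofNat φ 6
  have h4 : φ 4 = 4 := map_ofNat φ 4
  simp only [BQ.disc, BQ.map, map_add, map_sub, map_mul, map_pow, h256, h192, h128, h144, h27, h18, h80, h16, h6, h4]

lemma disc_congr {R : Type*} [CommRing R] (m : R) (f g : BQ R) (ha : m ∣ f.a - g.a)
    (hb : m ∣ f.b - g.b) (hc : m ∣ f.c - g.c) (hd : m ∣ f.d - g.d) (he : m ∣ f.e - g.e) :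
    m ∣ f.disc - g.disc := by
  have key : ∀ x y : R, m ∣ x - y ↔ Ideal.Quotient.mk (Ideal.span {m}) x = Ideal.Quotient.mk (Ideal.span {m}) y := by
    intro x y
    rw [Ideal.Quotient.eq, Ideal.mem_span_singleton]
  rw [key] at *
  rw [← disc_map, ← disc_map]
  simp [BQ.map, ha, hb, hc, hd, he]

lemma crt_prime (q : ℕ) (hq : q.Prime) (M : ℤ) (hM : ¬ (q : ℤ) ∣ M) (z : ℤ) : ∃ k : ℤ, (q : ℤ) ∣ M * k - z := by
  have hc : IsCoprime ((q : ℤ)) M :=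
    (((Nat.prime_iff_prime_int.1 hq).irreducible.coprime_iff_not_dvd).2 hM)
  obtain ⟨u, v, huv⟩ := hc
  refine ⟨v * z, ⟨-u * z, ?_⟩⟩
  linear_combination z * huv

lemma crt (N : ℕ) (hN : N ≠ 0) (S : Finset ℕ) (hS : ∀ q ∈ S, q.Prime ∧ ¬ q ∣ N) (x0 : ℤ) (y : ℕ → ℤ)
    (L : ℤ) : ∃ x : ℤ, L ≤ x ∧ (N : ℤ) ∣ x - x0 ∧ ∀ q ∈ S, (q : ℤ) ∣ x - y q := by
  classical
  have main : ∃ x : ℤ, (N : ℤ) ∣ x - x0 ∧ ∀ q ∈ S, (q : ℤ) ∣ x - y q := by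
    induction S using Finset.induction_on with
    | empty => exact ⟨x0, by simp⟩
    | insert q S hq ih =>
      obtain ⟨x, h1, h2⟩ := ih (fun r hr => hS r (Finset.mem_insert_of_mem hr))
      have hqp := (hS q (Finset.mem_insert_self _ _))
      set M : ℕ := N * ∏ r ∈ S, r with hM
      have hqM : ¬ (q : ℤ) ∣ (M : ℤ) := by
        rw [Int.natCast_dvd_natCast, hM, hqp.1.dvd_mul]
        rintro (h | h)
        · exact hqp.2 h
        · obtain ⟨r, hr, hqr⟩ := (hqp.1.prime.dvd_finsetProd_iff _).1 h
          have := (Nat.prime_dvd_prime_iff_eq hqp.1 (hS r (Finset.mem_insert_of_mem hr)).1).1 hqr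
          exact hq (this ▸ hr)
      obtain ⟨k, hk⟩ := crt_prime q hqp.1 M hqM (y q - x)
      refine ⟨x + M * k, ?_, ?_⟩
      · have : (N : ℤ) ∣ (M : ℤ) * k := by rw [hM]; push_cast; rw [mul_assoc]; exact dvd_mul_right _ _
        exact dvdE (dvd_add h1 this) (by ring)
      · intro r hr
        rcases Finset.mem_insert.1 hr with rfl | hr
        · exact dvdE hk (by ring)
        · have : (r : ℤ) ∣ (M : ℤ) * k := by
            rw [hM]; push_cast
            exact ((Finset.dvd_prod_of_mem (fun i : ℕ => (i : ℤ)) hr).mul_left _).mul_right _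
          exact dvdE (dvd_add (h2 r hr) this) (by ring)
  obtain ⟨x, h1, h2⟩ := main
  set M : ℕ := N * ∏ r ∈ S, r with hM
  have hM0 : M ≠ 0 := mul_ne_zero hN (Finset.prod_ne_zero_iff.2 fun r hr => (hS r hr).1.ne_zero)
  refine ⟨x + M * (|x| + |L|), ?_, ?_, ?_⟩
  · have : (1 : ℤ) ≤ M := by exact_mod_cast Nat.one_le_iff_ne_zero.2 hM0
    have h3 : 1 * (|x| + |L|) ≤ M * (|x| + |L|) := mul_le_mul_of_nonneg_right this (by positivity)
    have := neg_abs_le x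
    have := le_abs_self L
    linarith
  · have : (N : ℤ) ∣ (M : ℤ) * (|x| + |L|) := by rw [hM]; push_cast; rw [mul_assoc]; exact dvd_mul_right _ _
    exact dvdE (dvd_add h1 this) (by ring)
  · intro r hr
    have : (r : ℤ) ∣ (M : ℤ) * (|x| + |L|) := by
      rw [hM]; push_cast
      exact ((Finset.dvd_prod_of_mem (fun i : ℕ => (i : ℤ)) hr).mul_left _).mul_right _
    exact dvdE (dvd_add (h2 r hr) this) (by ring)

def cC (c d e : ℤ) : ℤ := 8 * c * e - 3 * d ^ 2
def cB (b c d e : ℤ) : ℤ := 8 * b * e ^ 2 - 4 * c * e * d + d ^ 3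
def cH (a b c d e : ℤ) : ℤ := 256 * a * e ^ 3 - 64 * b * e ^ 2 * d + 16 * c * e * d ^ 2 - 3 * d ^ 4

lemma family_disc (a b c d e s : ℤ) :
    65536 * e ^ 6 * (BQ.disc ⟨a + s * d ^ 4, b + 16 * s * d ^ 3 * e, c + 96 * s * d ^ 2 * e ^ 2,
      d + 256 * s * d * e ^ 3, e + 256 * s * e ^ 4⟩ : ℤ) =
    (1 + 256 * e ^ 3 * s) * (cH a b c d e ^ 3 * (1 + 256 * e ^ 3 * s) ^ 2 +
      (-2 * cH a b c d e ^ 2 * cC c d e ^ 2 + 72 * cH a b c d e * cB b c d e ^ 2 * cC c d e - 432 * cB b c d e ^ 4)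
        * (1 + 256 * e ^ 3 * s) +
      (cH a b c d e * cC c d e ^ 4 - 8 * cB b c d e ^ 2 * cC c d e ^ 3)) := by
  simp only [BQ.disc, cC, cB, cH]
  ring

lemma discR (H B C : ℤ) : (-2 * H ^ 2 * C ^ 2 + 72 * H * B ^ 2 * C - 432 * B ^ 4) ^ 2
    - 4 * H ^ 3 * (H * C ^ 4 - 8 * B ^ 2 * C ^ 3) = 256 * B ^ 2 * (9 * B ^ 2 - H * C) ^ 3 := by
  ring

lemma exists_nonroot (q : ℕ) (hq : q.Prime) (h2 : q ≠ 2) (h3 : q ≠ 3) (r2 r1 r0 : ℤ)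
    (h : ¬ ((q : ℤ) ∣ r2 ∧ (q : ℤ) ∣ r1)) :
    ∃ l : ℤ, ¬ (q : ℤ) ∣ l * (r2 * l ^ 2 + r1 * l + r0) := by
  have hqi := Nat.prime_iff_prime_int.1 hq
  have n2 : ¬ (q : ℤ) ∣ 2 := by
    intro h; have : q ∣ 2 := by exact_mod_cast h
    exact h2 ((Nat.prime_dvd_prime_iff_eq hq Nat.prime_two).1 this)
  have n3 : ¬ (q : ℤ) ∣ 3 := by
    intro h; have : q ∣ 3 := by exact_mod_cast h
    exact h3 ((Nat.prime_dvd_prime_iff_eq hq Nat.prime_three).1 this)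
  by_contra hc
  push Not at hc
  have a1 := hc 1
  have a2 := hc (-1)
  have a3 := hc 2
  have a3' := (hqi.dvd_or_dvd a3).resolve_left n2
  have b1 : (q : ℤ) ∣ 2 * r1 := dvdE (dvd_add a1 a2) (by ring)
  have b1' := (hqi.dvd_or_dvd b1).resolve_left n2
  have b2 : (q : ℤ) ∣ 3 * r2 := dvdE (dvd_sub (dvd_sub a3' a1) b1') (by ring)
  exact h ⟨(hqi.dvd_or_dvd b2).resolve_left n3, b1'⟩

lemma not_dvd_of_prime {q : ℕ} (hq : q.Prime) {N : ℕ} (hN : 210 ∣ N) (hqN : ¬ q ∣ N) : 10 < q := by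
  by_contra h
  have hq10 : q ≤ 10 := by omega
  have h210 : ¬ q ∣ 210 := fun h => hqN (h.trans hN)
  interval_cases q <;> revert hq h210 <;> decide

theorem sieve_exists (N : ℕ) (hN0 : N ≠ 0) (hN : 210 ∣ N) (f0 : BQ ℤ) :
    ∃ f : BQ ℤ, ((N : ℤ) ∣ f.a - f0.a ∧ (N : ℤ) ∣ f.b - f0.b ∧ (N : ℤ) ∣ f.c - f0.c ∧
      (N : ℤ) ∣ f.d - f0.d ∧ (N : ℤ) ∣ f.e - f0.e) ∧
      ∀ q : ℕ, q.Prime → ¬ q ∣ N → ¬ (q : ℤ) ^ 2 ∣ f.disc := by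
  classical
  obtain ⟨e, he1, heN, -⟩ := crt N hN0 ∅ (by simp) f0.e 0 1
  lift e to ℕ using (by omega)
  have he0 : e ≠ 0 := by rintro rfl; simp at he1
  set Se := e.primeFactors.filter (fun q => ¬ q ∣ N) with hSe
  have hSe' : ∀ q ∈ Se, q.Prime ∧ ¬ q ∣ N := by
    intro q hq
    rw [hSe, Finset.mem_filter] at hq
    exact ⟨Nat.prime_of_mem_primeFactors hq.1, hq.2⟩
  obtain ⟨a0, -, haN, haS⟩ := crt N hN0 Se hSe' f0.a (fun _ => 0) 0
  obtain ⟨b0, -, hbN, hbS⟩ := crt N hN0 Se hSe' f0.b (fun _ => 1) 0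
  obtain ⟨c0, -, hcN, hcS⟩ := crt N hN0 Se hSe' f0.c (fun _ => 0) 0
  obtain ⟨d, -, hdN, hdS⟩ := crt N hN0 Se hSe' f0.d (fun _ => 1) 0
  set N1 := N * e with hN1
  have hN10 : N1 ≠ 0 := mul_ne_zero hN0 he0
  have he1' : (1 : ℤ) ≤ e := he1
  -- choose c
  obtain ⟨c, hcL, hcN1, -⟩ := crt N1 hN10 ∅ (by simp) c0 0 (3 * d ^ 2 + 1)
  have hC0 : cC c d e ≠ 0 := by
    unfold cC
    have : 0 ≤ d ^ 2 := by positivity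
    have : c * 1 ≤ c * e := mul_le_mul_of_nonneg_left he1' (by linarith)
    apply ne_of_gt
    nlinarith
  set K1 : ℤ := 4 * c * e * d - d ^ 3 with hK1
  obtain ⟨b, hbL, hbN1, -⟩ := crt N1 hN10 ∅ (by simp) b0 0 (|K1| + 1)
  have hB0 : cB b c d e ≠ 0 := by
    unfold cB
    have h1 : (1 : ℤ) ≤ (e : ℤ) ^ 2 := one_le_pow₀ he1'
    have h0 := abs_nonneg K1
    have h2 : b * 1 ≤ b * (e : ℤ) ^ 2 := mul_le_mul_of_nonneg_left h1 (by linarith)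
    have := le_abs_self K1
    apply ne_of_gt
    have e1 : 8 * b * (e : ℤ) ^ 2 - 4 * c * e * d + d ^ 3 = 8 * (b * (e : ℤ) ^ 2) - K1 := by rw [hK1]; ring
    rw [e1]; linarith
  set C0 := cC c d e with hC0d
  set B0 := cB b c d e with hB0d
  set K2 : ℤ := 64 * b * e ^ 2 * d - 16 * c * e * d ^ 2 + 3 * d ^ 4 with hK2
  -- choose a
  have hN1e : ∀ q : ℕ, q.Prime → ¬ q ∣ N1 → ¬ (q : ℤ) ∣ 256 * (e : ℤ) ^ 3 := by
    intro q hq hqN1 hd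
    have hqi := Nat.prime_iff_prime_int.1 hq
    have hqN : ¬ q ∣ N := fun h => hqN1 (h.mul_right _)
    rcases hqi.dvd_or_dvd hd with h | h
    · have h' : q ∣ 2 ^ 8 := by norm_num; exact_mod_cast h
      have := (Nat.prime_dvd_prime_iff_eq hq Nat.prime_two).1 (hq.dvd_of_dvd_pow h')
      have := not_dvd_of_prime hq hN hqN
      omega
    · have h' := hqi.dvd_of_dvd_pow h
      have h'' : q ∣ e := by exact_mod_cast h'
      exact hqN1 (h''.mul_left _)
  have hy : ∀ q : ℕ, ∃ y : ℤ, q.Prime → ¬ q ∣ N1 → (q : ℤ) ∣ 256 * (e : ℤ) ^ 3 * y - (K2 + 1) := by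
    intro q
    by_cases hq : q.Prime ∧ ¬ q ∣ N1
    · obtain ⟨k, hk⟩ := crt_prime q hq.1 (256 * (e : ℤ) ^ 3) (hN1e q hq.1 hq.2) (K2 + 1)
      exact ⟨k, fun _ _ => hk⟩
    · exact ⟨0, fun h1 h2 => absurd ⟨h1, h2⟩ hq⟩
  choose y hy using hy
  obtain ⟨a, haL, haN1, haS1⟩ := crt N1 hN10 (B0.natAbs.primeFactors.filter (fun q => ¬ q ∣ N1))
    (by intro q hq; rw [Finset.mem_filter] at hq
        exact ⟨Nat.prime_of_mem_primeFactors hq.1, hq.2⟩) a0 y (9 * B0 ^ 2 + |K2| + 1)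
  set H := cH a b c d e with hH
  have hHe : H = 256 * (e : ℤ) ^ 3 * a - K2 := by rw [hH, hK2]; unfold cH; ring
  have hHL : 9 * B0 ^ 2 < H := by
    rw [hHe]
    have h1 : (1 : ℤ) ≤ (e : ℤ) ^ 3 := one_le_pow₀ he1'
    have h0 := abs_nonneg K2
    have h00 := sq_nonneg B0
    have h2 : 1 * a ≤ (e : ℤ) ^ 3 * a := mul_le_mul_of_nonneg_right h1 (by linarith)
    have := le_abs_self K2
    linarith
  have hH0 : 0 < H := lt_of_le_of_lt (by positivity) hHL
  have hHB : ∀ q : ℕ, q.Prime → ¬ q ∣ N1 → (q : ℤ) ∣ B0 → ¬ (q : ℤ) ∣ H := by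
    intro q hq hqN1 hqB hqH
    have h1 := haS1 q (by
      rw [Finset.mem_filter]
      exact ⟨Nat.mem_primeFactors.2 ⟨hq, Int.natCast_dvd.1 hqB, by simpa using hB0⟩, hqN1⟩)
    have h2 := hy q hq hqN1
    rw [hHe] at hqH
    have h3 : (q : ℤ) ∣ 1 := dvdE (dvd_sub (dvd_sub hqH (h1.mul_left (256 * (e : ℤ) ^ 3))) h2) (by ring)
    have : q ∣ 1 := by exact_mod_cast h3
    exact hq.one_lt.ne' (Nat.dvd_one.1 this)
  -- the polynomial
  set r1 := -2 * H ^ 2 * C0 ^ 2 + 72 * H * B0 ^ 2 * C0 - 432 * B0 ^ 4 with hr1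
  set r0 := H * C0 ^ 4 - 8 * B0 ^ 2 * C0 ^ 3 with hr0
  set D := r1 ^ 2 - 4 * H ^ 3 * r0 with hD
  have hHC : ∀ κ : ℤ, 0 ≤ κ → κ ≤ 9 → H * C0 - κ * B0 ^ 2 ≠ 0 := by
    intro κ hκ0 hκ9
    have h00 := sq_nonneg B0
    have hκ : κ * B0 ^ 2 ≤ 9 * B0 ^ 2 := mul_le_mul_of_nonneg_right hκ9 h00
    have hκ' : 0 ≤ κ * B0 ^ 2 := by positivity
    rcases lt_or_gt_of_ne hC0 with h | h
    · have : H * C0 < 0 := mul_neg_of_pos_of_neg hH0 h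
      linarith
    · have : H * 1 ≤ H * C0 := mul_le_mul_of_nonneg_left h hH0.le
      linarith
  have hr00 : r0 ≠ 0 := by
    have : r0 = C0 ^ 3 * (H * C0 - 8 * B0 ^ 2) := by rw [hr0]; ring
    rw [this]
    exact mul_ne_zero (pow_ne_zero _ hC0) (hHC 8 (by norm_num) (by norm_num))
  have hD0 : D ≠ 0 := by
    rw [hD, hr1, hr0, discR]
    have := hHC 9 (by norm_num) le_rfl
    refine mul_ne_zero (mul_ne_zero (by norm_num) (pow_ne_zero _ hB0)) (pow_ne_zero _ ?_)
    intro h; apply this; linarith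
  set W := H ^ 3 * r0 * D with hW
  have hW0 : W ≠ 0 := mul_ne_zero (mul_ne_zero (pow_ne_zero _ hH0.ne') hr00) hD0
  set M : ℤ := 256 * (e : ℤ) ^ 3 * N1 with hM
  have hM1 : 1 ≤ M := by
    have h1 : (1 : ℤ) ≤ (e : ℤ) ^ 3 := one_le_pow₀ he1'
    have h2 : (1 : ℤ) ≤ N1 := by exact_mod_cast Nat.one_le_iff_ne_zero.2 hN10
    have : 0 < M := by positivity
    linarith
  have hqM : ∀ q : ℕ, q.Prime → ¬ q ∣ N1 → ¬ (q : ℤ) ∣ M := by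
    intro q hq hqN1 h
    rcases (Nat.prime_iff_prime_int.1 hq).dvd_or_dvd h with h | h
    · exact hN1e q hq hqN1 h
    · exact hqN1 (by exact_mod_cast h)
  have hz : ∀ q : ℕ, ∃ z : ℤ, q.Prime → ¬ q ∣ N1 →
      ¬ (q : ℤ) ∣ (1 + M * z) * (H ^ 3 * (1 + M * z) ^ 2 + r1 * (1 + M * z) + r0) := by
    intro q
    by_cases hq : q.Prime ∧ ¬ q ∣ N1
    · have hqN : ¬ q ∣ N := fun h => hq.2 (h.mul_right _)
      have h10 := not_dvd_of_prime hq.1 hN hqN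
      have hqi := Nat.prime_iff_prime_int.1 hq.1
      obtain ⟨l, hl⟩ := exists_nonroot q hq.1 (by omega) (by omega) (H ^ 3) r1 r0 (by
        rintro ⟨h1, h2⟩
        have h1' := hqi.dvd_of_dvd_pow h1
        have h3 : (q : ℤ) ∣ 432 * B0 ^ 4 :=
          dvdE (dvd_sub (h1'.mul_right (-2 * H * C0 ^ 2 + 72 * B0 ^ 2 * C0)) h2) (by rw [hr1]; ring)
        rcases hqi.dvd_or_dvd h3 with h4 | h4
        · have h5 : q ∣ 2 ^ 4 * 3 ^ 3 := by norm_num; exact_mod_cast h4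
          rcases (hq.1.dvd_mul).1 h5 with h6 | h6
          · have := (Nat.prime_dvd_prime_iff_eq hq.1 Nat.prime_two).1 (hq.1.dvd_of_dvd_pow h6)
            omega
          · have := (Nat.prime_dvd_prime_iff_eq hq.1 Nat.prime_three).1 (hq.1.dvd_of_dvd_pow h6)
            omega
        · exact hHB q hq.1 hq.2 (hqi.dvd_of_dvd_pow h4) h1')
      obtain ⟨z, hz⟩ := crt_prime q hq.1 M (hqM q hq.1 hq.2) (l - 1)
      refine ⟨z, fun _ _ h => hl ?_⟩
      obtain ⟨w, hw⟩ := hz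
      have : 1 + M * z = l + q * w := by linarith
      rw [this] at h
      refine dvdE (dvd_sub h (dvd_mul_right (q : ℤ) (w * (H ^ 3 * (l + q * w) ^ 2 + r1 * (l + q * w) + r0)
        + l * (H ^ 3 * (2 * l * w + q * w ^ 2) + r1 * w)))) ?_
      ring
    · exact ⟨0, fun h1 h2 => absurd ⟨h1, h2⟩ hq⟩
  choose z hz using hz
  set S := W.natAbs.primeFactors.filter (fun q => ¬ q ∣ N1) with hS
  have hSp : ∀ q ∈ S, q.Prime ∧ ¬ q ∣ N1 := by
    intro q hq; rw [hS, Finset.mem_filter] at hq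
    exact ⟨Nat.prime_of_mem_primeFactors hq.1, hq.2⟩
  obtain ⟨t1, ht1L, -, ht1S⟩ := crt 1 one_ne_zero S (fun q hq => ⟨(hSp q hq).1, by
    intro h; exact (hSp q hq).1.one_lt.ne' (Nat.dvd_one.1 h)⟩) 0 z (|r1| + |r0|)
  set m : ℕ := ∏ q ∈ S, q with hm
  have hm0 : 0 < m := Finset.prod_pos fun q hq => (hSp q hq).1.pos
  obtain ⟨k, hk⟩ := sieve_core (H ^ 3) r1 r0 (1 + M * t1) (M * m) (by positivity) (by
      have h0 : 0 ≤ t1 := le_trans (by positivity) ht1L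
      have : 1 * t1 ≤ M * t1 := mul_le_mul_of_nonneg_right hM1 h0
      linarith) (by positivity)
  set t : ℤ := t1 + m * k with ht
  have hlam : 1 + M * t1 + M * m * k = 1 + 256 * (e : ℤ) ^ 3 * (N1 * t) := by rw [hM, ht]; ring
  refine ⟨⟨a + (N1 * t) * d ^ 4, b + 16 * (N1 * t) * d ^ 3 * e, c + 96 * (N1 * t) * d ^ 2 * e ^ 2,
      d + 256 * (N1 * t) * d * e ^ 3, e + 256 * (N1 * t) * e ^ 4⟩, ?_, ?_⟩
  · have hNN1 : (N : ℤ) ∣ N1 := by rw [hN1]; push_cast; exact dvd_mul_right _ _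
    have hh : ∀ x, (N : ℤ) ∣ N1 * x := fun x => hNN1.mul_right x
    refine ⟨?_, ?_, ?_, ?_, ?_⟩
    · exact dvdE (dvd_add (dvd_add (hNN1.trans haN1) haN) (hh (t * d ^ 4))) (by ring)
    · exact dvdE (dvd_add (dvd_add (hNN1.trans hbN1) hbN) (hh (t * 16 * d ^ 3 * e))) (by ring)
    · exact dvdE (dvd_add (dvd_add (hNN1.trans hcN1) hcN) (hh (t * 96 * d ^ 2 * e ^ 2))) (by ring)
    · exact dvdE (dvd_add hdN (hh (t * 256 * d * e ^ 3))) (by ring)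
    · exact dvdE (dvd_add heN (hh (t * 256 * e ^ 4))) (by ring)
  · intro q hq hqN hdvd
    have hq10 := not_dvd_of_prime hq hN hqN
    have hqi := Nat.prime_iff_prime_int.1 hq
    by_cases hqe : q ∣ e
    · have hqS : q ∈ Se := by
        rw [hSe, Finset.mem_filter]; exact ⟨Nat.mem_primeFactors.2 ⟨hq, hqe, he0⟩, hqN⟩
      have hqN1 : (q : ℤ) ∣ N1 := by rw [hN1]; exact_mod_cast hqe.mul_left N
      have hqe' : (q : ℤ) ∣ e := by exact_mod_cast hqe
      have hh : ∀ x, (q : ℤ) ∣ N1 * x := fun x => hqN1.mul_right x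
      have := disc_congr (q : ℤ) ⟨a + (N1 * t) * d ^ 4, b + 16 * (N1 * t) * d ^ 3 * e, c + 96 * (N1 * t) * d ^ 2 * e ^ 2,
        d + 256 * (N1 * t) * d * e ^ 3, e + 256 * (N1 * t) * e ^ 4⟩ ⟨0, 1, 0, 1, 0⟩
        (dvdE (dvd_add (dvd_add (hqN1.trans haN1) (haS q hqS)) (hh (t * d ^ 4))) (by ring))
        (dvdE (dvd_add (dvd_add (hqN1.trans hbN1) (hbS q hqS)) (hh (t * 16 * d ^ 3 * e))) (by ring))
        (dvdE (dvd_add (dvd_add (hqN1.trans hcN1) (hcS q hqS)) (hh (t * 96 * d ^ 2 * e ^ 2))) (by ring))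
        (dvdE (dvd_add (hdS q hqS) (hh (t * 256 * d * e ^ 3))) (by ring))
        (dvdE (dvd_add hqe' (hh (t * 256 * e ^ 4))) (by ring))
      have h4 := dvd_sub ((dvd_pow_self _ two_ne_zero).trans hdvd) this
      have h5 : (q : ℤ) ∣ 4 := by
        rw [sub_sub_cancel] at h4
        simp [BQ.disc] at h4
        exact h4
      have h6 : q ∣ 4 := by exact_mod_cast h5
      have := Nat.le_of_dvd (by norm_num) h6
      omega
    · have hqN1 : ¬ q ∣ N1 := by
        rw [hN1, hq.dvd_mul]; push Not; exact ⟨hqN, hqe⟩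
      have hd2 := hdvd.mul_left (65536 * (e : ℤ) ^ 6)
      rw [family_disc, ← hlam] at hd2
      by_cases hqS : q ∈ S
      · apply hz q hq hqN1
        have h1 := ht1S q hqS
        have h2 : (q : ℤ) ∣ (m : ℤ) := by
          rw [hm]; exact_mod_cast Finset.dvd_prod_of_mem (fun i : ℕ => i) hqS
        obtain ⟨w1, hw1⟩ := h1
        obtain ⟨w2, hw2⟩ := h2
        have h3 := (dvd_pow_self (q : ℤ) two_ne_zero).trans hd2
        have e1 : (1 + M * t1 + M * m * k : ℤ) = (1 + M * z q) + q * (M * w1 + M * w2 * k) := by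
          have : t1 = z q + q * w1 := by linarith
          rw [this, hw2]; ring
        rw [e1] at h3
        generalize (1 + M * z q) = l at h3 ⊢
        generalize (M * w1 + M * w2 * k) = w at h3
        refine dvdE (dvd_sub h3 (dvd_mul_right (q : ℤ) (w * (H ^ 3 * (l + q * w) ^ 2 + r1 * (l + q * w) + r0)
          + l * (H ^ 3 * (2 * l * w + q * w ^ 2) + r1 * w)))) ?_
        ring
      · have hqW : ¬ (q : ℤ) ∣ W := by
          intro h
          apply hqS
          rw [hS, Finset.mem_filter]
          exact ⟨Nat.mem_primeFactors.2 ⟨hq, Int.natCast_dvd.1 h, by simpa using hW0⟩, hqN1⟩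
        refine hk q hq hq10 ?_ ?_ ?_ ?_ hd2
        · intro h
          rcases hqi.dvd_or_dvd h with h | h
          · exact hqM q hq hqN1 h
          · have h' : q ∣ m := by exact_mod_cast h
            obtain ⟨r, hr, hqr⟩ := (hq.prime.dvd_finsetProd_iff _).1 h'
            have := (Nat.prime_dvd_prime_iff_eq hq (hSp r hr).1).1 hqr
            exact hqS (this ▸ hr)
        · intro h; exact hqW ((h.mul_right _).mul_right _)
        · intro h; exact hqW ((h.mul_left _).mul_right _)
        · intro h; exact hqW (h.mul_left _)



section B1
variable {p : ℕ} [hp : Fact p.Prime]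

/-- form with leading coefficient a -/
def mkf {R : Type*} (a : R) (v : Fin 4 → R) : BQ R := ⟨a, v 0, v 1, v 2, v 3⟩

lemma meas_dvd (n : ℕ) (g : (Fin 4 → ℤ_[p]) → ℤ_[p]) (hg : Continuous g) :
    MeasurableSet {v | (p : ℤ_[p]) ^ n ∣ g v} := by
  have : {v | (p : ℤ_[p]) ^ n ∣ g v} = {v | ‖g v‖ ≤ (p : ℝ) ^ (-n : ℤ)} := by
    ext v
    simp only [Set.mem_setOf_eq]
    rw [PadicInt.norm_le_pow_iff_mem_span_pow, Ideal.mem_span_singleton]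
  rw [this]
  exact (isClosed_le (continuous_norm.comp hg) continuous_const).measurableSet

lemma cont_disc (a : ℤ_[p]) : Continuous (fun v : Fin 4 → ℤ_[p] => (mkf a v).disc) := by
  unfold mkf BQ.disc
  fun_prop

variable (μ : Measure (Fin 4 → ℤ_[p])) [IsProbabilityMeasure μ]

lemma shift_lemma (hinv : ∀ t : Fin 4 → ℤ_[p], μ.map (fun x => t + x) = μ)
    (A : Set (Fin 4 → ℤ_[p])) (hA : MeasurableSet A) {ι : Type*} (T : Finset ι)
    (t : ι → Fin 4 → ℤ_[p]) (n : ℕ)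
    (h : ∀ v, ∀ B ⊆ T, (∀ i ∈ B, t i + v ∈ A) → B.card ≤ n) : (T.card : ℝ) * μ.real A ≤ n := by
  classical
  have hm : ∀ i, Measurable (fun x : Fin 4 → ℤ_[p] => t i + x) := fun i => by fun_prop
  have h1 : ∀ i, μ A = ∫⁻ v, (if t i + v ∈ A then 1 else 0) ∂μ := by
    intro i
    conv_lhs => rw [← hinv (t i)]
    rw [Measure.map_apply (hm i) hA, ← lintegral_indicator_one ((hm i) hA)]
    rfl
  have h2 : (T.card : ENNReal) * μ A ≤ n := by
    calc (T.card : ENNReal) * μ A = ∑ i ∈ T, μ A := by simp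
      _ = ∑ i ∈ T, ∫⁻ v, (if t i + v ∈ A then 1 else 0) ∂μ := Finset.sum_congr rfl fun i _ => h1 i
      _ = ∫⁻ v, ∑ i ∈ T, (if t i + v ∈ A then 1 else 0) ∂μ := by
        rw [lintegral_finsetSum]
        intro i _
        exact Measurable.ite ((hm i) hA) measurable_const measurable_const
      _ ≤ ∫⁻ v, (n : ENNReal) ∂μ := by
        apply lintegral_mono
        intro v
        simp only [Finset.sum_boole]
        exact_mod_cast h v _ (Finset.filter_subset _ _) (by simp)
      _ = n := by simp
  have h3 := ENNReal.toReal_mono (by simp) h2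
  simpa [Measure.real] using h3

lemma four_of_card (B : Finset ℕ) (h : 3 < B.card) : ∃ f : Fin 4 → ℕ, Function.Injective f ∧ ∀ i, f i ∈ B := by
  obtain ⟨t, ht, hc⟩ := Finset.exists_subset_card_eq (show 4 ≤ B.card by omega)
  exact ⟨t.orderEmbOfFin hc, (t.orderEmbOfFin hc).injective, fun i => ht (t.orderEmbOfFin_mem hc i)⟩

lemma card_le_three (B : Finset ℕ) (h : ∀ i j k l, i ∈ B → j ∈ B → k ∈ B → l ∈ B → i ≠ j → i ≠ k → i ≠ l →
    j ≠ k → j ≠ l → k ≠ l → False) : B.card ≤ 3 := by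
  by_contra hc
  obtain ⟨f, hf, hB⟩ := four_of_card B (by omega)
  exact h (f 0) (f 1) (f 2) (f 3) (hB 0) (hB 1) (hB 2) (hB 3) (hf.ne (by decide)) (hf.ne (by decide))
    (hf.ne (by decide)) (hf.ne (by decide)) (hf.ne (by decide)) (hf.ne (by decide))

lemma shift2 (hinv : ∀ t : Fin 4 → ℤ_[p], μ.map (fun x => t + x) = μ)
    (A : Set (Fin 4 → ℤ_[p])) (hA : MeasurableSet A) (N M : ℕ)
    (s t : ℕ → Fin 4 → ℤ_[p]) (n m : ℕ)
    (h1 : ∀ v, ∀ B ⊆ Finset.range N, (∀ i ∈ B, ∃ j, s i + (t j + v) ∈ A) → B.card ≤ n)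
    (h2 : ∀ v, ∀ B ⊆ Finset.range M, (∀ j ∈ B, t j + v ∈ A) → B.card ≤ m) :
    ((N : ℝ) * M) * μ.real A ≤ n * m := by
  classical
  have := shift_lemma μ hinv A hA (Finset.range N ×ˢ Finset.range M) (fun x => s x.1 + t x.2) (n * m) ?_
  · simpa using this
  intro v B hB hBA
  have hc := Finset.card_le_mul_card_image (f := Prod.fst) B m ?_
  · refine hc.trans ?_
    rw [mul_comm n m]
    apply Nat.mul_le_mul_left
    apply h1 v
    · intro i hi
      obtain ⟨x, hx, rfl⟩ := Finset.mem_image.1 hi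
      exact (Finset.mem_product.1 (hB hx)).1
    · intro i hi
      obtain ⟨x, hx, rfl⟩ := Finset.mem_image.1 hi
      exact ⟨x.2, by rw [← add_assoc]; exact hBA x hx⟩
  · intro i hi
    have : (B.filter (fun x => x.1 = i)).card = ((B.filter (fun x => x.1 = i)).image Prod.snd).card := by
      rw [Finset.card_image_of_injOn]
      rintro ⟨x1, x2⟩ hx ⟨y1, y2⟩ hy hxy
      simp at hx hy hxy
      simp [hx.2, hy.2, hxy]
    rw [this]
    apply h2 (s i + v)
    · intro j hj
      obtain ⟨x, hx, rfl⟩ := Finset.mem_image.1 hj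
      exact (Finset.mem_product.1 (hB (Finset.mem_filter.1 hx).1)).2
    · intro j hj
      obtain ⟨x, hx, rfl⟩ := Finset.mem_image.1 hj
      obtain ⟨hx1, rfl⟩ := Finset.mem_filter.1 hx
      have := hBA x hx1
      rwa [show t x.2 + (s x.1 + v) = s x.1 + t x.2 + v by abel]

omit μ in
lemma pdvd_nat_sub (m i j : ℕ) (hi : i < p ^ m) (hj : j < p ^ m)
    (h : (p : ℤ_[p]) ^ m ∣ (i : ℤ_[p]) - j) : i = j := by
  have h1 : ((i : ℤ) - (j : ℤ) : ℤ_[p]) = ((i - j : ℤ) : ℤ_[p]) := by push_cast; ring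
  have h2 : (p : ℤ_[p]) ^ m ∣ (((i : ℤ) - j : ℤ) : ℤ_[p]) := by
    push_cast; exact h
  rw [← Ideal.mem_span_singleton, ← PadicInt.norm_le_pow_iff_mem_span_pow,
    PadicInt.norm_int_le_pow_iff_dvd] at h2
  have h3 : ((i : ℤ) - j) = 0 := by
    apply Int.eq_zero_of_abs_lt_dvd h2
    push_cast
    rw [abs_lt]
    have : (i : ℤ) < p ^ m := by exact_mod_cast hi
    have : (j : ℤ) < p ^ m := by exact_mod_cast hj
    constructor <;> omega
  omega

omit μ in
lemma dvd_pow_of_not_dvd (x : ℤ_[p]) (m : ℕ) (h : ¬ (p : ℤ_[p]) ^ (m + 1) ∣ x) : x ∣ (p : ℤ_[p]) ^ m := by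
  have hx : x ≠ 0 := by rintro rfl; exact h (dvd_zero _)
  have hv : x.valuation ≤ m := by
    by_contra hc
    apply h
    rw [← Ideal.mem_span_singleton, PadicInt.mem_span_pow_iff_le_valuation x hx]
    omega
  rw [PadicInt.unitCoeff_spec hx]
  rw [Units.mul_left_dvd]
  exact pow_dvd_pow _ hv

omit μ in
/-- Lagrange interpolation -/
lemma lagrange4 {R : Type*} [CommRing R] [IsDomain R] (g0 g1 g2 g3 x0 x1 x2 x3 D q : R)
    (h01 : x0 - x1 ∣ D) (h02 : x0 - x2 ∣ D) (h03 : x0 - x3 ∣ D)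
    (h12 : x1 - x2 ∣ D) (h13 : x1 - x3 ∣ D) (h23 : x2 - x3 ∣ D) (hD : D ≠ 0)
    (e0 : q ∣ g0 + g1 * x0 + g2 * x0 ^ 2 + g3 * x0 ^ 3)
    (e1 : q ∣ g0 + g1 * x1 + g2 * x1 ^ 2 + g3 * x1 ^ 3)
    (e2 : q ∣ g0 + g1 * x2 + g2 * x2 ^ 2 + g3 * x2 ^ 3)
    (e3 : q ∣ g0 + g1 * x3 + g2 * x3 ^ 2 + g3 * x3 ^ 3) :
    q ∣ D ^ 3 * g3 ∧ q ∣ D ^ 3 * g2 := by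
  have a01 : q ∣ D * (g1 + g2 * (x0 + x1) + g3 * (x0 ^ 2 + x0 * x1 + x1 ^ 2)) := by
    obtain ⟨y, hy⟩ := h01
    exact dvdE ((e0.sub e1).mul_left y) (by rw [hy]; ring)
  have a02 : q ∣ D * (g1 + g2 * (x0 + x2) + g3 * (x0 ^ 2 + x0 * x2 + x2 ^ 2)) := by
    obtain ⟨y, hy⟩ := h02
    exact dvdE ((e0.sub e2).mul_left y) (by rw [hy]; ring)
  have a03 : q ∣ D * (g1 + g2 * (x0 + x3) + g3 * (x0 ^ 2 + x0 * x3 + x3 ^ 2)) := by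
    obtain ⟨y, hy⟩ := h03
    exact dvdE ((e0.sub e3).mul_left y) (by rw [hy]; ring)
  have b2 : q ∣ D ^ 2 * (g2 + g3 * (x0 + x1 + x2)) := by
    obtain ⟨y, hy⟩ := h12
    refine dvdE ((a01.sub a02).mul_left y) ?_
    linear_combination (D * (g2 + g3 * (x0 + x1 + x2))) * hy
  have b3 : q ∣ D ^ 2 * (g2 + g3 * (x0 + x1 + x3)) := by
    obtain ⟨y, hy⟩ := h13
    refine dvdE ((a01.sub a03).mul_left y) ?_
    linear_combination (D * (g2 + g3 * (x0 + x1 + x3))) * hy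
  have c : q ∣ D ^ 3 * g3 := by
    obtain ⟨y, hy⟩ := h23
    refine dvdE ((b2.sub b3).mul_left y) ?_
    linear_combination (D ^ 2 * g3) * hy
  refine ⟨c, ?_⟩
  exact dvdE ((b2.mul_left D).sub (c.mul_left (x0 + x1 + x2))) (by ring)

omit μ in
/-- at most three residues mod p^(m+1) on which a cubic is highly divisible -/
lemma cubic_count (m n : ℕ) (g0 g1 g2 g3 y : ℤ_[p]) (κ : ℤ_[p]) (hκ : IsUnit κ)
    (hg : ¬ (p : ℤ_[p]) ^ n ∣ (p : ℤ_[p]) ^ (3 * m) * g3 ∨ ¬ (p : ℤ_[p]) ^ n ∣ (p : ℤ_[p]) ^ (3 * m) * g2)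
    (B : Finset ℕ) (hB : B ⊆ Finset.range (p ^ (m + 1)))
    (h : ∀ i ∈ B, (p : ℤ_[p]) ^ n ∣ g0 + g1 * (κ * i + y) + g2 * (κ * i + y) ^ 2 + g3 * (κ * i + y) ^ 3) : B.card ≤ 3 := by
  apply card_le_three
  intro i j k l hi hj hk hl hij hik hil hjk hjl hkl
  have key : ∀ i j : ℕ, i ∈ B → j ∈ B → i ≠ j → (κ * i + y) - (κ * j + y) ∣ (p : ℤ_[p]) ^ m := by
    intro i j hi hj hij
    apply dvd_pow_of_not_dvd
    intro hd
    have hd' : (p : ℤ_[p]) ^ (m + 1) ∣ κ * ((i : ℤ_[p]) - j) := dvdE hd (by ring)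
    rw [hκ.dvd_mul_left] at hd'
    exact hij (pdvd_nat_sub (m + 1) i j (Finset.mem_range.1 (hB hi)) (Finset.mem_range.1 (hB hj)) hd')
  have hD : (p : ℤ_[p]) ^ m ≠ 0 := pow_ne_zero _ (by exact_mod_cast hp.out.ne_zero)
  have := lagrange4 g0 g1 g2 g3 _ _ _ _ _ _ (key i j hi hj hij) (key i k hi hk hik) (key i l hi hl hil)
    (key j k hj hk hjk) (key j l hj hl hjl) (key k l hk hl hkl) hD (h i hi) (h j hj) (h k hk) (h l hl)
  rw [← pow_mul, mul_comm m 3] at this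
  rcases hg with hg | hg
  · exact hg this.1
  · exact hg this.2

end B1


section B2
variable {p : ℕ} [hp : Fact p.Prime]

def dg3 {R : Type*} [CommRing R] (a : R) : R := 256 * a ^ 3
def dg2 {R : Type*} [CommRing R] (a b c d : R) : R :=
  -192 * a ^ 2 * b * d - 128 * a ^ 2 * c ^ 2 + 144 * a * b ^ 2 * c - 27 * b ^ 4
def dg1 {R : Type*} [CommRing R] (a b c d : R) : R :=
  144 * a ^ 2 * c * d ^ 2 - 6 * a * b ^ 2 * d ^ 2 - 80 * a * b * c ^ 2 * d + 16 * a * c ^ 4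
    + 18 * b ^ 3 * c * d - 4 * b ^ 2 * c ^ 3
def dg0 {R : Type*} [CommRing R] (a b c d : R) : R :=
  -27 * a ^ 2 * d ^ 4 + 18 * a * b * c * d ^ 3 - 4 * a * c ^ 3 * d ^ 2 - 4 * b ^ 3 * d ^ 3 + b ^ 2 * c ^ 2 * d ^ 2

lemma disc_cubic {R : Type*} [CommRing R] (a b c d e : R) :
    (⟨a, b, c, d, e⟩ : BQ R).disc = dg0 a b c d + dg1 a b c d * e + dg2 a b c d * e ^ 2 + dg3 a * e ^ 3 := by
  simp only [BQ.disc, dg0, dg1, dg2, dg3]; ring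

lemma mkf_shift3 {R : Type*} [CommRing R] (a x : R) (v : Fin 4 → R) :
    mkf a (![0, 0, 0, x] + v) = ⟨a, v 0, v 1, v 2, x + v 3⟩ := by
  simp [mkf]

lemma p_ne_zero' : (p : ℤ_[p]) ≠ 0 := by exact_mod_cast hp.out.ne_zero

lemma p_prime' : Prime (p : ℤ_[p]) := PadicInt.prime_p

lemma exists_not_dvd (x : ℤ_[p]) (hx : x ≠ 0) : ∃ n : ℕ, ¬ (p : ℤ_[p]) ^ n ∣ x := by
  refine ⟨x.valuation + 1, ?_⟩
  rw [← Ideal.mem_span_singleton, PadicInt.mem_span_pow_iff_le_valuation x hx]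
  omega

variable (μ : Measure (Fin 4 → ℤ_[p])) [IsProbabilityMeasure μ]
  (hinv : ∀ t : Fin 4 → ℤ_[p], μ.map (fun x => t + x) = μ)

include hinv in
lemma disc_ne_zero_ae (a : ℤ_[p]) (ha : a ≠ 0) : ∀ᵐ v ∂μ, (mkf a v).disc ≠ 0 := by
  have hA : MeasurableSet {v : Fin 4 → ℤ_[p] | (mkf a v).disc = 0} :=
    (isClosed_eq (cont_disc a) continuous_const).measurableSet
  have key : ∀ m : ℕ, ((p ^ (m + 1) : ℕ) : ℝ) * μ.real {v : Fin 4 → ℤ_[p] | (mkf a v).disc = 0} ≤ 3 := by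
    intro m
    have h256 : (256 : ℤ_[p]) ≠ 0 := by norm_num
    obtain ⟨n, hn⟩ := exists_not_dvd ((p : ℤ_[p]) ^ (3 * m) * dg3 a)
      (mul_ne_zero (pow_ne_zero _ p_ne_zero') (mul_ne_zero h256 (pow_ne_zero _ ha)))
    have := shift_lemma μ hinv _ hA (Finset.range (p ^ (m + 1))) (fun i => ![0, 0, 0, (i : ℤ_[p])]) 3 ?_
    · simpa using this
    intro v B hB hBA
    refine cubic_count m n (dg0 a (v 0) (v 1) (v 2)) (dg1 a (v 0) (v 1) (v 2)) (dg2 a (v 0) (v 1) (v 2))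
      (dg3 a) (v 3) 1 isUnit_one (Or.inl hn) B hB ?_
    intro i hi
    have h := hBA i hi
    change (mkf a _).disc = 0 at h
    rw [mkf_shift3, disc_cubic] at h
    rw [one_mul, h]
    exact dvd_zero _
  rw [ae_iff]
  simp only [not_not]
  have h0 : μ.real {v : Fin 4 → ℤ_[p] | (mkf a v).disc = 0} = 0 := by
    by_contra hne
    have hpos : 0 < μ.real {v : Fin 4 → ℤ_[p] | (mkf a v).disc = 0} := lt_of_le_of_ne measureReal_nonneg (Ne.symm hne)
    obtain ⟨n, hn⟩ := exists_nat_gt (3 / μ.real {v : Fin 4 → ℤ_[p] | (mkf a v).disc = 0})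
    have h1 := key n
    rw [div_lt_iff₀ hpos] at hn
    have h2 : (n : ℝ) ≤ ((p ^ (n + 1) : ℕ) : ℝ) := by
      exact_mod_cast (Nat.le_succ n).trans (Nat.lt_pow_self hp.out.one_lt).le
    nlinarith
  rwa [measureReal_eq_zero_iff] at h0

omit μ in
lemma not_dvd_natCast (hp5 : 5 ≤ p) (k : ℕ) (hk : k ≠ 0) (hk2 : ∀ q, q.Prime → q ∣ k → q < 5) : ¬ (p : ℤ_[p]) ∣ (k : ℤ_[p]) := by
  intro h
  have h' : (p : ℤ_[p]) ^ 1 ∣ ((k : ℤ) : ℤ_[p]) := by simpa using h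
  rw [← Ideal.mem_span_singleton, ← PadicInt.norm_le_pow_iff_mem_span_pow,
    PadicInt.norm_int_le_pow_iff_dvd] at h'
  have h2 : p ∣ k := by exact_mod_cast (by simpa using h' : (p : ℤ) ∣ k)
  have := hk2 p hp.out h2
  omega

omit μ in
lemma unit_of_not_dvd (x : ℤ_[p]) (h : ¬ (p : ℤ_[p]) ∣ x) : IsUnit x := by
  have := dvd_pow_of_not_dvd x 0 (by simpa using h)
  simpa using isUnit_of_dvd_one (by simpa using this)

omit μ in
lemma not_dvd_of_unit (x : ℤ_[p]) (h : IsUnit x) : ¬ (p : ℤ_[p]) ∣ x := fun hd =>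
  p_prime'.not_unit (isUnit_of_dvd_unit hd h)

omit μ in
lemma unit_nat (hp5 : 5 ≤ p) (i j : ℕ) : IsUnit ((2 : ℤ_[p]) ^ i * 3 ^ j) := by
  apply unit_of_not_dvd
  have := not_dvd_natCast (p := p) hp5 (2 ^ i * 3 ^ j) (by positivity) ?_
  · push_cast at this; exact this
  intro q hq hd
  rcases (hq.dvd_mul).1 hd with h | h
  · have := Nat.le_of_dvd (by norm_num) (hq.dvd_of_dvd_pow h); omega
  · have := Nat.le_of_dvd (by norm_num) (hq.dvd_of_dvd_pow h); omega

omit μ in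
/-- valuation estimate for d2 -/
lemma coef_val (hp5 : 5 ≤ p) (m : ℕ) (a b c d : ℤ_[p]) (hb : ¬ (p : ℤ_[p]) ^ (m + 1) ∣ b) :
    ¬ (p : ℤ_[p]) ^ (9 * m + 1) ∣ (p : ℤ_[p]) ^ (3 * m) * dg3 a ∨
    ¬ (p : ℤ_[p]) ^ (9 * m + 1) ∣ (p : ℤ_[p]) ^ (3 * m) * dg2 a b c d := by
  have hpp : Prime (p : ℤ_[p]) := p_prime'
  have e : ∀ x : ℤ_[p], (p : ℤ_[p]) ^ (9 * m + 1) ∣ (p : ℤ_[p]) ^ (3 * m) * x ↔ (p : ℤ_[p]) ^ (6 * m + 1) ∣ x := by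
    intro x
    rw [show 9 * m + 1 = 3 * m + (6 * m + 1) by ring, pow_add]
    exact mul_dvd_mul_iff_left (pow_ne_zero _ p_ne_zero')
  rw [e, e]
  by_cases ha : (p : ℤ_[p]) ^ (2 * m + 1) ∣ a
  · right
    intro h
    have hb' := dvd_pow_of_not_dvd b m hb
    have hb0 : b ≠ 0 := by rintro rfl; exact hb (dvd_zero _)
    -- a = b^2 p a'
    have h2 : b ^ 2 * p ∣ a := by
      refine dvd_trans ?_ ha
      rw [pow_add, pow_one, mul_comm 2 m, pow_mul]
      exact mul_dvd_mul_right (pow_dvd_pow_of_dvd hb' 2) _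
    obtain ⟨x, rfl⟩ := h2
    have h3 : b ^ 4 * p ∣ (p : ℤ_[p]) ^ (6 * m + 1) := by
      rw [pow_add, pow_one]
      refine mul_dvd_mul_right ?_ _
      refine (pow_dvd_pow_of_dvd hb' 4).trans ?_
      rw [← pow_mul]
      exact pow_dvd_pow _ (by omega)
    have h4 : b ^ 4 * p ∣ b ^ 4 * 27 := by
      have h5 := h3.trans h
      have h6 : b ^ 4 * p ∣ -192 * (b ^ 2 * p * x) ^ 2 * b * d - 128 * (b ^ 2 * p * x) ^ 2 * c ^ 2
          + 144 * (b ^ 2 * p * x) * b ^ 2 * c :=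
        ⟨-192 * p * x ^ 2 * b * d - 128 * p * x ^ 2 * c ^ 2 + 144 * x * c, by ring⟩
      exact dvdE (h6.sub h5) (by simp only [dg2]; ring)
    have h5 := (mul_dvd_mul_iff_left (pow_ne_zero 4 hb0)).1 h4
    refine not_dvd_of_unit _ (unit_nat (p := p) hp5 0 3) (dvdE h5 (by norm_num))
  · left
    intro h
    have ha' := dvd_pow_of_not_dvd a (2 * m) ha
    have h1 : (p : ℤ_[p]) ^ (6 * m + 1) ∣ (p : ℤ_[p]) ^ (6 * m) := by
      have h256 : IsUnit (256 : ℤ_[p]) := by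
        have := unit_nat (p := p) hp5 8 0
        norm_num at this
        exact this
      have h2 : (p : ℤ_[p]) ^ (6 * m + 1) ∣ a ^ 3 := (h256.dvd_mul_left).1 h
      refine h2.trans ?_
      have := pow_dvd_pow_of_dvd ha' 3
      rwa [← pow_mul, show 2 * m * 3 = 6 * m by ring] at this
    rw [pow_dvd_pow_iff p_ne_zero' hpp.not_unit] at h1
    omega

/-- probability of high divisibility -/
def pr (a : ℤ_[p]) (n : ℕ) : ℝ := μ.real {v | (p : ℤ_[p]) ^ n ∣ (mkf a v).disc}

include hinv in
lemma pr_le (hp5 : 5 ≤ p) (a : ℤ_[p]) (m n : ℕ) (hn : 9 * m + 1 ≤ n) : pr μ a n ≤ 4 / (p : ℝ) ^ (m + 1) := by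
  have hc0 : Continuous (fun v : Fin 4 → ℤ_[p] => v 0) := continuous_apply 0
  have mA1 := meas_dvd (p := p) (m + 1) (fun v => v 0) hc0
  have mA := (meas_dvd (p := p) n _ (cont_disc a))
  have hpos : (0 : ℝ) < (p : ℝ) ^ (m + 1) := pow_pos (by exact_mod_cast hp.out.pos) _
  have h1 : μ.real {v | (p : ℤ_[p]) ^ (m + 1) ∣ v 0} ≤ 1 / (p : ℝ) ^ (m + 1) := by
    have := shift_lemma μ hinv _ mA1 (Finset.range (p ^ (m + 1))) (fun i => ![(i : ℤ_[p]), 0, 0, 0]) 1 ?_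
    · rw [le_div_iff₀ hpos, mul_comm]
      simpa using this
    intro v B hB hBA
    apply Finset.card_le_one.2
    intro i hi j hj
    have hi1 := hBA i hi
    have hj1 := hBA j hj
    simp only [Set.mem_setOf_eq, Pi.add_apply, Matrix.cons_val_zero] at hi1 hj1
    exact pdvd_nat_sub (m + 1) i j (Finset.mem_range.1 (hB hi)) (Finset.mem_range.1 (hB hj))
      (dvdE (hi1.sub hj1) (by ring))
  have h2 : μ.real ({v | (p : ℤ_[p]) ^ n ∣ (mkf a v).disc} \ {v | (p : ℤ_[p]) ^ (m + 1) ∣ v 0}) ≤ 3 / (p : ℝ) ^ (m + 1) := by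
    have := shift_lemma μ hinv _ (mA.diff mA1) (Finset.range (p ^ (m + 1))) (fun i => ![0, 0, 0, (i : ℤ_[p])]) 3 ?_
    · rw [le_div_iff₀ hpos, mul_comm]
      simpa using this
    intro v B hB hBA
    rcases B.eq_empty_or_nonempty with rfl | ⟨i0, hi0⟩
    · simp
    have hb := (hBA i0 hi0).2
    simp only [Set.mem_setOf_eq, Pi.add_apply, Matrix.cons_val_zero, zero_add] at hb
    refine cubic_count m (9 * m + 1) (dg0 a (v 0) (v 1) (v 2)) (dg1 a (v 0) (v 1) (v 2)) (dg2 a (v 0) (v 1) (v 2))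
      (dg3 a) (v 3) 1 isUnit_one (coef_val hp5 m _ _ _ _ hb) B hB ?_
    intro i hi
    have h := (hBA i hi).1
    change _ ∣ (mkf a _).disc at h
    rw [mkf_shift3, disc_cubic] at h
    rw [one_mul]
    exact (pow_dvd_pow _ hn).trans h
  calc pr μ a n ≤ μ.real ({v | (p : ℤ_[p]) ^ (m + 1) ∣ v 0} ∪
        ({v | (p : ℤ_[p]) ^ n ∣ (mkf a v).disc} \ {v | (p : ℤ_[p]) ^ (m + 1) ∣ v 0})) :=
        measureReal_mono (by intro v hv; by_cases h : v ∈ {v : Fin 4 → ℤ_[p] | (p : ℤ_[p]) ^ (m + 1) ∣ v 0}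
                             · exact Or.inl h
                             · exact Or.inr ⟨hv, h⟩)
    _ ≤ _ := measureReal_union_le _ _
    _ ≤ 1 / (p : ℝ) ^ (m + 1) + 3 / (p : ℝ) ^ (m + 1) := add_le_add h1 h2
    _ = _ := by ring

end B2


section B3
variable {p : ℕ} [hp : Fact p.Prime]

def dgE {R : Type*} [CommRing R] (a b c d e : R) : R := dg1 a b c d + 2 * dg2 a b c d * e + 3 * dg3 a * e ^ 2

def rC {R : Type*} [CommRing R] (a b c : R) : R := 2 * (8 * a * c - 3 * b ^ 2)
def rD {R : Type*} [CommRing R] (a b c d : R) : R := 8 * (8 * a ^ 2 * d - 4 * a * b * c + b ^ 3)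
def rE {R : Type*} [CommRing R] (a b c d e : R) : R := 256 * a ^ 3 * e - 64 * a ^ 2 * b * d + 16 * a * b ^ 2 * c - 3 * b ^ 4

lemma red_disc {R : Type*} [CommRing R] (a b c d e : R) :
    256 * rE a b c d e ^ 3 - 128 * rC a b c ^ 2 * rE a b c d e ^ 2 + 144 * rC a b c * rD a b c d ^ 2 * rE a b c d e
    - 27 * rD a b c d ^ 4 + 16 * rC a b c ^ 4 * rE a b c d e - 4 * rC a b c ^ 3 * rD a b c d ^ 2
    = 4 ^ 12 * a ^ 6 * (⟨a, b, c, d, e⟩ : BQ R).disc := by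
  simp only [rC, rD, rE, BQ.disc]; ring

lemma red_discE {R : Type*} [CommRing R] (a b c d e : R) :
    256 * a ^ 3 * (768 * rE a b c d e ^ 2 - 256 * rC a b c ^ 2 * rE a b c d e + 144 * rC a b c * rD a b c d ^ 2
    + 16 * rC a b c ^ 4)
    = 4 ^ 12 * a ^ 6 * dgE a b c d e := by
  simp only [rC, rD, rE, dgE, dg1, dg2, dg3]; ring

lemma res_field {K : Type*} [Field K] (h2 : (2 : K) ≠ 0) (h3 : (3 : K) ≠ 0) (a b c d e : K) (ha : a ≠ 0)
    (h : (⟨a, b, c, d, e⟩ : BQ K).disc = 0) (h' : dgE a b c d e = 0) :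
    rD a b c d * (8 * rC a b c ^ 3 + 27 * rD a b c d ^ 2) = 0 := by
  have e1 := red_disc a b c d e
  have e2 := red_discE a b c d e
  rw [h, mul_zero] at e1
  rw [h', mul_zero] at e2
  have h256 : (256 : K) ≠ 0 := by
    have := pow_ne_zero 8 h2; norm_num at this; exact this
  have e3 := (mul_eq_zero.1 e2).resolve_left (mul_ne_zero h256 (pow_ne_zero _ ha))
  generalize rC a b c = C at *
  generalize rD a b c d = D at *
  generalize rE a b c d e = E at *
  have h2304 : (2304 : K) ≠ 0 := by
    have := mul_ne_zero (pow_ne_zero 8 h2) (pow_ne_zero 2 h3); norm_num at this; exact this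
  have hL : 2 * (32 * C * (27 * D ^ 2 - C ^ 3) * E + (8 * C ^ 6 + 36 * C ^ 3 * D ^ 2 - 243 * D ^ 4)) = 0 := by
    linear_combination 18 * e1 + (C ^ 2 - 6 * E) * e3
  have hL' := (mul_eq_zero.1 hL).resolve_left h2
  have : 2304 * (D ^ 2 * (8 * C ^ 3 + 27 * D ^ 2) ^ 3) = 0 := by
    linear_combination (32 * C * (27 * D ^ 2 - C ^ 3)) ^ 2 * e3
      - (768 * ((32 * C * (27 * D ^ 2 - C ^ 3) * E + (8 * C ^ 6 + 36 * C ^ 3 * D ^ 2 - 243 * D ^ 4))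
        - 2 * (8 * C ^ 6 + 36 * C ^ 3 * D ^ 2 - 243 * D ^ 4)) - 256 * C ^ 2 * (32 * C * (27 * D ^ 2 - C ^ 3))) * hL'
  have := (mul_eq_zero.1 this).resolve_left h2304
  rcases mul_eq_zero.1 this with h | h
  · rw [pow_eq_zero_iff (by norm_num)] at h; rw [h, zero_mul]
  · rw [pow_eq_zero_iff (by norm_num)] at h; rw [h, mul_zero]

lemma res_field0 {K : Type*} [Field K] (h2 : (2 : K) ≠ 0) (a b c d e : K) (ha : a = 0) (hb : b ≠ 0)
    (h : (⟨a, b, c, d, e⟩ : BQ K).disc = 0) (h' : dgE a b c d e = 0) :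
    c ^ 2 - 3 * b * d = 0 := by
  subst ha
  have h16 : (16 : K) ≠ 0 := by
    have := pow_ne_zero 4 h2; norm_num at this; exact this
  have : (16 * b ^ 4) * (c ^ 2 - 3 * b * d) ^ 3 = 0 := by
    simp only [BQ.disc, dgE, dg1, dg2, dg3] at h h'
    ring_nf at h h'
    linear_combination (18 * b ^ 3 * c * d - 4 * b ^ 2 * c ^ 3 - 54 * b ^ 4 * e) * h' + 108 * b ^ 4 * h
  have := (mul_eq_zero.1 this).resolve_left (mul_ne_zero h16 (pow_ne_zero _ hb))
  rwa [pow_eq_zero_iff (by norm_num)] at this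

lemma dvd_iff_toZMod (x : ℤ_[p]) : (p : ℤ_[p]) ∣ x ↔ PadicInt.toZMod x = 0 := by
  rw [← RingHom.mem_ker, PadicInt.ker_toZMod, PadicInt.maximalIdeal_eq_span_p, Ideal.mem_span_singleton]

lemma map_dgE {R S : Type*} [CommRing R] [CommRing S] (f : R →+* S) (a b c d e : R) :
    f (dgE a b c d e) = dgE (f a) (f b) (f c) (f d) (f e) := by
  simp only [dgE, dg1, dg2, dg3, map_add, map_sub, map_mul, map_pow, map_neg, map_ofNat f]

lemma zmod_ne (hp5 : 5 ≤ p) : (2 : ZMod p) ≠ 0 ∧ (3 : ZMod p) ≠ 0 := by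
  constructor
  · have := unit_nat (p := p) hp5 1 0
    have := not_dvd_of_unit _ this
    rw [dvd_iff_toZMod] at this
    simpa [map_ofNat] using this
  · have := unit_nat (p := p) hp5 0 1
    have := not_dvd_of_unit _ this
    rw [dvd_iff_toZMod] at this
    simpa [map_ofNat] using this

lemma res_padic (hp5 : 5 ≤ p) (a b c d e : ℤ_[p]) (ha : ¬ (p : ℤ_[p]) ∣ a)
    (h : (p : ℤ_[p]) ∣ (⟨a, b, c, d, e⟩ : BQ ℤ_[p]).disc) (h' : (p : ℤ_[p]) ∣ dgE a b c d e) :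
    (p : ℤ_[p]) ∣ rD a b c d * (8 * rC a b c ^ 3 + 27 * rD a b c d ^ 2) := by
  rw [dvd_iff_toZMod] at *
  rw [← disc_map] at h
  rw [map_dgE] at h'
  have := res_field (zmod_ne hp5).1 (zmod_ne hp5).2 _ _ _ _ _ ha h h'
  simp only [rC, rD] at this ⊢
  simp only [map_add, map_sub, map_mul, map_pow, map_neg, map_ofNat (PadicInt.toZMod (p := p))]
  exact this

lemma res_padic0 (hp5 : 5 ≤ p) (a b c d e : ℤ_[p]) (ha : (p : ℤ_[p]) ∣ a) (hb : ¬ (p : ℤ_[p]) ∣ b)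
    (h : (p : ℤ_[p]) ∣ (⟨a, b, c, d, e⟩ : BQ ℤ_[p]).disc) (h' : (p : ℤ_[p]) ∣ dgE a b c d e) :
    (p : ℤ_[p]) ∣ c ^ 2 - 3 * b * d := by
  rw [dvd_iff_toZMod] at *
  rw [← disc_map] at h
  rw [map_dgE] at h'
  have := res_field0 (zmod_ne hp5).1 _ _ _ _ _ ha hb h h'
  simp only [map_add, map_sub, map_mul, map_pow, map_neg, map_ofNat (PadicInt.toZMod (p := p))]
  exact this

lemma simple_count (g0 g1 g2 g3 y : ℤ_[p])
    (hg : ¬ (p : ℤ_[p]) ∣ g3 ∨ ¬ (p : ℤ_[p]) ∣ g2)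
    (B : Finset ℕ) (hB : B ⊆ Finset.range (p ^ 2))
    (h : ∀ i ∈ B, (p : ℤ_[p]) ^ 2 ∣ g0 + g1 * (i + y) + g2 * (i + y) ^ 2 + g3 * (i + y) ^ 3)
    (h' : ∀ i ∈ B, ¬ (p : ℤ_[p]) ∣ g1 + 2 * g2 * (i + y) + 3 * g3 * (i + y) ^ 2) : B.card ≤ 3 := by
  have hmod : ∀ i : ℕ, (p : ℤ_[p]) ∣ (i : ℤ_[p]) - ((i % p : ℕ) : ℤ_[p]) := by
    intro i
    refine ⟨((i / p : ℕ) : ℤ_[p]), ?_⟩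
    rw [sub_eq_iff_eq_add]
    exact_mod_cast (Nat.div_add_mod i p).symm
  have hinj : Set.InjOn (fun i => i % p) (B : Set ℕ) := by
    intro i hi j hj hij
    have hij' : i % p = j % p := hij
    have hd : (p : ℤ_[p]) ∣ (i : ℤ_[p]) - j := by
      have := (hmod i).sub (hmod j)
      rw [hij'] at this
      exact dvdE this (by ring)
    apply pdvd_nat_sub (p := p) 2 i j (Finset.mem_range.1 (hB hi)) (Finset.mem_range.1 (hB hj))
    have h1 : (p : ℤ_[p]) ^ 2 ∣ ((i : ℤ_[p]) - j) * ((g1 + 2 * g2 * (j + y) + 3 * g3 * (j + y) ^ 2)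
        + ((i : ℤ_[p]) - j) * (g2 + 3 * g3 * (j + y) + g3 * ((i : ℤ_[p]) - j))) :=
      dvdE ((h i hi).sub (h j hj)) (by ring)
    have hu : IsUnit ((g1 + 2 * g2 * (j + y) + 3 * g3 * (j + y) ^ 2)
        + ((i : ℤ_[p]) - j) * (g2 + 3 * g3 * (j + y) + g3 * ((i : ℤ_[p]) - j))) := by
      apply unit_of_not_dvd
      intro hc
      exact h' j hj ((dvd_add_left (hd.mul_right _)).1 hc)
    exact (hu.dvd_mul_right).1 h1
  rw [← Finset.card_image_of_injOn hinj]
  refine cubic_count 0 1 g0 g1 g2 g3 y 1 isUnit_one (by simpa using hg) _ ?_ ?_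
  · intro j hj
    obtain ⟨i, hi, rfl⟩ := Finset.mem_image.1 hj
    simpa using Nat.mod_lt i hp.out.pos
  · intro j hj
    obtain ⟨i, hi, rfl⟩ := Finset.mem_image.1 hj
    rw [one_mul, pow_one]
    have h1 := (dvd_pow_self (p : ℤ_[p]) (two_ne_zero)).trans (h i hi)
    have hd := hmod i
    generalize ((i % p : ℕ) : ℤ_[p]) = r at *
    obtain ⟨k, hk⟩ := hd
    have hk' : (i : ℤ_[p]) = r + p * k := by linear_combination hk
    rw [hk'] at h1
    refine (dvd_add_left (Dvd.intro (k * (g1 + g2 * (2 * (r + y) + p * k) +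
      g3 * (3 * (r + y) ^ 2 + 3 * (r + y) * (p * k) + (p * k) ^ 2))) rfl)).1 (dvdE h1 ?_)
    · ring

end B3


section B4
variable {p : ℕ} [hp : Fact p.Prime]

lemma mkf_shift2 {R : Type*} [CommRing R] (a x y : R) (v : Fin 4 → R) :
    mkf a (![0, 0, x, 0] + (![0, 0, 0, y] + v)) = ⟨a, v 0, v 1, x + v 2, y + v 3⟩ := by
  simp [mkf, -Matrix.cons_add, -Matrix.add_cons]

lemma cont_dgE (a : ℤ_[p]) : Continuous (fun v : Fin 4 → ℤ_[p] => dgE a (v 0) (v 1) (v 2) (v 3)) := by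
  unfold dgE dg1 dg2 dg3
  fun_prop

lemma meas_dvd1 (g : (Fin 4 → ℤ_[p]) → ℤ_[p]) (hg : Continuous g) :
    MeasurableSet {v | (p : ℤ_[p]) ∣ g v} := by
  simpa using meas_dvd (p := p) 1 g hg

lemma one_count (N : ℕ) (hN : N = p) (κ y : ℤ_[p]) (hκ : IsUnit κ) (B : Finset ℕ) (hB : B ⊆ Finset.range N)
    (h : ∀ i ∈ B, (p : ℤ_[p]) ∣ κ * i + y) : B.card ≤ 1 := by
  subst hN
  apply Finset.card_le_one.2
  intro i hi j hj
  apply pdvd_nat_sub (p := N) 1 i j (by simpa using hB hi) (by simpa using hB hj)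
  have := (h i hi).sub (h j hj)
  have h2 : (N : ℤ_[N]) ^ 1 ∣ κ * ((i : ℤ_[N]) - j) := dvdE (by simpa using this) (by ring)
  exact (hκ.dvd_mul_left).1 h2

variable (μ : Measure (Fin 4 → ℤ_[p])) [IsProbabilityMeasure μ]
  (hinv : ∀ t : Fin 4 → ℤ_[p], μ.map (fun x => t + x) = μ)

include hinv in
lemma prA1 (hp5 : 5 ≤ p) (a : ℤ_[p]) :
    ((p : ℝ) ^ 2) * μ.real {v | (p : ℤ_[p]) ^ 2 ∣ (mkf a v).disc ∧ ¬ (p : ℤ_[p]) ∣ dgE a (v 0) (v 1) (v 2) (v 3) ∧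
      ¬ ((p : ℤ_[p]) ∣ a ∧ (p : ℤ_[p]) ∣ v 0)} ≤ 3 := by
  have hA : MeasurableSet {v : Fin 4 → ℤ_[p] | (p : ℤ_[p]) ^ 2 ∣ (mkf a v).disc ∧ ¬ (p : ℤ_[p]) ∣ dgE a (v 0) (v 1) (v 2) (v 3) ∧
      ¬ ((p : ℤ_[p]) ∣ a ∧ (p : ℤ_[p]) ∣ v 0)} := by
    refine (meas_dvd 2 _ (cont_disc a)).inter ((meas_dvd1 _ (cont_dgE a)).compl.inter ?_)
    refine (MeasurableSet.inter (MeasurableSet.const _) (meas_dvd1 _ (continuous_apply 0))).compl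
  have := shift_lemma μ hinv _ hA (Finset.range (p ^ 2)) (fun i => ![0, 0, 0, (i : ℤ_[p])]) 3 ?_
  · simpa using this
  intro v B hB hBA
  rcases B.eq_empty_or_nonempty with rfl | ⟨i0, hi0⟩
  · simp
  have hb := (hBA i0 hi0).2.2
  simp only [Pi.add_apply, Matrix.cons_val_zero, zero_add] at hb
  refine simple_count (dg0 a (v 0) (v 1) (v 2)) (dg1 a (v 0) (v 1) (v 2)) (dg2 a (v 0) (v 1) (v 2))
      (dg3 a) (v 3) ?_ B hB ?_ ?_
  · by_cases h0 : (p : ℤ_[p]) ∣ v 0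
    · left
      have ha : ¬ (p : ℤ_[p]) ∣ a := fun h => hb ⟨h, h0⟩
      apply not_dvd_of_unit
      have h256 : IsUnit (256 : ℤ_[p]) := by
        have := unit_nat (p := p) hp5 8 0
        norm_num at this
        exact this
      exact h256.mul ((unit_of_not_dvd a ha).pow 3)
    · simpa using coef_val hp5 0 a (v 0) (v 1) (v 2) (by simpa using h0)
  · intro i hi
    have h := (hBA i hi).1
    rw [mkf_shift3, disc_cubic] at h
    exact h
  · intro i hi
    have h := (hBA i hi).2.1
    simpa [dgE] using h

include hinv in
lemma prA2a (hp5 : 5 ≤ p) (a : ℤ_[p]) (ha : ¬ (p : ℤ_[p]) ∣ a) :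
    ((p : ℝ) * p) * μ.real {v | (p : ℤ_[p]) ∣ (mkf a v).disc ∧ (p : ℤ_[p]) ∣ dgE a (v 0) (v 1) (v 2) (v 3)} ≤ 9 := by
  have hA : MeasurableSet {v : Fin 4 → ℤ_[p] | (p : ℤ_[p]) ∣ (mkf a v).disc ∧ (p : ℤ_[p]) ∣ dgE a (v 0) (v 1) (v 2) (v 3)} :=
    (meas_dvd1 _ (cont_disc a)).inter (meas_dvd1 _ (cont_dgE a))
  have hau := unit_of_not_dvd a ha
  have := shift2 μ hinv _ hA p p (fun i => ![0, 0, (i : ℤ_[p]), 0]) (fun i => ![0, 0, 0, (i : ℤ_[p])]) 3 3 ?_ ?_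
  · norm_num at this; exact this
  · intro v B hB hBA
    have hu := (unit_nat (p := p) hp5 6 0).mul (hau.pow 2)
    refine cubic_count 0 1 0 (8 * rC a (v 0) (v 1) ^ 3) 0 27 (rD a (v 0) (v 1) (v 2)) _ hu (Or.inl ?_) B (by simpa using hB) ?_
    · have := not_dvd_of_unit _ (unit_nat (p := p) hp5 0 3)
      norm_num at this
      simpa using this
    intro i hi
    obtain ⟨j, hj1, hj2⟩ := hBA i hi
    rw [mkf_shift2] at hj1
    have hj2' : (p : ℤ_[p]) ∣ dgE a (v 0) (v 1) (i + v 2) (j + v 3) := by simpa [-Matrix.cons_add, -Matrix.add_cons] using hj2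
    have := res_padic hp5 _ _ _ _ _ ha hj1 hj2'
    rw [pow_one]
    refine dvdE this ?_
    simp only [rD]
    ring
  · intro v B hB hBA
    have h256 : IsUnit (256 : ℤ_[p]) := by
      have := unit_nat (p := p) hp5 8 0
      norm_num at this
      exact this
    refine cubic_count 0 1 (dg0 a (v 0) (v 1) (v 2)) (dg1 a (v 0) (v 1) (v 2)) (dg2 a (v 0) (v 1) (v 2))
      (dg3 a) (v 3) 1 isUnit_one (Or.inl ?_) B (by simpa using hB) ?_
    · simpa [dg3] using not_dvd_of_unit _ (h256.mul (hau.pow 3))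
    intro i hi
    have h := (hBA i hi).1
    rw [mkf_shift3, disc_cubic] at h
    simpa using h

include hinv in
lemma prA2b (hp5 : 5 ≤ p) (a : ℤ_[p]) (ha : (p : ℤ_[p]) ∣ a) :
    ((p : ℝ) * p) * μ.real {v | (p : ℤ_[p]) ∣ (mkf a v).disc ∧ (p : ℤ_[p]) ∣ dgE a (v 0) (v 1) (v 2) (v 3) ∧ ¬ (p : ℤ_[p]) ∣ v 0} ≤ 3 := by
  have hA : MeasurableSet {v : Fin 4 → ℤ_[p] | (p : ℤ_[p]) ∣ (mkf a v).disc ∧ (p : ℤ_[p]) ∣ dgE a (v 0) (v 1) (v 2) (v 3) ∧ ¬ (p : ℤ_[p]) ∣ v 0} :=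
    (meas_dvd1 _ (cont_disc a)).inter ((meas_dvd1 _ (cont_dgE a)).inter (meas_dvd1 _ (continuous_apply 0)).compl)
  have := shift2 μ hinv _ hA p p (fun i => ![0, 0, (i : ℤ_[p]), 0]) (fun i => ![0, 0, 0, (i : ℤ_[p])]) 1 3 ?_ ?_
  · norm_num at this; exact this
  · intro v B hB hBA
    by_cases hb : (p : ℤ_[p]) ∣ v 0
    · have : B = ∅ := by
        rw [Finset.eq_empty_iff_forall_notMem]
        intro i hi
        obtain ⟨j, _, _, hj⟩ := hBA i hi
        exact hj (by simpa [-Matrix.cons_add, -Matrix.add_cons] using hb)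
      simp [this]
    have hu := (unit_nat (p := p) hp5 0 1).mul (unit_of_not_dvd _ hb)
    refine one_count p rfl _ (3 * v 0 * v 2 - v 1 ^ 2) hu B hB ?_
    intro i hi
    obtain ⟨j, hj1, hj2, hj3⟩ := hBA i hi
    rw [mkf_shift2] at hj1
    have hj2' : (p : ℤ_[p]) ∣ dgE a (v 0) (v 1) (i + v 2) (j + v 3) := by simpa [-Matrix.cons_add, -Matrix.add_cons] using hj2
    have := res_padic0 hp5 _ _ _ _ _ ha hb hj1 hj2'
    exact dvdE (this.neg_right) (by ring)
  · intro v B hB hBA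
    rcases B.eq_empty_or_nonempty with rfl | ⟨i0, hi0⟩
    · simp
    have hb := (hBA i0 hi0).2.2
    simp only [Pi.add_apply, Matrix.cons_val_zero, zero_add] at hb
    refine cubic_count 0 1 (dg0 a (v 0) (v 1) (v 2)) (dg1 a (v 0) (v 1) (v 2)) (dg2 a (v 0) (v 1) (v 2))
      (dg3 a) (v 3) 1 isUnit_one ?_ B (by simpa using hB) ?_
    · simpa using coef_val hp5 0 a (v 0) (v 1) (v 2) (by simpa using hb)
    intro i hi
    have h := (hBA i hi).1
    rw [mkf_shift3, disc_cubic] at h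
    simpa using h

include hinv in
lemma prA3a :
    ((p : ℝ) * p) * μ.real {v | (p : ℤ_[p]) ∣ v 0 ∧ (p : ℤ_[p]) ∣ v 1} ≤ 1 := by
  have hA : MeasurableSet {v : Fin 4 → ℤ_[p] | (p : ℤ_[p]) ∣ v 0 ∧ (p : ℤ_[p]) ∣ v 1} :=
    (meas_dvd1 _ (continuous_apply 0)).inter (meas_dvd1 _ (continuous_apply 1))
  have := shift2 μ hinv _ hA p p (fun i => ![(i : ℤ_[p]), 0, 0, 0]) (fun i => ![0, (i : ℤ_[p]), 0, 0]) 1 1 ?_ ?_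
  · norm_num at this; exact this
  · intro v B hB hBA
    refine one_count p rfl 1 (v 0) isUnit_one B hB ?_
    intro i hi
    obtain ⟨j, hj1, hj2⟩ := hBA i hi
    simpa [-Matrix.cons_add, -Matrix.add_cons] using hj1
  · intro v B hB hBA
    refine one_count p rfl 1 (v 1) isUnit_one B hB ?_
    intro i hi
    simpa using (hBA i hi).2

include hinv in
lemma prA3b (hp5 : 5 ≤ p) :
    ((p : ℝ) * p) * μ.real {v | (p : ℤ_[p]) ∣ v 0 ∧ ¬ (p : ℤ_[p]) ∣ v 1 ∧ (p : ℤ_[p]) ∣ 4 * v 1 * v 3 - v 2 ^ 2} ≤ 1 := by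
  have hA : MeasurableSet {v : Fin 4 → ℤ_[p] | (p : ℤ_[p]) ∣ v 0 ∧ ¬ (p : ℤ_[p]) ∣ v 1 ∧ (p : ℤ_[p]) ∣ 4 * v 1 * v 3 - v 2 ^ 2} :=
    (meas_dvd1 _ (continuous_apply 0)).inter ((meas_dvd1 _ (continuous_apply 1)).compl.inter
      (meas_dvd1 _ (by fun_prop)))
  have := shift2 μ hinv _ hA p p (fun i => ![(i : ℤ_[p]), 0, 0, 0]) (fun i => ![0, 0, 0, (i : ℤ_[p])]) 1 1 ?_ ?_
  · norm_num at this; exact this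
  · intro v B hB hBA
    refine one_count p rfl 1 (v 0) isUnit_one B hB ?_
    intro i hi
    obtain ⟨j, hj1, hj2⟩ := hBA i hi
    simpa [-Matrix.cons_add, -Matrix.add_cons] using hj1
  · intro v B hB hBA
    rcases B.eq_empty_or_nonempty with rfl | ⟨i0, hi0⟩
    · simp
    have hb := (hBA i0 hi0).2.1
    simp only [Pi.add_apply, Matrix.cons_val_one, Matrix.cons_val_zero, zero_add] at hb
    have hu := (unit_nat (p := p) hp5 2 0).mul (unit_of_not_dvd _ hb)
    refine one_count p rfl _ (4 * v 1 * v 3 - v 2 ^ 2) hu B hB ?_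
    intro i hi
    have h : (p : ℤ_[p]) ∣ 4 * v 1 * (i + v 3) - v 2 ^ 2 := by simpa using (hBA i hi).2.2
    exact dvdE h (by ring)

omit μ in
lemma disc_pp (hp5 : 5 ≤ p) (a b c d e : ℤ_[p]) (ha : (p : ℤ_[p]) ∣ a) (ha2 : ¬ (p : ℤ_[p]) ^ 2 ∣ a) (hb : (p : ℤ_[p]) ∣ b)
    (h : (p : ℤ_[p]) ^ 2 ∣ (⟨a, b, c, d, e⟩ : BQ ℤ_[p]).disc) : (p : ℤ_[p]) ∣ c ∨ (p : ℤ_[p]) ∣ 4 * c * e - d ^ 2 := by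
  obtain ⟨a', rfl⟩ := ha
  obtain ⟨b', rfl⟩ := hb
  have ha' : ¬ (p : ℤ_[p]) ∣ a' := by
    rintro ⟨x, rfl⟩
    exact ha2 ⟨x, by ring⟩
  have h1 : (p : ℤ_[p]) ^ 2 ∣ (p : ℤ_[p]) * (4 * a' * (c ^ 3 * (4 * c * e - d ^ 2))) := by
    have h2 : (p : ℤ_[p]) ^ 2 ∣ (⟨p * a', p * b', c, d, e⟩ : BQ ℤ_[p]).disc - (p : ℤ_[p]) * (4 * a' * (c ^ 3 * (4 * c * e - d ^ 2))) := by
      refine ⟨256 * p * a' ^ 3 * e ^ 3 - 192 * p * a' ^ 2 * b' * d * e ^ 2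
    - 128 * a' ^ 2 * c ^ 2 * e ^ 2 + 144 * a' ^ 2 * c * d ^ 2 * e
    - 27 * a' ^ 2 * d ^ 4 + 144 * p * a' * b' ^ 2 * c * e ^ 2
    - 6 * p * a' * b' ^ 2 * d ^ 2 * e - 80 * a' * b' * c ^ 2 * d * e
    + 18 * a' * b' * c * d ^ 3 - 27 * p ^ 2 * b' ^ 4 * e ^ 2
    + 18 * p * b' ^ 3 * c * d * e - 4 * p * b' ^ 3 * d ^ 3
    - 4 * b' ^ 2 * c ^ 3 * e + b' ^ 2 * c ^ 2 * d ^ 2, ?_⟩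
      simp only [BQ.disc]
      ring
    exact dvdE (h.sub h2) (by ring)
  rw [pow_two, mul_dvd_mul_iff_left p_ne_zero'] at h1
  have hu : IsUnit (4 * a') := by
    have := (unit_nat (p := p) hp5 2 0).mul (unit_of_not_dvd _ ha')
    norm_num at this
    simpa using this
  rw [hu.dvd_mul_left] at h1
  rcases p_prime'.dvd_or_dvd h1 with h | h
  · exact Or.inl (p_prime'.dvd_of_dvd_pow h)
  · exact Or.inr h

include hinv in
lemma pr_two (hp5 : 5 ≤ p) (a : ℤ_[p]) (ha2 : ¬ (p : ℤ_[p]) ^ 2 ∣ a) : pr μ a 2 ≤ 12 / (p : ℝ) ^ 2 := by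
  have hpos : (0 : ℝ) < (p : ℝ) ^ 2 := pow_pos (by exact_mod_cast hp.out.pos) _
  rw [le_div_iff₀ hpos, mul_comm]
  have h1 := prA1 μ hinv hp5 a
  unfold pr
  by_cases ha : (p : ℤ_[p]) ∣ a
  · have h2 := prA2b μ hinv hp5 a ha
    have h3 := prA3a μ hinv
    have h4 := prA3b μ hinv hp5
    rw [← pow_two] at h2 h3 h4
    set S1 := {v : Fin 4 → ℤ_[p] | (p : ℤ_[p]) ^ 2 ∣ (mkf a v).disc ∧ ¬ (p : ℤ_[p]) ∣ dgE a (v 0) (v 1) (v 2) (v 3) ∧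
      ¬ ((p : ℤ_[p]) ∣ a ∧ (p : ℤ_[p]) ∣ v 0)}
    set S2 := {v : Fin 4 → ℤ_[p] | (p : ℤ_[p]) ∣ (mkf a v).disc ∧ (p : ℤ_[p]) ∣ dgE a (v 0) (v 1) (v 2) (v 3) ∧ ¬ (p : ℤ_[p]) ∣ v 0}
    set S3 := {v : Fin 4 → ℤ_[p] | (p : ℤ_[p]) ∣ v 0 ∧ (p : ℤ_[p]) ∣ v 1}
    set S4 := {v : Fin 4 → ℤ_[p] | (p : ℤ_[p]) ∣ v 0 ∧ ¬ (p : ℤ_[p]) ∣ v 1 ∧ (p : ℤ_[p]) ∣ 4 * v 1 * v 3 - v 2 ^ 2}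
    have hsub : {v : Fin 4 → ℤ_[p] | (p : ℤ_[p]) ^ 2 ∣ (mkf a v).disc} ⊆ S1 ∪ (S2 ∪ (S3 ∪ S4)) := by
      intro v hv
      have hv1 : (p : ℤ_[p]) ∣ (mkf a v).disc := (dvd_pow_self _ two_ne_zero).trans hv
      by_cases hb : (p : ℤ_[p]) ∣ v 0
      · right; right
        by_cases hc : (p : ℤ_[p]) ∣ v 1
        · exact Or.inl ⟨hb, hc⟩
        · exact Or.inr ⟨hb, hc, (disc_pp hp5 _ _ _ _ _ ha ha2 hb hv).resolve_left hc⟩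
      · by_cases hE : (p : ℤ_[p]) ∣ dgE a (v 0) (v 1) (v 2) (v 3)
        · exact Or.inr (Or.inl ⟨hv1, hE, hb⟩)
        · exact Or.inl ⟨hv, hE, fun h => hb h.2⟩
    have m1 := measureReal_mono (μ := μ) hsub
    have m2 := measureReal_union_le (μ := μ) S1 (S2 ∪ (S3 ∪ S4))
    have m3 := measureReal_union_le (μ := μ) S2 (S3 ∪ S4)
    have m4 := measureReal_union_le (μ := μ) S3 S4
    have := mul_le_mul_of_nonneg_left (m1.trans (m2.trans (add_le_add_right (m3.trans (add_le_add_right m4 _)) _))) hpos.le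
    linarith
  · have h2 := prA2a μ hinv hp5 a ha
    rw [← pow_two] at h2
    set S1 := {v : Fin 4 → ℤ_[p] | (p : ℤ_[p]) ^ 2 ∣ (mkf a v).disc ∧ ¬ (p : ℤ_[p]) ∣ dgE a (v 0) (v 1) (v 2) (v 3) ∧
      ¬ ((p : ℤ_[p]) ∣ a ∧ (p : ℤ_[p]) ∣ v 0)}
    set S2 := {v : Fin 4 → ℤ_[p] | (p : ℤ_[p]) ∣ (mkf a v).disc ∧ (p : ℤ_[p]) ∣ dgE a (v 0) (v 1) (v 2) (v 3)}
    have hsub : {v : Fin 4 → ℤ_[p] | (p : ℤ_[p]) ^ 2 ∣ (mkf a v).disc} ⊆ S1 ∪ S2 := by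
      intro v hv
      have hv1 : (p : ℤ_[p]) ∣ (mkf a v).disc := (dvd_pow_self _ two_ne_zero).trans hv
      by_cases hE : (p : ℤ_[p]) ∣ dgE a (v 0) (v 1) (v 2) (v 3)
      · exact Or.inr ⟨hv1, hE⟩
      · exact Or.inl ⟨hv, hE, fun h => ha h.1⟩
    have m1 := measureReal_mono (μ := μ) hsub
    have m2 := measureReal_union_le (μ := μ) S1 S2
    have := mul_le_mul_of_nonneg_left (m1.trans m2) hpos.le
    linarith

end B4


section B5

def wk (k : ℕ) : ℝ := (1 / 2 : ℝ) ^ ((2 * k + 1) / 9)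

lemma wk_nonneg (k : ℕ) : 0 ≤ wk k := by unfold wk; positivity

lemma wk_summable : Summable wk := by
  have hg : Summable (fun k : ℕ => ((0.95 : ℝ) ^ 8)⁻¹ * (0.95 : ℝ) ^ k) :=
    (summable_geometric_of_lt_one (by norm_num) (by norm_num)).mul_left _
  refine Summable.of_nonneg_of_le wk_nonneg ?_ hg
  intro k
  unfold wk
  set q := (2 * k + 1) / 9 with hq
  have h1 : k ≤ 9 * q + 8 := by omega
  have h2 : (0.95 : ℝ) ^ (9 * q + 8) ≤ 0.95 ^ k := pow_le_pow_of_le_one (by norm_num) (by norm_num) h1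
  rw [pow_add, pow_mul] at h2
  have h3 : (1 / 2 : ℝ) ^ q ≤ ((0.95 : ℝ) ^ 9) ^ q := pow_le_pow_left₀ (by norm_num) (by norm_num) q
  rw [inv_mul_eq_div, le_div_iff₀ (by norm_num)]
  refine le_trans ?_ h2
  exact mul_le_mul_of_nonneg_right h3 (by norm_num)

variable {p : ℕ} [hp : Fact p.Prime]
variable (μ : Measure (Fin 4 → ℤ_[p])) [IsProbabilityMeasure μ]
  (hinv : ∀ t : Fin 4 → ℤ_[p], μ.map (fun x => t + x) = μ)

omit hinv in
lemma inv_pow_le (m : ℕ) : 1 / (p : ℝ) ^ m ≤ (1 / 2 : ℝ) ^ m := by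
  have h2 : (2 : ℝ) ≤ p := by exact_mod_cast hp.out.two_le
  rw [div_pow, one_pow]
  exact one_div_le_one_div_of_le (by positivity) (pow_le_pow_left₀ (by norm_num) h2 m)

include hinv in
lemma pr_bound1 (hp5 : 5 ≤ p) (a : ℤ_[p]) (k : ℕ) : pr μ a (2 * (k + 1)) ≤ 4 / p * wk k := by
  have hpos : (0 : ℝ) < p := by exact_mod_cast hp.out.pos
  refine (pr_le μ hinv hp5 a ((2 * k + 1) / 9) (2 * (k + 1)) (by omega)).trans ?_
  unfold wk
  have := inv_pow_le (p := p) ((2 * k + 1) / 9)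
  calc 4 / (p : ℝ) ^ ((2 * k + 1) / 9 + 1) = 4 / p * (1 / (p : ℝ) ^ ((2 * k + 1) / 9)) := by
        rw [pow_succ]; field_simp
    _ ≤ _ := mul_le_mul_of_nonneg_left this (by positivity)

include hinv in
lemma pr_bound2 (hp5 : 5 ≤ p) (a : ℤ_[p]) (ha2 : ¬ (p : ℤ_[p]) ^ 2 ∣ a) (k : ℕ) :
    pr μ a (2 * (k + 1)) ≤ 12 / (p : ℝ) ^ 2 * wk k := by
  have hpos : (0 : ℝ) < p := by exact_mod_cast hp.out.pos
  rcases Nat.eq_zero_or_pos ((2 * k + 1) / 9) with h0 | h0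
  · have : wk k = 1 := by unfold wk; rw [h0, pow_zero]
    rw [this, mul_one]
    refine le_trans ?_ (pr_two μ hinv hp5 a ha2)
    refine measureReal_mono ?_
    intro v hv
    exact (pow_dvd_pow _ (by omega)).trans hv
  · refine (pr_le μ hinv hp5 a ((2 * k + 1) / 9) (2 * (k + 1)) (by omega)).trans ?_
    unfold wk
    obtain ⟨q, hq⟩ : ∃ q, (2 * k + 1) / 9 = q + 1 := ⟨(2 * k + 1) / 9 - 1, by omega⟩
    rw [hq]
    have := inv_pow_le (p := p) q
    calc 4 / (p : ℝ) ^ (q + 1 + 1) = 4 / (p : ℝ) ^ 2 * (1 / (p : ℝ) ^ q) := by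
          rw [pow_succ, pow_succ]; field_simp
      _ ≤ 4 / (p : ℝ) ^ 2 * (1 / 2 : ℝ) ^ q := mul_le_mul_of_nonneg_left this (by positivity)
      _ ≤ _ := by
        rw [pow_succ (1 / 2 : ℝ) q]
        have : 0 ≤ (1 / 2 : ℝ) ^ q / (p : ℝ) ^ 2 := by positivity
        calc 4 / (p : ℝ) ^ 2 * (1 / 2 : ℝ) ^ q = 4 * ((1 / 2 : ℝ) ^ q / (p : ℝ) ^ 2) := by ring
          _ ≤ 6 * ((1 / 2 : ℝ) ^ q / (p : ℝ) ^ 2) := by linarith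
          _ = _ := by ring

omit μ hinv [IsProbabilityMeasure μ] in
lemma cont_psi (k : ℕ) (F : BQ ℤ_[p] → ℝ) (hF : ∀ f g, CongMod p (2 * k) f g → F f = F g) (a : ℤ_[p]) :
    Continuous (fun v : Fin 4 → ℤ_[p] => F (mkf a v)) := by
  apply IsLocallyConstant.continuous
  rw [IsLocallyConstant.iff_eventually_eq]
  intro v
  have hpos : (0 : ℝ) < (p : ℝ) ^ (-(2 * k : ℕ) : ℤ) := zpow_pos (by exact_mod_cast hp.out.pos) _
  filter_upwards [Metric.ball_mem_nhds v hpos] with w hw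
  have key : ∀ i, (p : ℤ_[p]) ^ (2 * k) ∣ w i - v i := by
    intro i
    rw [← Ideal.mem_span_singleton, ← PadicInt.norm_le_pow_iff_mem_span_pow]
    rw [mem_ball_iff_norm] at hw
    exact (norm_le_pi_norm (w - v) i).trans hw.le
  exact hF _ _ ⟨by simp [mkf], key 0, key 1, key 2, key 3⟩

include hinv in
lemma local_L1 (hp5 : 5 ≤ p) (φp : BQ ℤ_[p] → ℝ) (ψ : ℕ → BQ ℤ_[p] → ℝ) (hψ : ApproxSeries p φp ψ)
    (hs : SupportBound p ψ 0) (a : ℤ_[p]) (ha : a ≠ 0) (X : ℝ)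
    (hX : ∀ k, pr μ a (2 * (k + 1)) ≤ X * wk k) :
    |∫ v, φp (mkf a v) ∂μ - 1| ≤ X * ∑' k, wk k := by
  obtain ⟨h0, h1, h2, h3⟩ := hψ
  have hcont := fun k => cont_psi k (ψ k) (h3 k) a
  have hint : ∀ k, Integrable (fun v => ψ k (mkf a v)) μ := by
    intro k
    refine Integrable.of_bound (hcont k).aestronglyMeasurable 1 ?_
    exact Filter.Eventually.of_forall fun v => h1 k _
  have hb : ∀ k, ∫ v, ‖ψ (k + 1) (mkf a v)‖ ∂μ ≤ X * wk k := by
    intro k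
    refine le_trans ?_ (hX k)
    unfold pr
    rw [← integral_indicator_one (meas_dvd _ _ (cont_disc a))]
    refine integral_mono (hint _).norm ?_ ?_
    · exact (integrable_const (1 : ℝ)).indicator (meas_dvd _ _ (cont_disc a))
    · intro v
      by_cases hv : ψ (k + 1) (mkf a v) = 0
      · simp only [hv, norm_zero]
        exact Set.indicator_nonneg (fun _ _ => zero_le_one) _
      · have := hs (k + 1) _ hv
        rw [pow_zero, one_mul] at this
        rw [Set.indicator_of_mem (by exact this)]
        exact h1 _ _
  have hsumb : Summable (fun k => X * wk k) := wk_summable.mul_left X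
  have hsn : Summable (fun k => ∫ v, ‖ψ (k + 1) (mkf a v)‖ ∂μ) :=
    Summable.of_nonneg_of_le (fun k => integral_nonneg fun v => norm_nonneg _) hb hsumb
  have hs' : Summable (fun k => ∫ v, ‖ψ k (mkf a v)‖ ∂μ) := (summable_nat_add_iff 1).1 hsn
  have hH := hasSum_integral_of_summable_integral_norm hint hs'
  have hE : ∫ v, φp (mkf a v) ∂μ = ∫ v, ∑' k, ψ k (mkf a v) ∂μ := by
    apply integral_congr_ae
    filter_upwards [disc_ne_zero_ae μ hinv a ha] with v hv
    exact (h2 _ hv).2.tsum_eq.symm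
  rw [← hE] at hH
  have hz : ∫ v, ψ 0 (mkf a v) ∂μ = 1 := by simp [h0]
  rw [← hasSum_nat_add_iff' 1] at hH
  simp only [Finset.range_one, Finset.sum_singleton, hz] at hH
  rw [← hH.tsum_eq, ← tsum_mul_left, ← Real.norm_eq_abs]
  refine tsum_of_norm_bounded hsumb.hasSum ?_
  intro k
  exact (norm_integral_le_integral_norm _).trans (hb k)

omit hinv in
lemma local_L2 (φp : BQ ℤ_[p] → ℝ) (Bp : ℝ) (h : ∀ f, |φp f| ≤ Bp) (a : ℤ_[p]) :
    |∫ v, φp (mkf a v) ∂μ| ≤ Bp := by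
  have := norm_integral_le_of_norm_le_const (μ := μ) (f := fun v => φp (mkf a v)) (C := Bp)
    (Filter.Eventually.of_forall fun v => h _)
  simpa using this

end B5

lemma invI_subst {R : Type*} [CommRing R] (m : Mat2 R) (f : BQ R) : (f.subst m).invI = m.det ^ 4 * f.invI := by
  simp only [BQ.invI, BQ.subst, Mat2.det]; ring
set_option maxHeartbeats 4000000 in
lemma invJ_subst {R : Type*} [CommRing R] (m : Mat2 R) (f : BQ R) : (f.subst m).invJ = m.det ^ 6 * f.invJ := by
  simp only [BQ.invJ, BQ.subst, Mat2.det]; ring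
lemma disc_IJ {R : Type*} [CommRing R] (f : BQ R) : 27 * f.disc = 4 * f.invI ^ 3 - f.invJ ^ 2 := by
  simp only [BQ.invI, BQ.invJ, BQ.disc]; ring

lemma disc_subst_one {R : Type*} [CommRing R] [IsDomain R] [CharZero R] (m : Mat2 R) (hm : m.det = 1) (f : BQ R) :
    (f.subst m).disc = f.disc := by
  have h1 := disc_IJ (f.subst m)
  rw [invI_subst, invJ_subst, hm, one_pow, one_pow, one_mul, one_mul, ← disc_IJ] at h1
  exact mul_left_cancel₀ (by norm_num) h1

lemma map_subst {R S : Type*} [CommRing R] [CommRing S] (φ : R →+* S) (f : BQ R) (m : Mat2 R) :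
    (f.subst m).map φ = (f.map φ).subst (m.map φ) := by
  simp only [BQ.map, BQ.subst, Mat2.map, map_add, map_sub, map_mul, map_pow, map_ofNat φ]

lemma bq_ext {R : Type*} {f g : BQ R} (ha : f.a = g.a) (hb : f.b = g.b) (hc : f.c = g.c) (hd : f.d = g.d)
    (he : f.e = g.e) : f = g := by
  cases f; cases g; simp_all

section D1
variable {p : ℕ} [hp : Fact p.Prime]

lemma congMod_iff (K : ℕ) (f g : BQ ℤ_[p]) :
    CongMod p K f g ↔ f.map (Ideal.Quotient.mk (Ideal.span {(p : ℤ_[p]) ^ K})) = g.map (Ideal.Quotient.mk (Ideal.span {(p : ℤ_[p]) ^ K})) := by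
  have key : ∀ x y : ℤ_[p], (p : ℤ_[p]) ^ K ∣ x - y ↔ Ideal.Quotient.mk (Ideal.span {(p : ℤ_[p]) ^ K}) x = Ideal.Quotient.mk (Ideal.span {(p : ℤ_[p]) ^ K}) y := by
    intro x y
    rw [Ideal.Quotient.eq, Ideal.mem_span_singleton]
  unfold CongMod
  simp only [key]
  constructor
  · rintro ⟨ha, hb, hc, hd, he⟩
    exact bq_ext ha hb hc hd he
  · intro h
    exact ⟨congrArg BQ.a h, congrArg BQ.b h, congrArg BQ.c h, congrArg BQ.d h, congrArg BQ.e h⟩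

lemma congMod_subst (K : ℕ) (f g : BQ ℤ_[p]) (h : CongMod p K f g) (m n : Mat2 ℤ_[p])
    (h1 : (p : ℤ_[p]) ^ K ∣ m.p - n.p) (h2 : (p : ℤ_[p]) ^ K ∣ m.q - n.q)
    (h3 : (p : ℤ_[p]) ^ K ∣ m.r - n.r) (h4 : (p : ℤ_[p]) ^ K ∣ m.s - n.s) :
    CongMod p K (f.subst m) (g.subst n) := by
  rw [congMod_iff] at *
  have key : ∀ x y : ℤ_[p], (p : ℤ_[p]) ^ K ∣ x - y ↔ Ideal.Quotient.mk (Ideal.span {(p : ℤ_[p]) ^ K}) x = Ideal.Quotient.mk (Ideal.span {(p : ℤ_[p]) ^ K}) y := by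
    intro x y
    rw [Ideal.Quotient.eq, Ideal.mem_span_singleton]
  rw [key] at h1 h2 h3 h4
  rw [map_subst, map_subst, h]
  congr 1
  simp only [Mat2.map, h1, h2, h3, h4]

lemma congMod_mono {j k : ℕ} (hjk : j ≤ k) {f g : BQ ℤ_[p]} (h : CongMod p k f g) : CongMod p j f g := by
  obtain ⟨a, b, c, d, e⟩ := h
  have := pow_dvd_pow (p : ℤ_[p]) hjk
  exact ⟨this.trans a, this.trans b, this.trans c, this.trans d, this.trans e⟩

lemma loc_const (φp : BQ ℤ_[p] → ℝ) (ψ : ℕ → BQ ℤ_[p] → ℝ) (hψ : ApproxSeries p φp ψ) (c : ℕ)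
    (hs : SupportBound p ψ c) (f0 : BQ ℤ_[p]) (h0 : f0.disc ≠ 0) :
    ∃ K : ℕ, ∀ g, CongMod p K g f0 → φp g = φp f0 := by
  obtain ⟨-, -, h2, h3⟩ := hψ
  obtain ⟨n, hn⟩ := exists_not_dvd _ h0
  refine ⟨2 * (n + c), fun g hg => ?_⟩
  have hd : (p : ℤ_[p]) ^ (2 * (n + c)) ∣ g.disc - f0.disc :=
    disc_congr _ _ _ hg.1 hg.2.1 hg.2.2.1 hg.2.2.2.1 hg.2.2.2.2
  have hgn : ¬ (p : ℤ_[p]) ^ n ∣ g.disc := by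
    intro h
    have h' : (p : ℤ_[p]) ^ n ∣ g.disc - f0.disc := (pow_dvd_pow _ (by omega)).trans hd
    exact hn ((dvd_sub_right h).1 h')
  have hg0 : g.disc ≠ 0 := fun h => hgn (h ▸ dvd_zero _)
  have hz : ∀ f : BQ ℤ_[p], ¬ (p : ℤ_[p]) ^ n ∣ f.disc → ∀ k, n + c < k → ψ k f = 0 := by
    intro f hf k hk
    by_contra hne
    have h := hs k f hne
    rw [show 2 * k = c + (2 * k - c) by omega, pow_add] at h
    rw [mul_dvd_mul_iff_left (pow_ne_zero _ p_ne_zero')] at h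
    exact hf ((pow_dvd_pow _ (by omega)).trans h)
  have heq : (fun k => ψ k g) = fun k => ψ k f0 := by
    funext k
    rcases le_or_gt k (n + c) with hk | hk
    · exact h3 k _ _ (congMod_mono (by omega) hg)
    · rw [hz _ hgn k hk, hz _ hn k hk]
  have e1 := (h2 g hg0).2
  rw [heq] at e1
  exact e1.unique (h2 f0 h0).2

lemma phi_eq_one (φp : BQ ℤ_[p] → ℝ) (ψ : ℕ → BQ ℤ_[p] → ℝ) (hψ : ApproxSeries p φp ψ)
    (hs : SupportBound p ψ 0) (f : BQ ℤ_[p]) (hf : ¬ (p : ℤ_[p]) ^ 2 ∣ f.disc) : φp f = 1 := by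
  obtain ⟨h0, -, h2, h3⟩ := hψ
  have hd : f.disc ≠ 0 := fun h => hf (h ▸ dvd_zero _)
  have e1 := (h2 f hd).2
  have e2 : HasSum (fun k => ψ k f) (ψ 0 f) := by
    apply hasSum_single
    intro k hk
    by_contra hne
    have h := hs k f hne
    rw [pow_zero, one_mul] at h
    exact hf ((pow_dvd_pow _ (by omega)).trans h)
  rw [h0] at e2
  exact e1.unique e2

end D1

lemma crt_padic (S : Finset Nat.Primes) (K : ℕ) (x : ∀ q : Nat.Primes, ℤ_[(q : ℕ)]) :
    ∃ n : ℕ, ∀ q ∈ S, ((q : ℕ) : ℤ_[(q : ℕ)]) ^ K ∣ (n : ℤ_[(q : ℕ)]) - x q := by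
  have := Nat.chineseRemainderOfFinset (fun q : Nat.Primes => (x q).appr K) (fun q : Nat.Primes => (q : ℕ) ^ K) S
    (fun q _ => pow_ne_zero _ q.2.ne_zero) ?_
  · obtain ⟨n, hn⟩ := this
    refine ⟨n, fun q hq => ?_⟩
    have h1 := PadicInt.appr_spec K (x q)
    rw [Ideal.mem_span_singleton] at h1
    have h2 : (((q : ℕ) ^ K : ℕ) : ℤ) ∣ (n : ℤ) - ((x q).appr K : ℤ) := (Nat.modEq_iff_dvd.1 (hn q hq).symm)
    have h3 : ((q : ℕ) : ℤ_[(q : ℕ)]) ^ K ∣ (n : ℤ_[(q : ℕ)]) - ((x q).appr K : ℤ_[(q : ℕ)]) := by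
      have := map_dvd (Int.castRingHom ℤ_[(q : ℕ)]) h2
      simpa using this
    exact dvdE (h3.sub h1) (by ring)
  · intro q _ q' _ hne
    exact Nat.Coprime.pow _ _ ((Nat.coprime_primes q.2 q'.2).2 (fun h => hne (Subtype.ext h)))

lemma padic_dvd_int (q : Nat.Primes) (n : ℕ) (x : ℤ) (h : ((q : ℕ) : ℤ_[(q : ℕ)]) ^ n ∣ (x : ℤ_[(q : ℕ)])) : ((q : ℕ) : ℤ) ^ n ∣ x := by
  rw [← Ideal.mem_span_singleton, ← PadicInt.norm_le_pow_iff_mem_span_pow,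
    PadicInt.norm_int_le_pow_iff_dvd] at h
  exact_mod_cast h

lemma int_dvd_padic (q : Nat.Primes) (n : ℕ) (x : ℤ) (h : ((q : ℕ) : ℤ) ^ n ∣ x) : ((q : ℕ) : ℤ_[(q : ℕ)]) ^ n ∣ (x : ℤ_[(q : ℕ)]) := by
  have := map_dvd (Int.castRingHom ℤ_[(q : ℕ)]) h
  simpa using this



theorem prod_inv
    (φ : BQ ℤ → ℝ)
    (hφinv : ∀ m : Mat2 ℤ, IsUnit m.det → ∀ f, φ (f.subst m) = φ f)
    (φp : (p : Nat.Primes) → BQ ℤ_[(p : ℕ)] → ℝ)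
    (ψ : (p : Nat.Primes) → ℕ → BQ ℤ_[(p : ℕ)] → ℝ)
    (hψ : ∀ p : Nat.Primes, ApproxSeries (p : ℕ) (φp p) (ψ p))
    (hψsupp : ∀ p : Nat.Primes, ∃ c : ℕ, SupportBound (p : ℕ) (ψ p) c)
    (P : ℕ) (hP : ∀ p : Nat.Primes, P < (p : ℕ) → SupportBound (p : ℕ) (ψ p) 0)
    (hprod : ∀ f : BQ ℤ, f.disc ≠ 0 →
      HasProd (fun p : Nat.Primes => φp p (f.map (Int.castRingHom ℤ_[(p : ℕ)]))) (φ f))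
    (S : Finset Nat.Primes) (hS : ∀ q : Nat.Primes, (q : ℕ) ≤ P ∨ (q : ℕ) ≤ 7 → q ∈ S)
    (g : ∀ q : Nat.Primes, BQ ℤ_[(q : ℕ)]) (hg : ∀ q, (g q).disc ≠ 0)
    (t s : ∀ q : Nat.Primes, ℤ_[(q : ℕ)]) (hts : ∀ q, t q * s q = 1) :
    ∏ q ∈ S, φp q ((g q).subst ⟨t q, 0, 0, s q⟩) = ∏ q ∈ S, φp q (g q) := by
  classical
  have hdet : ∀ q : Nat.Primes, (⟨t q, 0, 0, s q⟩ : Mat2 ℤ_[(q : ℕ)]).det = 1 := fun q => by simp [Mat2.det, hts]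
  have hg' : ∀ q : Nat.Primes, ((g q).subst ⟨t q, 0, 0, s q⟩).disc ≠ 0 := fun q => by
    rw [disc_subst_one _ (hdet q)]; exact hg q
  have hK1 : ∀ q : Nat.Primes, ∃ K : ℕ, ∀ f, CongMod q K f (g q) → φp q f = φp q (g q) := by
    intro q
    obtain ⟨c, hc⟩ := hψsupp q
    exact loc_const _ _ (hψ q) c hc _ (hg q)
  have hK2 : ∀ q : Nat.Primes, ∃ K : ℕ, ∀ f, CongMod q K f ((g q).subst ⟨t q, 0, 0, s q⟩) →
      φp q f = φp q ((g q).subst ⟨t q, 0, 0, s q⟩) := by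
    intro q
    obtain ⟨c, hc⟩ := hψsupp q
    exact loc_const _ _ (hψ q) c hc _ (hg' q)
  choose K1 hK1 using hK1
  choose K2 hK2 using hK2
  set K : ℕ := S.sup K1 + S.sup K2 + 1 with hKdef
  have hKK1 : ∀ q ∈ S, K1 q ≤ K := fun q hq => by
    have := Finset.le_sup (f := K1) hq; omega
  have hKK2 : ∀ q ∈ S, K2 q ≤ K := fun q hq => by
    have := Finset.le_sup (f := K2) hq; omega
  have hK0 : K ≠ 0 := by omega
  set N : ℕ := ∏ q ∈ S, (q : ℕ) ^ K with hN
  have hN0 : N ≠ 0 := Finset.prod_ne_zero_iff.2 fun q _ => pow_ne_zero _ q.2.ne_zero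
  have hdN : ∀ q ∈ S, (q : ℕ) ^ K ∣ N := fun q hq => Finset.dvd_prod_of_mem _ hq
  have hqN : ∀ q ∈ S, (q : ℕ) ∣ N := fun q hq => (dvd_pow_self _ hK0).trans (hdN q hq)
  have hSN : ∀ q : Nat.Primes, (q : ℕ) ∣ N → q ∈ S := by
    intro q hq
    obtain ⟨q', hq', hd⟩ := (Prime.dvd_finsetProd_iff q.2.prime _).1 hq
    have := (Nat.prime_dvd_prime_iff_eq q.2 q'.2).1 (q.2.dvd_of_dvd_pow hd)
    rwa [show q = q' from Subtype.ext this]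
  have h210 : 210 ∣ N := by
    have h2 := hqN ⟨2, by norm_num⟩ (hS _ (Or.inr (by norm_num)))
    have h3 := hqN ⟨3, by norm_num⟩ (hS _ (Or.inr (by norm_num)))
    have h5 := hqN ⟨5, by norm_num⟩ (hS _ (Or.inr (by norm_num)))
    have h7 := hqN ⟨7, by norm_num⟩ (hS _ (Or.inr (by norm_num)))
    simp only at h2 h3 h5 h7
    omega
  obtain ⟨na, hna⟩ := crt_padic S K (fun q => (g q).a)
  obtain ⟨nb, hnb⟩ := crt_padic S K (fun q => (g q).b)
  obtain ⟨nc, hnc⟩ := crt_padic S K (fun q => (g q).c)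
  obtain ⟨nd, hnd⟩ := crt_padic S K (fun q => (g q).d)
  obtain ⟨ne, hne⟩ := crt_padic S K (fun q => (g q).e)
  obtain ⟨u, hu⟩ := crt_padic S K t
  obtain ⟨f, ⟨fa, fb, fc, fd, fe⟩, hf⟩ := sieve_exists N hN0 h210 ⟨na, nb, nc, nd, ne⟩
  have hNq : ∀ q ∈ S, ∀ x : ℤ, (N : ℤ) ∣ x → ((q : ℕ) : ℤ_[(q : ℕ)]) ^ K ∣ (x : ℤ_[(q : ℕ)]) := by
    intro q hq x hx
    apply int_dvd_padic
    refine dvd_trans ?_ hx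
    exact_mod_cast hdN q hq
  have hcong : ∀ q ∈ S, CongMod q K (f.map (Int.castRingHom ℤ_[(q : ℕ)])) (g q) := by
    intro q hq
    have key : ∀ (x : ℤ) (n : ℕ) (y : ℤ_[(q : ℕ)]), (N : ℤ) ∣ x - n → ((q : ℕ) : ℤ_[(q : ℕ)]) ^ K ∣ (n : ℤ_[(q : ℕ)]) - y →
        ((q : ℕ) : ℤ_[(q : ℕ)]) ^ K ∣ (x : ℤ_[(q : ℕ)]) - y := by
      intro x n y h1 h2
      have := hNq q hq _ h1
      push_cast at this
      exact dvdE (this.add h2) (by ring)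
    exact ⟨key _ _ _ fa (hna q hq), key _ _ _ fb (hnb q hq), key _ _ _ fc (hnc q hq), key _ _ _ fd (hnd q hq),
      key _ _ _ fe (hne q hq)⟩
  -- the matrix
  have hcop : IsCoprime (u : ℤ) ((N : ℤ) ^ 2) := by
    apply IsCoprime.pow_right
    rw [Nat.isCoprime_iff_coprime]
    rw [hN]
    apply Nat.Coprime.prod_right
    intro q hq
    apply Nat.Coprime.pow_right
    rw [Nat.coprime_comm, Nat.Prime.coprime_iff_not_dvd q.2]
    intro hd
    have h1 : ((q : ℕ) : ℤ_[(q : ℕ)]) ∣ (u : ℤ_[(q : ℕ)]) := by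
      obtain ⟨k, rfl⟩ := hd
      exact ⟨k, by push_cast; ring⟩
    have h2 : ((q : ℕ) : ℤ_[(q : ℕ)]) ∣ (u : ℤ_[(q : ℕ)]) - t q := (dvd_pow_self _ hK0).trans (hu q hq)
    have h3 := (dvd_sub_right h1).1 h2
    exact not_dvd_of_unit _ (IsUnit.of_mul_eq_one _ (hts q)) h3
  obtain ⟨w, h, hwh⟩ := hcop
  set γ : Mat2 ℤ := ⟨u, N, -(N * h), w⟩ with hγ
  have hγd : γ.det = 1 := by
    simp only [hγ, Mat2.det]
    linear_combination hwh
  have hcong2 : ∀ q ∈ S, CongMod q K ((f.subst γ).map (Int.castRingHom ℤ_[(q : ℕ)])) ((g q).subst ⟨t q, 0, 0, s q⟩) := by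
    intro q hq
    rw [map_subst]
    have hNN := hNq q hq N dvd_rfl
    refine congMod_subst K _ _ (hcong q hq) _ _ ?_ ?_ ?_ ?_
    · simpa [hγ, Mat2.map] using hu q hq
    · simpa [hγ, Mat2.map] using hNN
    · have := hNq q hq (-(N * h)) ((dvd_mul_right _ _).neg_right)
      simpa [hγ, Mat2.map] using this
    · have h1 : ((q : ℕ) : ℤ_[(q : ℕ)]) ^ K ∣ (w : ℤ_[(q : ℕ)]) * u - 1 := by
        have := hNq q hq (-(N * (N * h))) ((dvd_mul_right _ _).neg_right)
        refine dvdE this ?_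
        have e : ((w * u + h * N ^ 2 : ℤ) : ℤ_[(q : ℕ)]) = 1 := by rw [hwh]; simp
        push_cast at e ⊢
        linear_combination e
      have h2 := hu q hq
      have : ((q : ℕ) : ℤ_[(q : ℕ)]) ^ K ∣ (w : ℤ_[(q : ℕ)]) - s q := by
        refine dvdE ((h1.mul_right (s q)).sub (h2.mul_right (s q * w))) ?_
        linear_combination (-(w : ℤ_[(q : ℕ)])) * hts q
      simpa [hγ, Mat2.map] using this
  have hfd : f.disc ≠ 0 := by
    intro h0
    obtain ⟨q, hqn, hq⟩ := Nat.exists_infinite_primes (N + 1)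
    refine hf q hq (fun hd => ?_) (h0 ▸ dvd_zero _)
    have := Nat.le_of_dvd (Nat.pos_of_ne_zero hN0) hd
    omega
  have hfγ : (f.subst γ).disc = f.disc := disc_subst_one _ hγd f
  have hone : ∀ f' : BQ ℤ, f'.disc = f.disc → ∀ q ∉ S, φp q (f'.map (Int.castRingHom ℤ_[(q : ℕ)])) = 1 := by
    intro f' hf' q hq
    have hqP : P < (q : ℕ) := by
      by_contra hc
      exact hq (hS q (Or.inl (by omega)))
    refine phi_eq_one _ _ (hψ q) (hP q hqP) _ ?_
    rw [disc_map]
    intro hd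
    refine hf q q.2 (fun hd' => hq (hSN q hd')) ?_
    rw [← hf']
    exact padic_dvd_int q 2 _ hd
  have e1 := (hprod f hfd).unique (hasProd_prod_of_ne_finset_one (s := S) (hone f rfl))
  have e2 := (hprod (f.subst γ) (hfγ ▸ hfd)).unique (hasProd_prod_of_ne_finset_one (s := S) (hone _ hfγ))
  have e3 := hφinv γ (by rw [hγd]; exact isUnit_one) f
  rw [e1, e2] at e3
  calc ∏ q ∈ S, φp q ((g q).subst ⟨t q, 0, 0, s q⟩)
      = ∏ q ∈ S, φp q ((f.subst γ).map (Int.castRingHom ℤ_[(q : ℕ)])) :=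
        Finset.prod_congr rfl fun q hq => (hK2 q _ (congMod_mono (hKK2 q hq) (hcong2 q hq))).symm
    _ = ∏ q ∈ S, φp q (f.map (Int.castRingHom ℤ_[(q : ℕ)])) := e3
    _ = _ := Finset.prod_congr rfl fun q hq => (hK1 q _ (congMod_mono (hKK1 q hq) (hcong q hq)))

lemma subst_one {R : Type*} [CommRing R] (f : BQ R) : f.subst ⟨1, 0, 0, 1⟩ = f := by
  cases f
  simp [BQ.subst]

theorem INV
    (φ : BQ ℤ → ℝ)
    (hφinv : ∀ m : Mat2 ℤ, IsUnit m.det → ∀ f, φ (f.subst m) = φ f)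
    (φp : (p : Nat.Primes) → BQ ℤ_[(p : ℕ)] → ℝ)
    (ψ : (p : Nat.Primes) → ℕ → BQ ℤ_[(p : ℕ)] → ℝ)
    (hψ : ∀ p : Nat.Primes, ApproxSeries (p : ℕ) (φp p) (ψ p))
    (hψsupp : ∀ p : Nat.Primes, ∃ c : ℕ, SupportBound (p : ℕ) (ψ p) c)
    (P : ℕ) (hP : ∀ p : Nat.Primes, P < (p : ℕ) → SupportBound (p : ℕ) (ψ p) 0)
    (hprod : ∀ f : BQ ℤ, f.disc ≠ 0 →
      HasProd (fun p : Nat.Primes => φp p (f.map (Int.castRingHom ℤ_[(p : ℕ)]))) (φ f))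
    (hnz : ∀ q : Nat.Primes, ∃ f, BQ.disc f ≠ 0 ∧ φp q f ≠ 0)
    (p : Nat.Primes) (t s : ℤ_[(p : ℕ)]) (hts : t * s = 1) (f0 : BQ ℤ_[(p : ℕ)]) (hf0 : f0.disc ≠ 0) :
    φp p (f0.subst ⟨t, 0, 0, s⟩) = φp p f0 := by
  classical
  choose g0 hg0 hg1 using hnz
  set S : Finset Nat.Primes := (finite_primes_le (P + p + 7)).toFinset with hSdef
  have hpS : p ∈ S := by
    rw [hSdef, Set.Finite.mem_toFinset]
    change (p : ℕ) ≤ _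
    omega
  have hS : ∀ q : Nat.Primes, (q : ℕ) ≤ P ∨ (q : ℕ) ≤ 7 → q ∈ S := by
    intro q hq
    rw [hSdef, Set.Finite.mem_toFinset]
    change (q : ℕ) ≤ _
    omega
  have key := prod_inv φ hφinv φp ψ hψ hψsupp P hP hprod S hS (Function.update g0 p f0) ?_
    (Function.update (β := fun q : Nat.Primes => ℤ_[(q : ℕ)]) (fun _ => 1) p t) (Function.update (β := fun q : Nat.Primes => ℤ_[(q : ℕ)]) (fun _ => 1) p s) ?_
  · rw [← Finset.mul_prod_erase _ _ hpS, ← Finset.mul_prod_erase _ _ hpS] at key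
    simp only [Function.update_self] at key
    have e1 : ∏ q ∈ S.erase p, φp q ((Function.update g0 p f0 q).subst
        ⟨Function.update (β := fun q : Nat.Primes => ℤ_[(q : ℕ)]) (fun _ => 1) p t q, 0, 0, Function.update (β := fun q : Nat.Primes => ℤ_[(q : ℕ)]) (fun _ => 1) p s q⟩) = ∏ q ∈ S.erase p, φp q (g0 q) := by
      refine Finset.prod_congr rfl fun q hq => ?_
      have hne := Finset.ne_of_mem_erase hq
      rw [Function.update_of_ne hne, Function.update_of_ne hne, Function.update_of_ne hne, subst_one]
    have e2 : ∏ q ∈ S.erase p, φp q (Function.update g0 p f0 q) = ∏ q ∈ S.erase p, φp q (g0 q) := by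
      refine Finset.prod_congr rfl fun q hq => ?_
      rw [Function.update_of_ne (Finset.ne_of_mem_erase hq)]
    rw [e1, e2] at key
    exact mul_right_cancel₀ (Finset.prod_ne_zero_iff.2 fun q _ => hg1 q) key
  · intro q
    rcases eq_or_ne q p with rfl | hne
    · rw [Function.update_self]; exact hf0
    · rw [Function.update_of_ne hne]; exact hg0 q
  · intro q
    rcases eq_or_ne q p with rfl | hne
    · rw [Function.update_self, Function.update_self]; exact hts
    · rw [Function.update_of_ne hne, Function.update_of_ne hne, one_mul]



section D3
variable {p : ℕ} [hp : Fact p.Prime]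

def TH (t s : ℤ_[p]) (hts : t * s = 1) : (Fin 4 → ℤ_[p]) ≃ₜ (Fin 4 → ℤ_[p]) where
  toFun v := ![t ^ 2 * v 0, v 1, s ^ 2 * v 2, s ^ 4 * v 3]
  invFun v := ![s ^ 2 * v 0, v 1, t ^ 2 * v 2, t ^ 4 * v 3]
  left_inv v := by
    have h2 : t ^ 2 * s ^ 2 = 1 := by rw [← mul_pow, hts, one_pow]
    have h4 : t ^ 4 * s ^ 4 = 1 := by rw [← mul_pow, hts, one_pow]
    funext i
    fin_cases i
    · simp; linear_combination v 0 * h2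
    · simp
    · simp; linear_combination v 2 * h2
    · simp; linear_combination v 3 * h4
  right_inv v := by
    have h2 : t ^ 2 * s ^ 2 = 1 := by rw [← mul_pow, hts, one_pow]
    have h4 : t ^ 4 * s ^ 4 = 1 := by rw [← mul_pow, hts, one_pow]
    funext i
    fin_cases i
    · simp; linear_combination v 0 * h2
    · simp
    · simp; linear_combination v 2 * h2
    · simp; linear_combination v 3 * h4
  continuous_toFun := by
    apply continuous_pi
    intro i
    fin_cases i <;> simp <;> fun_prop
  continuous_invFun := by
    apply continuous_pi
    intro i
    fin_cases i <;> simp <;> fun_prop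

lemma TH_add (t s : ℤ_[p]) (hts : t * s = 1) (v w : Fin 4 → ℤ_[p]) : TH t s hts (v + w) = TH t s hts v + TH t s hts w := by
  funext i
  fin_cases i <;> simp [TH, mul_add]

lemma TH_map (μ : Measure (Fin 4 → ℤ_[p])) [IsProbabilityMeasure μ] (hinv : ∀ t, μ.map (fun x => t + x) = μ)
    (t s : ℤ_[p]) (hts : t * s = 1) : μ.map (TH t s hts) = μ := by
  have hm : Measurable (TH t s hts) := (TH t s hts).continuous.measurable
  have : μ.IsAddLeftInvariant := ⟨hinv⟩
  have : IsProbabilityMeasure (μ.map (TH t s hts)) := Measure.isProbabilityMeasure_map hm.aemeasurable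
  have : (μ.map (TH t s hts)).IsAddLeftInvariant := by
    constructor
    intro w
    have hw : Measurable (fun x : Fin 4 → ℤ_[p] => w + x) := (continuous_const.add continuous_id).measurable
    rw [Measure.map_map hw hm]
    set w' := (TH t s hts).symm w with hw'
    have hw2 : Measurable (fun x : Fin 4 → ℤ_[p] => w' + x) := (continuous_const.add continuous_id).measurable
    have : (fun x => w + x) ∘ (TH t s hts) = (TH t s hts) ∘ (fun x => w' + x) := by
      funext x
      simp only [Function.comp, TH_add, hw', Homeomorph.apply_symm_apply]
    rw [this, ← Measure.map_map hm hw2, hinv]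
  have : μ.IsAddHaarMeasure := Measure.isAddHaarMeasure_of_isCompact_nonempty_interior μ Set.univ isCompact_univ (by simp) (by simp) (by simp)
  have : (μ.map (TH t s hts)).IsAddHaarMeasure := Measure.isAddHaarMeasure_of_isCompact_nonempty_interior _ Set.univ isCompact_univ (by simp) (by simp) (by simp)
  exact Measure.isAddHaarMeasure_eq_of_isProbabilityMeasure _ _

lemma L3 (μ : Measure (Fin 4 → ℤ_[p])) [IsProbabilityMeasure μ] (hinv : ∀ t, μ.map (fun x => t + x) = μ)
    (φp : BQ ℤ_[p] → ℝ)
    (hI : ∀ t s : ℤ_[p], t * s = 1 → ∀ f : BQ ℤ_[p], f.disc ≠ 0 → φp (f.subst ⟨t, 0, 0, s⟩) = φp f)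
    (a : ℤ_[p]) (ha : a ≠ 0) (t s : ℤ_[p]) (hts : t * s = 1) :
    ∫ v, φp (mkf (a * t ^ 4) v) ∂μ = ∫ v, φp (mkf a v) ∂μ := by
  conv_lhs => rw [← TH_map μ hinv t s hts]
  have := integral_map_equiv (μ := μ) (TH t s hts).toMeasurableEquiv (fun v => φp (mkf (a * t ^ 4) v))
  rw [Homeomorph.toMeasurableEquiv_coe] at this
  rw [this]
  apply integral_congr_ae
  filter_upwards [disc_ne_zero_ae μ hinv a ha] with v hv
  rw [← hI t s hts _ hv]
  congr 1
  apply bq_ext <;> simp [mkf, TH, BQ.subst]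
  · linear_combination (-(t ^ 2 * v 0)) * hts
  · linear_combination (-(v 1 * (t * s + 1))) * hts
  · linear_combination (-(v 2 * s ^ 2)) * hts
  · ring

lemma fourth_root (c : ℤ_[p]) (hc : if p = 2 then (32 : ℤ_[p]) ∣ c - 1 else (p : ℤ_[p]) ∣ c - 1) : ∃ t : ℤ_[p], t ^ 4 = c := by
  have := hensels_lemma (p := p) (F := (Polynomial.X ^ 4 - Polynomial.C c : Polynomial ℤ_[p])) (a := 1) ?_
  · obtain ⟨z, hz, -⟩ := this
    refine ⟨z, ?_⟩
    simp at hz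
    linear_combination hz
  · simp
    rw [show (3 + 1 : ℤ_[p]) = 4 by norm_num]
    have hpp : (1 : ℝ) < p := by exact_mod_cast hp.out.one_lt
    split_ifs at hc with h2
    · subst h2
      obtain ⟨k, hk⟩ := hc
      have e : (1 : ℤ_[2]) - c = (2 : ℤ_[2]) ^ 5 * (-k) := by linear_combination -hk
      have n2 : ‖(2 : ℤ_[2])‖ = (2 : ℝ)⁻¹ := by
        have := PadicInt.norm_p (p := 2); simpa using this
      have e4 : (4 : ℤ_[2]) = 2 ^ 2 := by norm_num
      rw [e, e4, norm_mul, norm_pow, norm_pow, n2]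
      have := PadicInt.norm_le_one (-k)
      nlinarith [norm_nonneg (-k)]
    · have h4 : IsUnit (4 : ℤ_[p]) := by
        apply unit_of_not_dvd
        intro hd
        have : ((p : ℕ) : ℤ_[p]) ∣ (2 : ℤ_[p]) := by
          apply (p_prime' (p := p)).dvd_of_dvd_pow (n := 2)
          exact dvdE hd (by norm_num)
        rw [← PadicInt.norm_lt_one_iff_dvd] at this
        have h := (PadicInt.norm_int_lt_one_iff_dvd (p := p) 2).1 (by simpa using this)
        have h' : p ∣ 2 := by exact_mod_cast h
        exact h2 ((Nat.prime_dvd_prime_iff_eq hp.out Nat.prime_two).1 h')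
      rw [PadicInt.isUnit_iff.1 h4, one_pow, PadicInt.norm_lt_one_iff_dvd]
      exact dvdE hc.neg_right (by ring)

end D3

lemma hper_lemma (p : Nat.Primes) (F : ℤ_[(p : ℕ)] → ℝ)
    (hF : ∀ a t s : ℤ_[(p : ℕ)], a ≠ 0 → t * s = 1 → F (a * t ^ 4) = F a) (ε : ℤ_[(p : ℕ)]) (hε : ε ≠ 0)
    (j u u' : ℕ) (hu : ¬ (p : ℕ) ∣ u) (h : u ≡ u' [MOD QQ p]) :
    F (ε * ((p : ℕ) ^ j * u : ℕ)) = F (ε * ((p : ℕ) ^ j * u' : ℕ)) := by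
  have hQ : (p : ℕ) ∣ QQ p := by
    unfold QQ; split_ifs with h2
    · rw [h2]; norm_num
    · exact dvd_rfl
  have hunit : ∀ u : ℕ, ¬ (p : ℕ) ∣ u → IsUnit (u : ℤ_[(p : ℕ)]) := by
    intro u hu
    apply unit_of_not_dvd
    intro hd
    have := padic_dvd_int p 1 (u : ℤ) (by simpa using hd)
    rw [pow_one] at this
    exact hu (by exact_mod_cast this)
  have hu1 := hunit u hu
  obtain ⟨w, hw⟩ := hu1.exists_right_inv
  have hd : ((QQ p : ℕ) : ℤ_[(p : ℕ)]) ∣ (u' : ℤ_[(p : ℕ)]) - u := by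
    obtain ⟨k, hk⟩ := (Nat.modEq_iff_dvd.1 h)
    refine ⟨(k : ℤ), ?_⟩
    exact_mod_cast congrArg (Int.cast : ℤ → ℤ_[(p : ℕ)]) hk
  have hd2 : ((QQ p : ℕ) : ℤ_[(p : ℕ)]) ∣ (u' : ℤ_[(p : ℕ)]) * w - 1 :=
    dvdE (hd.mul_right w) (by linear_combination hw)
  have hc : if (p : ℕ) = 2 then (32 : ℤ_[(p : ℕ)]) ∣ (u' : ℤ_[(p : ℕ)]) * w - 1 else ((p : ℕ) : ℤ_[(p : ℕ)]) ∣ (u' : ℤ_[(p : ℕ)]) * w - 1 := by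
    unfold QQ at hd2
    split_ifs at hd2 ⊢
    · exact_mod_cast hd2
    · exact hd2
  obtain ⟨t, ht⟩ := fourth_root _ hc
  have htu : IsUnit t := by
    apply unit_of_not_dvd
    intro hdt
    have h1 : ((p : ℕ) : ℤ_[(p : ℕ)]) ∣ t ^ 4 := hdt.trans (dvd_pow_self _ (by norm_num))
    have h2 : ((p : ℕ) : ℤ_[(p : ℕ)]) ∣ t ^ 4 - 1 := by
      rw [ht]
      exact (Nat.cast_dvd_cast hQ).trans hd2
    exact p_prime'.not_isUnit (isUnit_of_dvd_one (dvdE (h1.sub h2) (by ring)))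
  obtain ⟨s, hs⟩ := htu.exists_right_inv
  have hu0 : (u : ℤ_[(p : ℕ)]) ≠ 0 := hu1.ne_zero
  have := hF (ε * ((p : ℕ) ^ j * u : ℕ)) t s (mul_ne_zero hε (by
    push_cast; exact mul_ne_zero (pow_ne_zero _ p_ne_zero') hu0)) hs
  rw [← this, ht]
  congr 1
  push_cast
  linear_combination (ε * ((p : ℕ) : ℤ_[(p : ℕ)]) ^ j * u') * hw



theorem sign_case
    (φ : BQ ℤ → ℝ)
    (hφinv : ∀ m : Mat2 ℤ, IsUnit m.det → ∀ f, φ (f.subst m) = φ f)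
    (φp : (p : Nat.Primes) → BQ ℤ_[(p : ℕ)] → ℝ)
    (hφpb : ∀ p : Nat.Primes, ∃ Bp : ℝ, ∀ f, |φp p f| ≤ Bp)
    (ψ : (p : Nat.Primes) → ℕ → BQ ℤ_[(p : ℕ)] → ℝ)
    (hψ : ∀ p : Nat.Primes, ApproxSeries (p : ℕ) (φp p) (ψ p))
    (hψsupp : ∀ p : Nat.Primes, ∃ c : ℕ, SupportBound (p : ℕ) (ψ p) c)
    (P : ℕ) (hP : ∀ p : Nat.Primes, P < (p : ℕ) → SupportBound (p : ℕ) (ψ p) 0)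
    (hprod : ∀ f : BQ ℤ, f.disc ≠ 0 →
      HasProd (fun p : Nat.Primes => φp p (f.map (Int.castRingHom ℤ_[(p : ℕ)]))) (φ f))
    (μ : (p : Nat.Primes) → Measure (Fin 4 → ℤ_[(p : ℕ)]))
    (hμprob : ∀ p : Nat.Primes, IsProbabilityMeasure (μ p))
    (hμinv : ∀ (p : Nat.Primes) (t : Fin 4 → ℤ_[(p : ℕ)]),
      (μ p).map (fun x => t + x) = μ p) (ε : ℤ) (hε : ε = 1 ∨ ε = -1) :
    (∀ s : ℂ, 1 < s.re → Summable (fun n : ℕ => ‖(nuA φp μ (ε * ((n + 1 : ℕ) : ℤ)) : ℂ) / ((n : ℂ) + 1) ^ s‖)) ∧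
    ∃ (G : ℂ → ℂ) (r : ℂ), DifferentiableOn ℂ G {s : ℂ | 1 / 3 < s.re} ∧
      ∀ s : ℂ, 1 < s.re → ∑' n : ℕ, (nuA φp μ (ε * ((n + 1 : ℕ) : ℤ)) : ℂ) / ((n : ℂ) + 1) ^ s = G s + r / (s - 1) := by
  have hε0 : ε ≠ 0 := by rcases hε with rfl | rfl <;> norm_num
  have hcast : ∀ (p : Nat.Primes) (n : ℕ), n ≠ 0 → ((ε * (n : ℤ) : ℤ) : ℤ_[(p : ℕ)]) ≠ 0 := fun p n hn => by
    rw [Ne, Int.cast_eq_zero]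
    exact mul_ne_zero hε0 (by exact_mod_cast hn)
  by_cases hnz : ∀ q : Nat.Primes, ∃ f, BQ.disc f ≠ 0 ∧ φp q f ≠ 0
  · choose Bp hBp using hφpb
    set W : ℝ := ∑' k, wk k with hW
    have hW0 : 0 ≤ W := tsum_nonneg wk_nonneg
    have hI := INV φ hφinv φp ψ hψ hψsupp P hP hprod hnz
    refine partA' (fun p n => ∫ v, φp p (mkf ((ε * (n : ℤ) : ℤ) : ℤ_[(p : ℕ)]) v) ∂(μ p)) (P + 5) (by omega) Bp (12 * W)
      (by positivity) ?_ ?_ ?_ ?_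
    · intro p n
      exact local_L2 (μ p) (φp p) (Bp p) (hBp p) _
    · intro p n hn hp
      have hp5 : 5 ≤ (p : ℕ) := by omega
      have hp0 : (0 : ℝ) < (p : ℕ) := by exact_mod_cast p.2.pos
      have := local_L1 (μ p) (hμinv p) hp5 (φp p) (ψ p) (hψ p) (hP p (by omega)) _ (hcast p n hn) _
        (pr_bound1 (μ p) (hμinv p) hp5 _)
      refine this.trans ?_
      rw [div_mul_eq_mul_div]
      gcongr
      norm_num
    · intro p n hn hp hd
      have hp5 : 5 ≤ (p : ℕ) := by omega
      have hp0 : (0 : ℝ) < (p : ℕ) := by exact_mod_cast p.2.pos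
      have := local_L1 (μ p) (hμinv p) hp5 (φp p) (ψ p) (hψ p) (hP p (by omega)) _ (hcast p n hn) _
        (pr_bound2 (μ p) (hμinv p) hp5 _ (by
          intro h
          have h1 := padic_dvd_int p 2 _ h
          have h2 : ((p : ℕ) : ℤ) ^ 2 ∣ (n : ℤ) := by
            rcases hε with rfl | rfl
            · simpa using h1
            · simpa using h1
          exact hd (by exact_mod_cast h2)))
      refine this.trans ?_
      rw [div_mul_eq_mul_div]
    · intro p j u u' hu h
      have := hper_lemma p (fun a => ∫ v, φp p (mkf a v) ∂(μ p))
        (fun a t s ha hts => L3 (μ p) (hμinv p) (φp p) (fun t s hts f hf => hI p t s hts f hf) a ha t s hts)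
        (ε : ℤ_[(p : ℕ)]) (by exact_mod_cast hε0) j u u' hu h
      have e : ∀ n : ℕ, ((ε * (n : ℤ) : ℤ) : ℤ_[(p : ℕ)]) = (ε : ℤ_[(p : ℕ)]) * (n : ℤ_[(p : ℕ)]) := by intro n; push_cast; ring
      have e2 : ∀ n : ℕ, (∫ v, φp p (mkf ((ε * (n : ℤ) : ℤ) : ℤ_[(p : ℕ)]) v) ∂(μ p)) =
          ∫ v, φp p (mkf ((ε : ℤ_[(p : ℕ)]) * (n : ℤ_[(p : ℕ)])) v) ∂(μ p) := fun n => by rw [e n]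
      exact (e2 _).trans (this.trans (e2 _).symm)
  · push Not at hnz
    obtain ⟨q, hq⟩ := hnz
    have h0 : ∀ n : ℕ, nuA φp μ (ε * ((n + 1 : ℕ) : ℤ)) = 0 := by
      intro n
      apply tprod_of_exists_eq_zero
      refine ⟨q, ?_⟩
      apply integral_eq_zero_of_ae
      filter_upwards [disc_ne_zero_ae (μ q) (hμinv q) _ (hcast q (n + 1) (by omega))] with v hv
      exact hq _ hv
    refine ⟨fun s hs => ?_, 0, 0, differentiableOn_const _, fun s hs => ?_⟩
    · simp only [h0]; simp
    · simp only [h0]; simp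


/-- Let `φ : V(ℤ) → ℝ` be large and locally well approximated (the
hypotheses below unpack this definition: `φ` is a bounded `PGL₂(ℤ)`-invariant product
of local factors `φ_p`, each almost well approximated by periodic functions, and well
approximated via strongly invariant functions for all large `p`).  Then each Dirichlet
series `D^{±}(φ,s)` converges absolutely for `Re(s) > 1` and extends meromorphically to
`Re(s) > 1/3`, holomorphically except for at most a simple pole at `s = 1`; in
particular `D^{±}(φ,1/2)` is well defined. -/
theorem dirichlet_series_continuation
    (φ : BQ ℤ → ℝ) (B : ℝ) (hφb : ∀ f, |φ f| ≤ B)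
    (hφinv : ∀ m : Mat2 ℤ, IsUnit m.det → ∀ f, φ (f.subst m) = φ f)
    (φp : (p : Nat.Primes) → BQ ℤ_[(p : ℕ)] → ℝ)
    (hφpb : ∀ p : Nat.Primes, ∃ Bp : ℝ, ∀ f, |φp p f| ≤ Bp)
    (ψ : (p : Nat.Primes) → ℕ → BQ ℤ_[(p : ℕ)] → ℝ)
    (hψ : ∀ p : Nat.Primes, ApproxSeries (p : ℕ) (φp p) (ψ p))
    (hψsupp : ∀ p : Nat.Primes, ∃ c : ℕ, SupportBound (p : ℕ) (ψ p) c)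
    (hlarge : ∃ P : ℕ, ∀ p : Nat.Primes, P < (p : ℕ) →
      SupportBound (p : ℕ) (ψ p) 0 ∧ StronglyInvariantFamily (p : ℕ) (ψ p))
    (hprod : ∀ f : BQ ℤ, f.disc ≠ 0 →
      HasProd (fun p : Nat.Primes => φp p (f.map (Int.castRingHom ℤ_[(p : ℕ)]))) (φ f))
    (μ : (p : Nat.Primes) → Measure (Fin 4 → ℤ_[(p : ℕ)]))
    (hμprob : ∀ p : Nat.Primes, IsProbabilityMeasure (μ p))
    (hμinv : ∀ (p : Nat.Primes) (t : Fin 4 → ℤ_[(p : ℕ)]),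
      (μ p).map (fun x => t + x) = μ p) :
    ∀ sgn : Bool,
      (∀ s : ℂ, 1 < s.re →
        Summable (fun n : ℕ =>
          ‖(nuA φp μ (if sgn then ((n : ℤ) + 1) else -((n : ℤ) + 1)) : ℂ)
            / ((n : ℂ) + 1) ^ s‖)) ∧
      ∃ (G : ℂ → ℂ) (r : ℂ),
        DifferentiableOn ℂ G {s : ℂ | 1 / 3 < s.re} ∧
        ∀ s : ℂ, 1 < s.re → Dseries φp μ sgn s = G s + r / (s - 1) := by
  obtain ⟨P, hP⟩ := hlarge
  have key := sign_case φ hφinv φp hφpb ψ hψ hψsupp P (fun p hp => (hP p hp).1) hprod μ hμprob hμinv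
  intro sgn
  cases sgn
  · have h := key (-1) (Or.inr rfl)
    have e : ∀ n : ℕ, (-1 : ℤ) * ((n + 1 : ℕ) : ℤ) = (if false = true then ((n : ℤ) + 1) else -((n : ℤ) + 1)) := by
      intro n; simp
    simp only [e] at h
    exact h
  · have h := key 1 (Or.inl rfl)
    have e : ∀ n : ℕ, (1 : ℤ) * ((n + 1 : ℕ) : ℤ) = (if true = true then ((n : ℤ) + 1) else -((n : ℤ) + 1)) := by
      intro n; simp
    simp only [e] at h
    exact h

end BQPaper
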